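/- arXiv:2503.11506 — 2 statements merged into one kernel-verified Lean document; each statement's English description precedes it below -/
import Mathlib

section
/- Let n ≥ 1 and m ≥ n+1 be integers and γ ∈ (0,1]. If f : ℝ^m → ℝ^{2n+1} is a topological embedding which is locally γ-Hölder continuous as a map into the Heisenberg group ℍ^n — that is, for every compact set K ⊆ ℝ^m there is a constant C_K with d_K(f(x), f(y)) ≤ C_K·|x−y|^γ for all x, y ∈ K — then γ ≤ (n+1)/(n+2). -/
open Metric Set MeasureTheory Topology

/-- The index of the coordinate `x_j` in `ℝ^{2n+1}`. -/
def xI (n : ℕ) (j : Fin n) : Fin (2*n+1) := ⟨2*j.1, by have := j.2; omega⟩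

/-- The index of the coordinate `y_j` in `ℝ^{2n+1}`. -/
def yI (n : ℕ) (j : Fin n) : Fin (2*n+1) := ⟨2*j.1+1, by have := j.2; omega⟩

/-- The index of the coordinate `t` in `ℝ^{2n+1}`. -/
def tI (n : ℕ) : Fin (2*n+1) := Fin.last (2*n)

/-- The Korányi metric on the Heisenberg group `ℍ^n = ℝ^{2n+1}`:
`d_K(p,q) = (|z-z'|^4 + |t - t' + 2 ∑_j (x_j' y_j - x_j y_j')|^2)^{1/4}`. -/
noncomputable def dK (n : ℕ) (p q : EuclideanSpace ℝ (Fin (2*n+1))) : ℝ :=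
  ((∑ i : Fin (2*n), (p (Fin.castSucc i) - q (Fin.castSucc i)) ^ 2) ^ 2 +
    (p (tI n) - q (tI n) +
      2 * ∑ j : Fin n, (q (xI n j) * p (yI n j) - p (xI n j) * q (yI n j))) ^ 2) ^ ((1:ℝ)/4)

/-!
Suppose that `(n + 1) / (n + 2) < γ`. Mollifying `f` at scale `ε` on an `(n + 1)`-dimensional chart
gives smooth maps `F_ε → f` with `DF_ε = O(ε^(γ-1))`. The Hölder condition for the Korányi metric
bounds the contact form `θ = dt + 2 ∑ (x_j dy_j - y_j dx_j)` on the image by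
`F_ε^* θ = O(ε^(2γ-1))`.

By a Lefschetz-type lemma every `(n + 1)`-covector in the `2n` covectors `dx_j`, `dy_j` is a
multiple of `∑ dx_j ∧ dy_j = dθ / 4`. Hence every `(n + 1)`-form on the Heisenberg group lies in the
ideal generated by `θ` and `dθ`, and after an integration by parts the integral of its pullback by
`F_ε` against a cutoff function is `O(ε^(n(γ-1) + 2γ-1))`, which tends to `0`.

If `f` were injective, the Stone–Weierstrass theorem would give a smooth map `G` with `G ∘ f` close
to the identity of a ball. The degree integral of `G ∘ F_ε` is then `1` for all small `ε`, although
it is the integral of the pullback of an `(n + 1)`-form by `F_ε`.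
-/

section Lefschetz

open Finset in
lemma pow_card_sum_eq_zero {ι A : Type*} [CommRing A] {x : ι → A} (hx : ∀ i, x i ^ 2 = 0)
    (s : Finset ι) : (∑ i ∈ s, x i) ^ (#s + 1) = 0 := by
  classical
  induction s using Finset.induction_on with
  | empty => simp
  | insert a s ha ih =>
    rw [sum_insert ha, card_insert_of_notMem ha]
    exact (Commute.all _ _).add_pow_eq_zero_of_add_le_succ_of_pow_eq_zero (hx a) ih (by omega)

open Finset Nat in
lemma sum_pow_card_eq_factorial_mul_prod {ι A : Type*} [CommRing A] {x : ι → A}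
    (hx : ∀ i, x i ^ 2 = 0) (s : Finset ι) :
    (∑ i ∈ s, x i) ^ #s = (#s)! * ∏ i ∈ s, x i := by
  classical
  induction s using Finset.induction_on with
  | empty => simp
  | insert a s ha ih =>
    have add_pow (y : A) (k : ℕ) : (x a + y) ^ (k + 1) = y ^ (k + 1) + (k + 1) * x a * y ^ k := by
      induction k with
      | zero => simp; ring
      | succ k ih => rw [pow_succ, ih]; push_cast; linear_combination (k + 1) * y ^ k * hx a
    rw [sum_insert ha, card_insert_of_notMem ha, prod_insert ha, add_pow,
      pow_card_sum_eq_zero hx, ih, factorial_succ]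
    push_cast
    ring

open Finset Nat in
lemma exists_factorial_smul_prod_smul_eq {ι A M : Type*} [Fintype ι] [CommRing A]
    [AddCommGroup M] [Module A M] {x : ι → A} (hx : ∀ i, x i ^ 2 = 0) {s t : Finset ι}
    (hst : Disjoint s t) (hcard : Fintype.card ι < 2 * #s + #t) {y : M}
    (hy : ∀ i ∈ t, x i • y = 0) :
    ∃ z : M, (#s)! • (∏ i ∈ s, x i) • y = (∑ i, x i) • z := by
  classical
  set u := (s ∪ t)ᶜ
  set σ := ∑ i ∈ s, x i
  set τ := ∑ i ∈ u, x i
  set ω := ∑ i, x i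
  have hω : ω = σ + ∑ i ∈ t, x i + τ := by
    rw [← sum_union hst, sum_add_sum_compl]
  have hu : #u + 1 ≤ #s := by
    have : #(s ∪ t) + #u = Fintype.card ι := card_add_card_compl _
    rw [card_union_of_disjoint hst] at this
    omega
  have hτ : (-τ) ^ #s = 0 := by
    rw [neg_pow, pow_eq_zero_of_le hu (pow_card_sum_eq_zero hx u), mul_zero]
  have smul_y : (ω - τ) • y = σ • y := by
    rw [hω, add_sub_cancel_right, add_smul, sum_smul (s := t), sum_eq_zero hy, add_zero]
  have pow_smul_y (k : ℕ) : (ω - τ) ^ k • y = σ ^ k • y := by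
    induction k with
    | zero => simp
    | succ k ih =>
      rw [_root_.pow_succ, _root_.pow_succ, mul_smul, smul_y, smul_comm, ih, smul_smul, mul_comm]
  obtain ⟨q, hq⟩ := sub_dvd_pow_sub_pow (ω - τ) (-τ) #s
  rw [hτ, sub_zero, sub_neg_eq_add, sub_add_cancel] at hq
  refine ⟨q • y, ?_⟩
  rw [smul_smul ω, ← hq, pow_smul_y, sum_pow_card_eq_factorial_mul_prod hx, mul_smul,
    Nat.cast_smul_eq_nsmul]

variable {R V κ : Type*} [CommRing R] [AddCommGroup V] [Module R V]

open ExteriorAlgebra in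
lemma ι_mul_ι_mem_center (u v : V) :
    ι R u * ι R v ∈ Subalgebra.center R (ExteriorAlgebra R V) := by
  have anticomm (a b : V) : ι R a * ι R b = -(ι R b * ι R a) :=
    eq_neg_of_add_eq_zero_left (ι_add_mul_swap a b)
  rw [Subalgebra.mem_center_iff]
  intro a
  induction a using ExteriorAlgebra.induction with
  | algebraMap r => exact Algebra.commutes r _
  | ι w =>
    rw [← mul_assoc, anticomm w u, neg_mul, mul_assoc, anticomm w v, mul_neg, neg_neg, mul_assoc]
  | mul a b ha hb => rw [mul_assoc, hb, ← mul_assoc, ha, mul_assoc]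
  | add a b ha hb => rw [add_mul, mul_add, ha, hb]

/-- The 2-vector `e_j ∧ f_j` of the `j`-th pair `e_j = b (j, false)`, `f_j = b (j, true)` of a
family of vectors, as an element of the center of the exterior algebra, which is commutative. -/
noncomputable def pairVector (R : Type*) [CommRing R] [Module R V] (b : κ × Bool → V) (j : κ) :
    Subalgebra.center R (ExteriorAlgebra R V) :=
  ⟨ExteriorAlgebra.ι R (b (j, false)) * ExteriorAlgebra.ι R (b (j, true)), ι_mul_ι_mem_center _ _⟩

/-- The symplectic bivector `∑ j, e_j ∧ f_j` of a family of pairs of vectors. -/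
noncomputable def symplecticVector (R : Type*) [CommRing R] [Module R V] [Fintype κ]
    (b : κ × Bool → V) : Subalgebra.center R (ExteriorAlgebra R V) :=
  ∑ j, pairVector R b j

/-- The exterior product `b l₁ ∧ b l₂ ∧ ⋯` of the vectors spelled by a word `l`. -/
noncomputable def wordVector (R : Type*) [CommRing R] [Module R V] {α : Type*} (b : α → V)
    (l : List α) : ExteriorAlgebra R V :=
  (l.map fun c ↦ ExteriorAlgebra.ι R (b c)).prod

@[simp]
lemma wordVector_cons {α : Type*} (b : α → V) (c : α) (l : List α) :
    wordVector R b (c :: l) = ExteriorAlgebra.ι R (b c) * wordVector R b l := by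
  simp [wordVector]

lemma wordVector_append {α : Type*} (b : α → V) (l l' : List α) :
    wordVector R b (l ++ l') = wordVector R b l * wordVector R b l' := by
  simp [wordVector]

lemma wordVector_eq_or_eq_neg_of_perm {α : Type*} (b : α → V) {l l' : List α} (h : l.Perm l') :
    wordVector R b l = wordVector R b l' ∨ wordVector R b l = -wordVector R b l' := by
  induction h with
  | nil => exact .inl rfl
  | cons a _ ih => rcases ih with ih | ih <;> simp [ih]
  | swap a c l =>
    right
    simp only [wordVector_cons, ← mul_assoc]
    rw [eq_neg_of_add_eq_zero_left (ExteriorAlgebra.ι_add_mul_swap (b c) (b a)), neg_mul]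
  | trans _ _ ih₁ ih₂ => rcases ih₁ with ih₁ | ih₁ <;> rcases ih₂ with ih₂ | ih₂ <;> simp [ih₁, ih₂]

open ExteriorAlgebra in
lemma pairVector_mul_ι (b : κ × Bool → V) (c : κ × Bool) :
    (pairVector R b c.1 : ExteriorAlgebra R V) * ι R (b c) = 0 := by
  obtain ⟨j, _ | _⟩ := c
  · rw [← Subalgebra.mem_center_iff.mp (pairVector R b j).2]
    simp only [pairVector, ← mul_assoc, ι_sq_zero, zero_mul]
  · simp only [pairVector, mul_assoc, ι_sq_zero, mul_zero]

lemma pairVector_sq (b : κ × Bool → V) (j : κ) : pairVector R b j ^ 2 = 0 := by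
  have h := pairVector_mul_ι (R := R) b (j, false)
  rw [sq]
  refine Subtype.ext (Eq.trans ?_ (mul_eq_zero_of_left h (ExteriorAlgebra.ι R (b (j, true)))))
  exact (mul_assoc _ _ _).symm

lemma pairVector_smul_wordVector_eq_zero {b : κ × Bool → V} {l : List (κ × Bool)} {c : κ × Bool}
    (hc : c ∈ l) : pairVector R b c.1 • wordVector R b l = 0 := by
  obtain ⟨l₁, l₂, rfl⟩ := List.append_of_mem hc
  have hcomm := Subalgebra.mem_center_iff.mp (pairVector R b c.1).2 (wordVector R b l₁)
  rw [Subalgebra.smul_def, smul_eq_mul, wordVector_append, ← mul_assoc, ← hcomm, mul_assoc,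
    wordVector_cons, ← mul_assoc (pairVector R b c.1 : ExteriorAlgebra R V), pairVector_mul_ι,
    zero_mul, mul_zero]

lemma wordVector_pair_eq (b : κ × Bool → V) (j : κ) (p q : Bool) (l : List (κ × Bool)) :
    wordVector R b ((j, p) :: (j, q) :: l) = 0 ∨
      wordVector R b ((j, p) :: (j, q) :: l) = pairVector R b j • wordVector R b l ∨
      wordVector R b ((j, p) :: (j, q) :: l) = -(pairVector R b j • wordVector R b l) := by
  have hswap := eq_neg_of_add_eq_zero_left
    (ExteriorAlgebra.ι_add_mul_swap (R := R) (b (j, true)) (b (j, false)))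
  cases p <;> cases q <;>
    simp [← mul_assoc, hswap, pairVector, Subalgebra.smul_def]

lemma exists_perm_of_not_nodup_map_fst {α β : Type*} {l : List (α × β)}
    (h : ¬ (l.map Prod.fst).Nodup) : ∃ a p q l', l.Perm ((a, p) :: (a, q) :: l') := by
  simp only [List.nodup_iff_sublist, not_forall, not_not] at h
  obtain ⟨a, ha⟩ := h
  obtain ⟨l₁, hl₁, hmap⟩ := List.sublist_map_iff.mp ha
  obtain ⟨l', hl'⟩ := hl₁.exists_perm_append
  obtain ⟨⟨c, p⟩, ⟨d, q⟩, rfl⟩ :=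
    List.length_eq_two.mp (by simpa using congrArg List.length hmap.symm)
  simp only [List.map_cons, List.map_nil, List.cons.injEq] at hmap
  obtain ⟨rfl, rfl, -⟩ := hmap
  exact ⟨a, p, q, l', hl'⟩

lemma coe_symplecticVector_mul_ιMulti [Fintype κ] (b : κ × Bool → V) {k : ℕ} (v : Fin k → V) :
    (symplecticVector R b : ExteriorAlgebra R V) * ExteriorAlgebra.ιMulti R k v =
      ∑ j, ExteriorAlgebra.ιMulti R (k + 2)
        (Matrix.vecCons (b (j, false)) (Matrix.vecCons (b (j, true)) v)) := by
  simp only [symplecticVector, AddSubmonoidClass.coe_finsetSum, Finset.sum_mul,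
    ExteriorAlgebra.ιMulti_succ_apply, Matrix.cons_val_zero, Matrix.tail_cons, ← mul_assoc]
  rfl

lemma wordVector_ofFn {α : Type*} (b : α → V) {k : ℕ} (w : Fin k → α) :
    wordVector R b (List.ofFn w) = ExteriorAlgebra.ιMulti R k fun i ↦ b (w i) := by
  rw [wordVector, List.map_ofFn, ExteriorAlgebra.ιMulti_apply, Function.comp_def]

variable {K : Type*} [Field K] [CharZero K] [Module K V] [Fintype κ]

open Finset in
/- Both letters of a pair can be moved to the front of the word and absorbed into `s`; once no pair
is left, `exists_factorial_smul_prod_smul_eq` applies. -/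
lemma symplecticVector_dvd_prod_smul_wordVector (b : κ × Bool → V)
    (s : Finset κ) (l : List (κ × Bool)) (hcard : Fintype.card κ < 2 * #s + l.length) :
    (symplecticVector K b : ExteriorAlgebra K V) ∣
      (∏ j ∈ s, pairVector K b j) • wordVector K b l := by
  classical
  by_cases hs : ∃ c ∈ l, c.1 ∈ s
  · obtain ⟨c, hcl, hcs⟩ := hs
    rw [← prod_erase_mul _ _ hcs, mul_smul, pairVector_smul_wordVector_eq_zero hcl, smul_zero]
    exact dvd_zero _
  by_cases hl : (l.map Prod.fst).Nodup
  · have hdisj : Disjoint s (l.map Prod.fst).toFinset := by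
      rw [Finset.disjoint_right]
      simpa using hs
    obtain ⟨z, hz⟩ := exists_factorial_smul_prod_smul_eq (pairVector_sq (R := K) b) hdisj
      (by rwa [List.toFinset_card_of_nodup hl, List.length_map]) (y := wordVector K b l) (by
        intro i hi
        obtain ⟨c, hc, rfl⟩ := List.mem_map.mp (List.mem_toFinset.mp hi)
        exact pairVector_smul_wordVector_eq_zero hc)
    have hfact : ((#s).factorial : K) ≠ 0 := mod_cast (#s).factorial_ne_zero
    rw [← Nat.cast_smul_eq_nsmul K] at hz
    rw [← inv_smul_smul₀ hfact (_ • wordVector K b l), hz]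
    exact ⟨_, (mul_smul_comm _ _ _).symm⟩
  · obtain ⟨j, p, q, l', hperm⟩ := exists_perm_of_not_nodup_map_fst hl
    have hj : j ∉ s := fun h ↦ hs ⟨(j, p), hperm.mem_iff.mpr List.mem_cons_self, h⟩
    have hlen : l.length = l'.length + 2 := hperm.length_eq
    have ih := symplecticVector_dvd_prod_smul_wordVector b (insert j s) l'
      (by rw [card_insert_of_notMem hj]; omega)
    rw [prod_insert hj, mul_comm, mul_smul] at ih
    rcases wordVector_eq_or_eq_neg_of_perm (R := K) b hperm with h | h <;>
      rcases wordVector_pair_eq (R := K) b j p q l' with h' | h' | h' <;>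
      simp only [h, h', smul_neg, neg_neg, dvd_neg, smul_zero, dvd_zero, ih]
termination_by l.length

lemma symplecticVector_dvd_wordVector (b : κ × Bool → V)
    {l : List (κ × Bool)} (hcard : Fintype.card κ < l.length) :
    (symplecticVector K b : ExteriorAlgebra K V) ∣ wordVector K b l := by
  simpa using symplecticVector_dvd_prod_smul_wordVector (K := K) b ∅ l (by simpa using hcard)

open ExteriorAlgebra in
theorem alternating_mem_of_trace_mem {M : Type*} [AddCommGroup M]
    [Module K M] (b : κ × Bool → V) {k : ℕ} (hk : Fintype.card κ < k + 2)
    (A : V [⋀^Fin (k + 2)]→ₗ[K] M) (p : Submodule K M)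
    (htrace : ∀ v : Fin k → V,
      ∑ j, A (Matrix.vecCons (b (j, false)) (Matrix.vecCons (b (j, true)) v)) ∈ p)
    (w : Fin (k + 2) → κ × Bool) : A (fun i ↦ b (w i)) ∈ p := by
  set Φ : ExteriorAlgebra K V →ₗ[K] M := liftAlternating (Pi.single (k + 2) A)
  have mem_of_dvd (c : ExteriorAlgebra K V) : Φ (symplecticVector K b * c) ∈ p := by
    have hc : c ∈ Submodule.span K (Set.range fun x : Σ n, (Fin n → V) ↦ ιMulti K x.1 x.2) :=
      ιMulti_span K V ▸ Submodule.mem_top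
    induction hc using Submodule.span_induction with
    | mem c hc =>
      obtain ⟨⟨m, v⟩, rfl⟩ := hc
      rw [coe_symplecticVector_mul_ιMulti, map_sum]
      simp only [Φ, liftAlternating_apply_ιMulti]
      obtain rfl | hm := eq_or_ne m k
      · simpa using htrace v
      · simp [Pi.single_eq_of_ne (show m + 2 ≠ k + 2 by omega)]
    | zero => simp
    | add c d _ _ hc hd => rw [mul_add, map_add]; exact p.add_mem hc hd
    | smul r c _ hc => rw [mul_smul_comm, map_smul]; exact p.smul_mem r hc
  obtain ⟨c, hc⟩ := symplecticVector_dvd_wordVector (K := K) b (l := List.ofFn w)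
    (by rwa [List.length_ofFn])
  rw [wordVector_ofFn] at hc
  have h := mem_of_dvd c
  rwa [← hc, liftAlternating_apply_ιMulti, Pi.single_eq_same] at h

end Lefschetz

section Jacobian

variable {E κ : Type*} [NormedAddCommGroup E] [NormedSpace ℝ E] {f : κ → E → ℝ}

lemma contDiff_prod_fderiv_apply (hf : ∀ i, ContDiff ℝ 2 (f i)) (s : Finset κ) (e : κ → E) :
    ContDiff ℝ 1 fun y ↦ ∏ i ∈ s, fderiv ℝ (f i) y (e i) :=
  contDiff_prod fun i _ ↦ ((hf i).fderiv_right le_rfl).clm_apply contDiff_const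

open Finset in
lemma fderiv_prod_fderiv_apply [DecidableEq κ] (hf : ∀ i, ContDiff ℝ 2 (f i))
    (s : Finset κ) (e : κ → E) (x w : E) :
    fderiv ℝ (fun y ↦ ∏ i ∈ s, fderiv ℝ (f i) y (e i)) x w =
      ∑ k ∈ s, (∏ i ∈ s.erase k, fderiv ℝ (f i) x (e i)) *
        fderiv ℝ (fderiv ℝ (f k)) x w (e k) := by
  have hasFDerivAt (i : κ) : HasFDerivAt (fun y ↦ fderiv ℝ (f i) y (e i))
      ((fderiv ℝ (fderiv ℝ (f i)) x).flip (e i)) x :=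
    have hd := (((hf i).fderiv_right (m := 1) le_rfl).differentiable one_ne_zero x).hasFDerivAt
    (hd.clm_apply (hasFDerivAt_const (e i) x)).congr_fderiv (by ext; simp)
  rw [(HasFDerivAt.finsetProd fun i _ ↦ hasFDerivAt i).fderiv]
  simp

variable {ι : Type*} [Fintype ι] [DecidableEq ι]

/-- The determinant of a family of covectors on `ℝ^ι`, as an alternating form of the family. -/
noncomputable def covDet (ι : Type*) [Fintype ι] [DecidableEq ι] :
    ((ι → ℝ) →L[ℝ] ℝ) [⋀^ι]→ₗ[ℝ] ℝ :=
  Matrix.detRowAlternating.compLinearMap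
    { toFun := fun ℓ j ↦ ℓ (Pi.single j 1)
      map_add' := fun _ _ ↦ rfl
      map_smul' := fun _ _ ↦ rfl }

lemma covDet_apply (ℓ : ι → (ι → ℝ) →L[ℝ] ℝ) :
    covDet ι ℓ = ∑ σ : Equiv.Perm ι, (σ.sign : ℝ) * ∏ i, ℓ i (Pi.single (σ i) 1) := by
  change Matrix.det (Matrix.of fun i j ↦ ℓ i (Pi.single j 1)) = _
  rw [← Matrix.det_transpose, Matrix.det_apply']
  rfl

lemma continuous_covDet : Continuous (covDet ι) := by
  rw [funext covDet_apply]
  fun_prop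

lemma exists_abs_covDet_le (ι : Type*) [Fintype ι] [DecidableEq ι] :
    ∃ C : ℝ, 0 < C ∧ ∀ ℓ : ι → (ι → ℝ) →L[ℝ] ℝ, |covDet ι ℓ| ≤ C * ∏ i, ‖ℓ i‖ :=
  (covDet ι).toMultilinearMap.exists_bound_of_continuous continuous_covDet

/-- The Jacobian determinant of the map with components `u i`. -/
noncomputable def jacobianDet (u : ι → (ι → ℝ) → ℝ) (x : ι → ℝ) : ℝ :=
  covDet ι fun i ↦ fderiv ℝ (u i) x

variable {u v : ι → (ι → ℝ) → ℝ}

lemma continuous_jacobianDet (hu : ∀ i, ContDiff ℝ 1 (u i)) : Continuous (jacobianDet u) :=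
  continuous_covDet.comp (continuous_pi fun i ↦ (hu i).continuous_fderiv one_ne_zero)

lemma jacobianDet_eq_zero {i : ι} {x : ι → ℝ} (h : fderiv ℝ (u i) x = 0) :
    jacobianDet u x = 0 :=
  (covDet ι).map_coord_zero i h

lemma hasCompactSupport_jacobianDet {i : ι} (h : HasCompactSupport (u i)) :
    HasCompactSupport (jacobianDet u) :=
  (h.fderiv ℝ).mono fun _ hx ↦ mt jacobianDet_eq_zero hx

open Finset in
/- The terms `∂_{σ i₀} ∂_{σ k} u_k` cancel in pairs under `σ ↦ σ ∘ (i₀ k)`. -/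
lemma sum_sign_mul_fderiv_cofactor_eq_zero (hu : ∀ i, ContDiff ℝ 2 (u i)) (i₀ : ι) (x : ι → ℝ) :
    ∑ σ : Equiv.Perm ι, (σ.sign : ℝ) *
      fderiv ℝ (fun y ↦ ∏ i ∈ univ.erase i₀, fderiv ℝ (u i) y (Pi.single (σ i) 1)) x
        (Pi.single (σ i₀) 1) = 0 := by
  simp_rw [fderiv_prod_fderiv_apply hu _ _ x, mul_sum]
  rw [sum_comm]
  refine sum_eq_zero fun k hk ↦ ?_
  have hk : i₀ ≠ k := (ne_of_mem_erase hk).symm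
  have hsymm : IsSymmSndFDerivAt ℝ (u k) x := (hu k).contDiffAt.isSymmSndFDerivAt (by simp)
  rw [← self_eq_neg, ← sum_neg_distrib]
  refine Fintype.sum_equiv (Equiv.mulRight (Equiv.swap i₀ k)) _ _ fun σ ↦ ?_
  have hprod : ∀ i ∈ (univ.erase i₀).erase k,
      fderiv ℝ (u i) x (Pi.single ((σ * Equiv.swap i₀ k) i) 1) =
        fderiv ℝ (u i) x (Pi.single (σ i) 1) := fun i hi ↦ by
    simp only [mem_erase] at hi
    rw [Equiv.Perm.mul_apply, Equiv.swap_apply_of_ne_of_ne hi.2.1 hi.1]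
  rw [Equiv.coe_mulRight, prod_congr rfl hprod]
  simp [Equiv.Perm.sign_swap hk, hsymm.eq (Pi.single (σ i₀) 1)]

open Finset in
/- The Jacobian determinant is the divergence of `u i₀` times the `i₀`-th row of cofactors. -/
lemma jacobianDet_eq_sum_fderiv (hu : ∀ i, ContDiff ℝ 2 (u i)) (i₀ : ι) (x : ι → ℝ) :
    jacobianDet u x = ∑ σ : Equiv.Perm ι, (σ.sign : ℝ) *
      fderiv ℝ (fun y ↦ u i₀ y * ∏ i ∈ univ.erase i₀, fderiv ℝ (u i) y (Pi.single (σ i) 1)) x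
        (Pi.single (σ i₀) 1) := by
  simp_rw [fderiv_fun_mul ((hu i₀).differentiable two_ne_zero x)
    ((contDiff_prod_fderiv_apply hu _ _).differentiable one_ne_zero x)]
  simp only [_root_.add_apply, _root_.smul_apply, smul_eq_mul,
    mul_add, sum_add_distrib, mul_left_comm _ (u i₀ x), ← mul_sum]
  rw [sum_sign_mul_fderiv_cofactor_eq_zero hu, mul_zero, zero_add, jacobianDet, covDet_apply]
  simp_rw [prod_erase_mul _ _ (mem_univ i₀)]

lemma integral_fderiv_apply_eq_zero {E : Type*} [NormedAddCommGroup E] [NormedSpace ℝ E]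
    [MeasurableSpace E] [BorelSpace E] [FiniteDimensional ℝ E] {μ : Measure E}
    [μ.IsAddHaarMeasure] {g : E → ℝ} (hg : ContDiff ℝ 1 g) (hc : HasCompactSupport g) (w : E) :
    ∫ x, fderiv ℝ g x w ∂μ = 0 := by
  have hint : Integrable (fun x ↦ fderiv ℝ g x w) μ :=
    ((hg.continuous_fderiv one_ne_zero).clm_apply continuous_const).integrable_of_hasCompactSupport
      (hc.fderiv_apply ℝ w)
  simpa using integral_mul_fderiv_eq_neg_fderiv_mul_of_integrable (f := fun _ ↦ (1 : ℝ)) (g := g)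
    (v := w) (μ := μ) (by simp) (by simpa using hint)
    (by simpa using hg.continuous.integrable_of_hasCompactSupport hc) (by simp)
    fun x _ ↦ hg.differentiable one_ne_zero x

lemma integral_jacobianDet_eq_zero (hu : ∀ i, ContDiff ℝ 2 (u i)) {i₀ : ι}
    (hc : HasCompactSupport (u i₀)) : ∫ x, jacobianDet u x = 0 := by
  have hsmooth (σ : Equiv.Perm ι) : ContDiff ℝ 1 fun y ↦
      u i₀ y * ∏ i ∈ Finset.univ.erase i₀, fderiv ℝ (u i) y (Pi.single (σ i) 1) :=
    ((hu i₀).of_le one_le_two).mul (contDiff_prod_fderiv_apply hu _ _)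
  simp_rw [jacobianDet_eq_sum_fderiv hu i₀]
  rw [integral_finsetSum]
  · simp_rw [integral_const_mul, integral_fderiv_apply_eq_zero (hsmooth _) hc.mul_right, mul_zero,
      Finset.sum_const_zero]
  · exact fun σ _ ↦ ((((hsmooth σ).continuous_fderiv one_ne_zero).clm_apply
      continuous_const).integrable_of_hasCompactSupport (hc.mul_right.fderiv_apply ℝ _)).const_mul _

lemma integral_jacobianDet_sub_eq_zero (hu : ∀ i, ContDiff ℝ 2 (u i))
    (hv : ∀ i, ContDiff ℝ 2 (v i)) (hc : ∀ i, HasCompactSupport (u i - v i)) :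
    ∫ x, (jacobianDet u x - jacobianDet v x) = 0 := by
  have expand (x : ι → ℝ) : jacobianDet u x - jacobianDet v x =
      ∑ s ∈ Finset.univ.erase (Finset.univ : Finset ι), jacobianDet (s.piecewise v (u - v)) x := by
    have hsub : (fun i ↦ fderiv ℝ (u i) x) =
        (fun i ↦ fderiv ℝ (v i) x) + fun i ↦ fderiv ℝ ((u - v) i) x := by
      ext1 i
      simp [fderiv_sub ((hu i).differentiable two_ne_zero x)
        ((hv i).differentiable two_ne_zero x)]
    have hpiece (s : Finset ι) : s.piecewise (fun i ↦ fderiv ℝ (v i) x)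
        (fun i ↦ fderiv ℝ ((u - v) i) x) = fun i ↦ fderiv ℝ (s.piecewise v (u - v) i) x := by
      ext1 i
      by_cases hi : i ∈ s <;> simp [hi]
    rw [jacobianDet, hsub, AlternatingMap.map_add_univ,
      ← Finset.sum_erase_add _ _ (Finset.mem_univ Finset.univ)]
    simp only [hpiece, jacobianDet, Finset.piecewise_univ, add_sub_cancel_right]
  have smooth (s : Finset ι) (i : ι) : ContDiff ℝ 2 (s.piecewise v (u - v) i) := by
    by_cases hi : i ∈ s
    · simpa [hi] using hv i
    · exact Finset.piecewise_eq_of_notMem s v (u - v) hi ▸ (hu i).sub (hv i)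
  have compact {s : Finset ι} (hs : s ∈ Finset.univ.erase Finset.univ) :
      ∃ i, HasCompactSupport (s.piecewise v (u - v) i) := by
    obtain ⟨i, hi⟩ : ∃ i, i ∉ s := by simpa [Finset.eq_univ_iff_forall] using hs
    exact ⟨i, by simpa [hi] using hc i⟩
  simp_rw [expand]
  rw [integral_finsetSum]
  · refine Finset.sum_eq_zero fun s hs ↦ ?_
    obtain ⟨i, hi⟩ := compact hs
    exact integral_jacobianDet_eq_zero (smooth s) hi
  · intro s hs
    obtain ⟨i, hi⟩ := compact hs
    exact (continuous_jacobianDet fun i ↦ (smooth s i).of_le one_le_two)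
      |>.integrable_of_hasCompactSupport (hasCompactSupport_jacobianDet hi)

variable {k : ℕ} {a b : (Fin (k + 1) → ℝ) → ℝ} {U : Fin k → (Fin (k + 1) → ℝ) → ℝ}

lemma jacobianDet_vecCons (x : Fin (k + 1) → ℝ) :
    jacobianDet (Matrix.vecCons a U) x =
      covDet _ (Matrix.vecCons (fderiv ℝ a x) fun i ↦ fderiv ℝ (U i) x) := by
  rw [jacobianDet]
  congr 1
  ext1 i
  cases i using Fin.cases <;> rfl

lemma contDiff_vecCons {E : Type*} [NormedAddCommGroup E] [NormedSpace ℝ E] {m : WithTop ℕ∞}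
    {b : E → ℝ} {U : Fin k → E → ℝ} (hb : ContDiff ℝ m b) (hU : ∀ i, ContDiff ℝ m (U i))
    (i : Fin (k + 1)) : ContDiff ℝ m (Matrix.vecCons b U i) := by
  cases i using Fin.cases with
  | zero => exact hb
  | succ i => exact hU i

lemma integral_mul_jacobianDet_vecCons (ha : ContDiff ℝ 2 a) (hb : ContDiff ℝ 2 b)
    (hU : ∀ i, ContDiff ℝ 2 (U i)) (hc : HasCompactSupport a) :
    ∫ x, a x * jacobianDet (Matrix.vecCons b U) x =
      -∫ x, b x * jacobianDet (Matrix.vecCons a U) x := by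
  have continuous {c : (Fin (k + 1) → ℝ) → ℝ} (hc : ContDiff ℝ 2 c) :
      Continuous (jacobianDet (Matrix.vecCons c U)) :=
    continuous_jacobianDet fun i ↦ (contDiff_vecCons hc hU i).of_le one_le_two
  have leibniz (x : Fin (k + 1) → ℝ) : jacobianDet (Matrix.vecCons (fun y ↦ a y * b y) U) x =
      a x * jacobianDet (Matrix.vecCons b U) x + b x * jacobianDet (Matrix.vecCons a U) x := by
    simp only [jacobianDet_vecCons]
    rw [fderiv_fun_mul (ha.differentiable two_ne_zero x) (hb.differentiable two_ne_zero x),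
      AlternatingMap.map_vecCons_add, AlternatingMap.map_vecCons_smul,
      AlternatingMap.map_vecCons_smul, smul_eq_mul, smul_eq_mul]
  have hca : HasCompactSupport (jacobianDet (Matrix.vecCons a U)) :=
    hasCompactSupport_jacobianDet (i := 0) hc
  have zero := integral_jacobianDet_eq_zero (contDiff_vecCons (ha.mul hb) hU) (i₀ := 0) hc.mul_right
  simp_rw [leibniz] at zero
  rw [integral_add] at zero
  · exact eq_neg_of_add_eq_zero_left zero
  · exact (ha.continuous.mul (continuous hb)).integrable_of_hasCompactSupport hc.mul_right
  · exact (hb.continuous.mul (continuous ha)).integrable_of_hasCompactSupport hca.mul_left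

end Jacobian

section Degree

open Real (smoothTransition)
open scoped ContDiff

lemma exists_smoothTransition_eventuallyEq {s : ℝ} (hs : 2 < |s|) :
    ∃ c : ℝ, ∀ s', |s' - s| < 1 → smoothTransition =ᶠ[𝓝 s'] fun _ ↦ c := by
  rcases lt_abs.mp hs with hs | hs
  · refine ⟨1, fun s' hs' ↦ ?_⟩
    filter_upwards [Ioi_mem_nhds (show 1 < s' by linarith [(abs_lt.mp hs').1])] with z hz
    exact smoothTransition.one_of_one_le (le_of_lt hz)
  · refine ⟨0, fun s' hs' ↦ ?_⟩
    filter_upwards [Iio_mem_nhds (show s' < 0 by linarith [(abs_lt.mp hs').2])] with z hz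
    exact smoothTransition.zero_of_nonpos (le_of_lt hz)

lemma deriv_smoothTransition_eq_zero {x : ℝ} (hx : x ∉ Icc (0 : ℝ) 1) :
    deriv smoothTransition x = 0 := by
  rw [mem_Icc, not_and_or, not_le, not_le] at hx
  have hconst : ∃ c : ℝ, smoothTransition =ᶠ[𝓝 x] fun _ ↦ c := by
    rcases hx with hx | hx
    · exact ⟨0, Filter.mem_of_superset (Iio_mem_nhds hx)
        fun z hz ↦ smoothTransition.zero_of_nonpos (le_of_lt hz)⟩
    · exact ⟨1, Filter.mem_of_superset (Ioi_mem_nhds hx)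
        fun z hz ↦ smoothTransition.one_of_one_le (le_of_lt hz)⟩
  obtain ⟨c, hc⟩ := hconst
  rw [hc.deriv_eq, deriv_const]

lemma continuous_deriv_smoothTransition : Continuous (deriv smoothTransition) :=
  smoothTransition.contDiff.continuous_deriv (n := 1) le_rfl

lemma integral_deriv_smoothTransition : ∫ x, deriv smoothTransition x = 1 := by
  have hint : Integrable (deriv smoothTransition) :=
    continuous_deriv_smoothTransition.integrable_of_hasCompactSupport
      (.intro isCompact_Icc fun x hx ↦ deriv_smoothTransition_eq_zero hx)
  have hderiv (x : ℝ) : HasDerivAt smoothTransition (deriv smoothTransition x) x :=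
    (smoothTransition.contDiff.differentiable one_ne_zero x).hasDerivAt
  have hbot : Filter.Tendsto smoothTransition Filter.atBot (𝓝 0) :=
    tendsto_const_nhds.congr' <| (Filter.eventually_le_atBot 0).mono
      fun x hx ↦ (smoothTransition.zero_of_nonpos hx).symm
  have htop : Filter.Tendsto smoothTransition Filter.atTop (𝓝 1) :=
    tendsto_const_nhds.congr' <| (Filter.eventually_ge_atTop 1).mono
      fun x hx ↦ (smoothTransition.one_of_one_le hx).symm
  rw [integral_of_hasDerivAt_of_tendsto hderiv hint hbot htop, sub_zero]

variable {ι : Type*} [Fintype ι]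

lemma integrable_prod_deriv_smoothTransition :
    Integrable fun x : ι → ℝ ↦ ∏ i, deriv smoothTransition (x i) := by
  refine (continuous_finsetProd _ fun i _ ↦ continuous_deriv_smoothTransition.comp
    (continuous_apply i)).integrable_of_hasCompactSupport (.intro
      (isCompact_univ_pi fun _ ↦ isCompact_Icc (a := (0 : ℝ)) (b := 1)) fun x hx ↦ ?_)
  obtain ⟨i, hi⟩ : ∃ i, x i ∉ Icc (0 : ℝ) 1 := by simpa only [mem_univ_pi, not_forall] using hx
  exact Finset.prod_eq_zero (Finset.mem_univ i) (deriv_smoothTransition_eq_zero hi)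

lemma integral_prod_deriv_smoothTransition :
    ∫ x : ι → ℝ, ∏ i, deriv smoothTransition (x i) = 1 := by
  rw [integral_fintype_prod_volume_eq_prod fun _ : ι ↦ deriv smoothTransition]
  simp [integral_deriv_smoothTransition]

variable [DecidableEq ι]

lemma covDet_proj : covDet ι (ContinuousLinearMap.proj (R := ℝ) (φ := fun _ ↦ ℝ)) = 1 := by
  change Matrix.det (Matrix.of fun i j ↦ (Pi.single j 1 : ι → ℝ) i) = 1
  rw [← Matrix.det_one (n := ι) (R := ℝ)]
  congr 1
  ext i j
  simp [Matrix.one_apply, Pi.single_apply]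

lemma jacobianDet_smoothTransition_apply (x : ι → ℝ) :
    jacobianDet (fun i y ↦ smoothTransition (y i)) x = ∏ i, deriv smoothTransition (x i) := by
  have hderiv (i : ι) : fderiv ℝ (fun y : ι → ℝ ↦ smoothTransition (y i)) x =
      deriv smoothTransition (x i) • ContinuousLinearMap.proj (R := ℝ) (φ := fun _ ↦ ℝ) i := by
    have h := (smoothTransition.contDiff.differentiable one_ne_zero (x i)).hasDerivAt
    exact (h.comp_hasFDerivAt x (ContinuousLinearMap.proj (R := ℝ) i).hasFDerivAt).fderiv
  simp_rw [jacobianDet, hderiv]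
  rw [AlternatingMap.map_smul_univ, covDet_proj, smul_eq_mul, mul_one]

lemma jacobianDet_eq_zero_of_eventuallyEq {u : ι → (ι → ℝ) → ℝ} {x : ι → ℝ} {i : ι} {c : ℝ}
    (h : ∀ᶠ y in 𝓝 x, u i y = c) : jacobianDet u x = 0 :=
  jacobianDet_eq_zero (i := i) (by
    rw [Filter.EventuallyEq.fderiv_eq (f := fun _ ↦ c) h, fderiv_const_apply])

variable {χ : (ι → ℝ) → ℝ} {h : ι → (ι → ℝ) → ℝ}

/- Outside the ball of radius `3` some coordinate of both the identity and `h` stays outside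
`[0, 1]`, so that all the Jacobians involved vanish. -/
lemma jacobianDet_interpolation (hχ : ∀ x, ‖x‖ < 3 → χ x = 1) (hh : ∀ i, Continuous (h i))
    (hclose : ∀ x ∈ tsupport χ, ∀ i, |h i x - x i| < 1) (x : ι → ℝ) :
    jacobianDet (fun i y ↦ smoothTransition (y i) +
        χ y * (smoothTransition (h i y) - smoothTransition (y i))) x =
      χ x * jacobianDet (fun i y ↦ smoothTransition (h i y)) x := by
  by_cases hx : ‖x‖ < 3
  · have hone : χ =ᶠ[𝓝 x] fun _ ↦ 1 :=
      Filter.mem_of_superset ((isOpen_lt continuous_norm continuous_const).mem_nhds hx) hχ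
    rw [hone.self_of_nhds, one_mul, jacobianDet, jacobianDet]
    congr 1
    ext1 i
    refine Filter.EventuallyEq.fderiv_eq ?_
    filter_upwards [hone] with y hy
    rw [hy, one_mul, add_sub_cancel]
  obtain ⟨i, hi⟩ : ∃ i, 2 < |x i| := by
    by_contra! hle
    exact hx (((pi_norm_le_iff_of_nonneg zero_le_two).mpr hle).trans_lt (by norm_num))
  obtain ⟨c, hc⟩ := exists_smoothTransition_eventuallyEq hi
  have hid : ∀ᶠ y in 𝓝 x, smoothTransition (y i) = c :=
    (continuous_apply i).continuousAt.eventually (hc (x i) (by simp))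
  by_cases hsupp : x ∈ tsupport χ
  · have hmap : ∀ᶠ y in 𝓝 x, smoothTransition (h i y) = c :=
      (hh i).continuousAt.eventually (hc (h i x) (hclose x hsupp i))
    rw [jacobianDet_eq_zero_of_eventuallyEq (i := i) (c := c),
      jacobianDet_eq_zero_of_eventuallyEq (i := i) (c := c) hmap, mul_zero]
    filter_upwards [hid, hmap] with y hy hy'
    rw [hy, hy', sub_self, mul_zero, add_zero]
  · have hzero : χ =ᶠ[𝓝 x] 0 := notMem_tsupport_iff_eventuallyEq.mp hsupp
    rw [jacobianDet_eq_zero_of_eventuallyEq (i := i) (c := c), hzero.self_of_nhds, Pi.zero_apply,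
      zero_mul]
    filter_upwards [hid, hzero] with y hy hy'
    rw [hy, hy', Pi.zero_apply, zero_mul, add_zero]

theorem integral_mul_jacobianDet_smoothTransition_eq_one (hχ : ContDiff ℝ 2 χ)
    (hχc : HasCompactSupport χ) (hχ₁ : ∀ x, ‖x‖ < 3 → χ x = 1) (hh : ∀ i, ContDiff ℝ 2 (h i))
    (hclose : ∀ x ∈ tsupport χ, ∀ i, |h i x - x i| < 1) :
    ∫ x, χ x * jacobianDet (fun i y ↦ smoothTransition (h i y)) x = 1 := by
  have hv (i : ι) : ContDiff ℝ 2 fun y : ι → ℝ ↦ smoothTransition (y i) :=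
    smoothTransition.contDiff.comp (contDiff_apply ℝ ℝ i)
  have hΨh (i : ι) : ContDiff ℝ 2 fun y ↦ smoothTransition (h i y) :=
    smoothTransition.contDiff.comp (hh i)
  have hint : Integrable fun x ↦ χ x * jacobianDet (fun i y ↦ smoothTransition (h i y)) x :=
    (hχ.continuous.mul (continuous_jacobianDet fun i ↦
      (hΨh i).of_le one_le_two)).integrable_of_hasCompactSupport hχc.mul_right
  have hzero := integral_jacobianDet_sub_eq_zero
    (fun i ↦ (hv i).add (hχ.mul ((hΨh i).sub (hv i)))) hv
    (fun i ↦ by simp only [Pi.sub_def, add_sub_cancel_left]; exact hχc.mul_right)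
  simp_rw [jacobianDet_interpolation hχ₁ (fun i ↦ (hh i).continuous) hclose,
    jacobianDet_smoothTransition_apply] at hzero
  rwa [integral_sub hint integrable_prod_deriv_smoothTransition, sub_eq_zero,
    integral_prod_deriv_smoothTransition] at hzero

end Degree

section Mollification

open scoped ContDiff Convolution
open ContinuousLinearMap (lsmul)

lemma smul_mem_ball {E : Type*} [NormedAddCommGroup E] [NormedSpace ℝ E] {p q : E} {ε : ℝ}
    (hε : 0 < ε) (hq : q ∈ ball (ε⁻¹ • p) 1) : ε • q ∈ ball p ε := by
  rwa [← inv_smul_smul₀ hε.ne' q, mem_ball, dist_smul₀, norm_inv, Real.norm_of_nonneg hε.le,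
    inv_mul_lt_one₀ hε] at hq

section Mollify

variable (E : Type*) [NormedAddCommGroup E] [NormedSpace ℝ E] [FiniteDimensional ℝ E]
  [MeasurableSpace E] [BorelSpace E]

/-- The mollifier, a smooth probability density supported in the unit ball. -/
noncomputable def mollifier : E → ℝ :=
  (⟨1 / 4, 1 / 2, by norm_num, by norm_num⟩ : ContDiffBump (0 : E)).normed Measure.addHaar

/-- The total variation of the mollifier, which controls the derivatives of mollified functions. -/
noncomputable def mollifierVariation : ℝ :=
  ∫ x, ‖fderiv ℝ (mollifier E) x‖ ∂Measure.addHaar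

lemma mollifierVariation_nonneg : 0 ≤ mollifierVariation E :=
  integral_nonneg fun _ ↦ norm_nonneg _

variable {E}

lemma contDiff_mollifier : ContDiff ℝ ∞ (mollifier E) := ContDiffBump.contDiff_normed _

lemma hasCompactSupport_mollifier : HasCompactSupport (mollifier E) :=
  ContDiffBump.hasCompactSupport_normed _

lemma tsupport_mollifier_subset : tsupport (mollifier E) ⊆ ball 0 1 :=
  (ContDiffBump.tsupport_normed_eq _).subset.trans (closedBall_subset_ball (by norm_num))

variable {W F : Type*} [NormedAddCommGroup W] [NormedSpace ℝ W] [NormedAddCommGroup F]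
  [NormedSpace ℝ F] {u : E → W} {p : E} {c : W} {ε B : ℝ}

/-- The mollification of `u` at scale `ε`. Rescaling `u` rather than the mollifier makes it smooth
for every `ε`, positive or not. -/
noncomputable def mollify (ε : ℝ) (u : E → W) (p : E) : W :=
  (mollifier E ⋆[lsmul ℝ ℝ, Measure.addHaar] fun q ↦ u (ε • q)) (ε⁻¹ • p)

lemma contDiff_mollify (hu : Continuous u) (ε : ℝ) : ContDiff ℝ ∞ (mollify ε u) :=
  (hasCompactSupport_mollifier.contDiff_convolution_left _ contDiff_mollifier
    (hu.comp (continuous_const_smul ε)).locallyIntegrable).comp (contDiff_const_smul _)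

variable [CompleteSpace W]

lemma norm_mollify_sub_le (hu : Continuous u) (hε : 0 < ε)
    (h : ∀ q ∈ ball p ε, ‖u q - c‖ ≤ B) : ‖mollify ε u p - c‖ ≤ B := by
  have hB : 0 ≤ B := (norm_nonneg _).trans (h p (mem_ball_self hε))
  rw [← dist_eq_norm]
  refine dist_convolution_le hB ((subset_tsupport _).trans tsupport_mollifier_subset)
    (ContDiffBump.nonneg_normed _) (ContDiffBump.integral_normed _)
    (hu.comp (continuous_const_smul ε)).aestronglyMeasurable fun q hq ↦ ?_
  rw [dist_eq_norm]
  exact h _ (smul_mem_ball hε hq)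

lemma tendstoUniformly_mollify (hu : UniformContinuous u) :
    TendstoUniformly (fun ε ↦ mollify ε u) u (𝓝[>] 0) := by
  refine tendstoUniformly_iff.mpr fun r hr ↦ ?_
  obtain ⟨δ, hδ, hclose⟩ := uniformContinuous_iff.mp hu (r / 2) (half_pos hr)
  filter_upwards [Ioc_mem_nhdsGT hδ] with ε hε p
  rw [dist_comm, dist_eq_norm]
  refine (norm_mollify_sub_le hu.continuous hε.1 fun q hq ↦ ?_).trans_lt (half_lt_self hr)
  rw [← dist_eq_norm]
  exact (hclose (hq.trans_le hε.2)).le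

lemma comp_mollify [CompleteSpace F] (hu : Continuous u) (ℓ : W →L[ℝ] F) (ε : ℝ) :
    ℓ ∘ mollify ε u = mollify ε (ℓ ∘ u) := by
  ext p
  have hint := hasCompactSupport_mollifier.convolutionExists_left (lsmul ℝ ℝ)
    contDiff_mollifier.continuous (hu.comp (continuous_const_smul ε)).locallyIntegrable
    (ε⁻¹ • p) (μ := Measure.addHaar)
  refine (ℓ.integral_comp_comm hint).symm.trans ?_
  simp only [mollify, convolution, ContinuousLinearMap.lsmul_apply, map_smul, Function.comp_apply]

-- Mollification fixes constants, so the derivative of the mollifier has integral zero.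
lemma norm_fderiv_mollify_le (hu : Continuous u) (hε : 0 < ε)
    (h : ∀ q ∈ ball p ε, ‖u q - c‖ ≤ B) :
    ‖fderiv ℝ (mollify ε u) p‖ ≤ mollifierVariation E * B / ε := by
  let L := (lsmul ℝ ℝ : ℝ →L[ℝ] W →L[ℝ] W).precompL E
  have hB : 0 ≤ B := (norm_nonneg _).trans (h p (mem_ball_self hε))
  have hderiv (v : E → W) (hv : Continuous v) (x : E) :=
    hasCompactSupport_mollifier.hasFDerivAt_convolution_left (lsmul ℝ ℝ)
      (contDiff_mollifier.of_le (by simp)) (hv.locallyIntegrable (μ := Measure.addHaar)) x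
  have hmean : ∫ t, L (fderiv ℝ (mollifier E) t) c ∂Measure.addHaar = 0 := by
    refine (hderiv _ continuous_const 0).unique ?_
    have hconst : mollifier E ⋆[lsmul ℝ ℝ, Measure.addHaar] (fun _ ↦ c) = fun _ ↦ c := by
      ext x
      simpa [mollify, sub_eq_zero] using norm_mollify_sub_le (u := fun _ : E ↦ c) (p := x)
        (c := c) (B := 0) continuous_const one_pos (by simp)
    rw [hconst]
    exact hasFDerivAt_const c 0
  have hint : Integrable (fderiv ℝ (mollifier E)) Measure.addHaar :=
    (contDiff_mollifier.continuous_fderiv (by simp)).integrable_of_hasCompactSupport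
      (hasCompactSupport_mollifier.fderiv ℝ)
  have hv : Continuous fun q ↦ u (ε • q) := hu.comp (continuous_const_smul ε)
  have hunit := dist_convolution_le' L hB hint
    ((support_fderiv_subset ℝ).trans tsupport_mollifier_subset) hv.aestronglyMeasurable
    fun q hq ↦ (dist_eq_norm _ _).trans_le (h _ (smul_mem_ball hε hq))
  rw [hmean, dist_zero_right, ← (hderiv _ hv _).fderiv] at hunit
  have hL :=
    (ContinuousLinearMap.norm_precompL_le E (lsmul ℝ ℝ)).trans
      (ContinuousLinearMap.opNorm_lsmul_le (𝕜 := ℝ) (R := ℝ) (E := W))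
  have hscale : fderiv ℝ (mollify ε u) p = _ := fderiv_comp_smul ε⁻¹
  rw [hscale, norm_smul, norm_inv, Real.norm_of_nonneg hε.le, div_eq_inv_mul]
  gcongr
  exact hunit.trans (mul_le_mul_of_nonneg_right (mul_le_of_le_one_left (by positivity) hL) hB)

lemma norm_comp_fderiv_mollify_le [CompleteSpace F] (hu : Continuous u) (hε : 0 < ε) (ℓ : W →L[ℝ] F)
    (h : ∀ q ∈ ball p ε, ‖ℓ (u q - c)‖ ≤ B) :
    ‖ℓ ∘L fderiv ℝ (mollify ε u) p‖ ≤ mollifierVariation E * B / ε := by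
  have hd := (contDiff_mollify hu ε).differentiable (by simp) p
  rw [← (ℓ.hasFDerivAt.comp p hd.hasFDerivAt).fderiv, comp_mollify hu]
  exact norm_fderiv_mollify_le (c := ℓ c) (ℓ.continuous.comp hu) hε (by simpa using h)

end Mollify

variable {X W : Type*} [TopologicalSpace X] [NormedAddCommGroup W] [NormedSpace ℝ W]

/-- The functions on `X` which factor through `f` and a smooth function, the algebra to which the
Stone–Weierstrass theorem is applied. -/
def smoothPullback (f : X → W) : Subalgebra ℝ C(X, ℝ) where
  carrier := {u | ∃ g : W → ℝ, ContDiff ℝ ∞ g ∧ ∀ x, u x = g (f x)}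
  mul_mem' := by
    rintro u v ⟨g, hg, hu⟩ ⟨h, hh, hv⟩
    exact ⟨fun w ↦ g w * h w, hg.mul hh, fun x ↦ by simp [hu, hv]⟩
  add_mem' := by
    rintro u v ⟨g, hg, hu⟩ ⟨h, hh, hv⟩
    exact ⟨fun w ↦ g w + h w, hg.add hh, fun x ↦ by simp [hu, hv]⟩
  algebraMap_mem' r := ⟨fun _ ↦ r, contDiff_const, fun _ ↦ rfl⟩

lemma separatesPoints_smoothPullback {f : X → W} (hf : Continuous f)
    (hinj : Function.Injective f) : (smoothPullback f).SeparatesPoints := by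
  intro x y hxy
  obtain ⟨ℓ, hℓ⟩ := SeparatingDual.exists_separating_of_ne (R := ℝ) (hinj.ne hxy)
  exact ⟨_, ⟨⟨fun x ↦ ℓ (f x), by fun_prop⟩, ⟨ℓ, ℓ.contDiff, fun _ ↦ rfl⟩, rfl⟩, hℓ⟩

lemma exists_contDiff_near_of_injOn {f : X → W} (hf : Continuous f) {K : Set X}
    (hK : IsCompact K) (hinj : InjOn f K) {v : X → ℝ} (hv : Continuous v) {δ : ℝ} (hδ : 0 < δ) :
    ∃ g : W → ℝ, ContDiff ℝ ∞ g ∧ ∀ x ∈ K, |g (f x) - v x| < δ := by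
  have : CompactSpace K := isCompact_iff_compactSpace.mp hK
  obtain ⟨⟨u, g, hg, hu⟩, hclose⟩ :=
    ContinuousMap.exists_mem_subalgebra_near_continuous_of_separatesPoints
      (smoothPullback (K.domRestrict f))
      (separatesPoints_smoothPullback hf.continuousOn.domRestrict (injOn_iff_injective.mp hinj))
      (fun x : K ↦ v x) (by fun_prop) δ hδ
  refine ⟨g, hg, fun x hx ↦ ?_⟩
  have := hclose ⟨x, hx⟩
  rwa [Real.norm_eq_abs, show u ⟨x, hx⟩ = g (f x) from hu ⟨x, hx⟩] at this

end Mollification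

section Contact

variable {n : ℕ}

lemma exists_eq_xI_or_eq_yI {m : Fin (2 * n + 1)} (hm : m ≠ tI n) :
    ∃ j, m = xI n j ∨ m = yI n j := by
  have hm' : m.1 ≠ 2 * n := fun h ↦ hm (Fin.ext h)
  refine ⟨⟨m.1 / 2, by omega⟩, ?_⟩
  simp only [xI, yI, Fin.ext_iff]
  omega

/-- The contact form `dt + 2 ∑ (x_j dy_j - y_j dx_j)` of the Heisenberg group at the point `w`. The
quantity inside the second square of `dK n p q` is its value at `q` on `p - q`. -/
noncomputable def contactForm (n : ℕ) (w : Fin (2 * n + 1) → ℝ) :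
    (Fin (2 * n + 1) → ℝ) →L[ℝ] ℝ :=
  .proj (tI n) + (2 : ℝ) • ∑ j, (w (xI n j) • .proj (yI n j) - w (yI n j) • .proj (xI n j))

lemma contactForm_apply (w v : Fin (2 * n + 1) → ℝ) :
    contactForm n w v =
      v (tI n) + 2 * ∑ j, (w (xI n j) * v (yI n j) - w (yI n j) * v (xI n j)) := by
  simp [contactForm]

lemma contDiff_contactForm {m : WithTop ℕ∞} : ContDiff ℝ m (contactForm n) := by
  unfold contactForm
  fun_prop

lemma contactForm_single_tI (w : Fin (2 * n + 1) → ℝ) :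
    contactForm n w (Pi.single (tI n) 1) = 1 := by
  have hx (j : Fin n) : xI n j ≠ tI n := by simp [xI, tI, Fin.ext_iff]; omega
  have hy (j : Fin n) : yI n j ≠ tI n := by simp [yI, tI, Fin.ext_iff]; omega
  simp [contactForm_apply, hx, hy]

lemma norm_contactForm_sub_le (w w' : Fin (2 * n + 1) → ℝ) :
    ‖contactForm n w - contactForm n w'‖ ≤ 4 * n * ‖w - w'‖ := by
  refine ContinuousLinearMap.opNorm_le_bound _ (by positivity) fun v ↦ ?_
  have hterm (i j : Fin (2 * n + 1)) : |(w i - w' i) * v j| ≤ ‖w - w'‖ * ‖v‖ := by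
    rw [abs_mul]
    exact mul_le_mul (norm_le_pi_norm (w - w') i) (norm_le_pi_norm v j) (abs_nonneg _)
      (norm_nonneg _)
  have hdiff : (contactForm n w - contactForm n w') v = 2 * ∑ j,
      ((w (xI n j) - w' (xI n j)) * v (yI n j) - (w (yI n j) - w' (yI n j)) * v (xI n j)) := by
    rw [sub_apply, contactForm_apply, contactForm_apply, add_sub_add_left_eq_sub, ← mul_sub,
      ← Finset.sum_sub_distrib]
    congr 2 with j
    ring
  calc ‖(contactForm n w - contactForm n w') v‖
      ≤ 2 * ∑ _j : Fin n, (‖w - w'‖ * ‖v‖ + ‖w - w'‖ * ‖v‖) := by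
        rw [hdiff, Real.norm_eq_abs, abs_mul, abs_two]
        gcongr
        exact (Finset.abs_sum_le_sum_abs _ _).trans (Finset.sum_le_sum fun j _ ↦
          (abs_sub _ _).trans (add_le_add (hterm _ _) (hterm _ _)))
    _ = 4 * n * ‖w - w'‖ * ‖v‖ := by simp; ring

/-- The coframe of the Heisenberg group: `dx_j`, `dy_j` and the contact form. -/
noncomputable def coframe (n : ℕ) (w : Fin (2 * n + 1) → ℝ) :
    Fin (2 * n + 1) → (Fin (2 * n + 1) → ℝ) →L[ℝ] ℝ :=
  Function.update (fun m ↦ .proj m) (tI n) (contactForm n w)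

/-- The frame dual to `coframe n w`. -/
noncomputable def frame (n : ℕ) (w : Fin (2 * n + 1) → ℝ) (m : Fin (2 * n + 1)) :
    Fin (2 * n + 1) → ℝ :=
  Pi.single m 1 + ((if m = tI n then 1 else 0) - contactForm n w (Pi.single m 1)) •
    Pi.single (tI n) 1

lemma contDiff_frame {r : WithTop ℕ∞} (m : Fin (2 * n + 1)) :
    ContDiff ℝ r fun w ↦ frame n w m :=
  contDiff_const.add
    ((contDiff_const.sub (contDiff_contactForm.clm_apply contDiff_const)).smul contDiff_const)

lemma coframe_tI (w : Fin (2 * n + 1) → ℝ) : coframe n w (tI n) = contactForm n w :=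
  Function.update_self ..

lemma coframe_of_ne {m : Fin (2 * n + 1)} (hm : m ≠ tI n) (w : Fin (2 * n + 1) → ℝ) :
    coframe n w m = .proj m :=
  Function.update_of_ne hm ..

lemma continuous_coframe (m : Fin (2 * n + 1)) : Continuous fun w ↦ coframe n w m := by
  obtain rfl | hm := eq_or_ne m (tI n)
  · simpa only [coframe_tI] using (contDiff_contactForm (m := 0)).continuous
  · simpa only [coframe_of_ne hm] using continuous_const

lemma sum_apply_frame_smul_coframe (w : Fin (2 * n + 1) → ℝ)
    (ℓ : (Fin (2 * n + 1) → ℝ) →L[ℝ] ℝ) : ∑ m, ℓ (frame n w m) • coframe n w m = ℓ := by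
  ext v
  have expand (f : (Fin (2 * n + 1) → ℝ) →L[ℝ] ℝ) : ∑ m, f (Pi.single m 1) * v m = f v := by
    simp_rw [mul_comm, ← smul_eq_mul, ← map_smul, ← map_sum]
    rw [← pi_eq_sum_univ']
  set c : Fin (2 * n + 1) → ℝ := fun m ↦
    (if m = tI n then 1 else 0) - contactForm n w (Pi.single m 1)
  have hframe (m : Fin (2 * n + 1)) :
      ℓ (frame n w m) = ℓ (Pi.single m 1) + ℓ (Pi.single (tI n) 1) * c m := by
    simp [frame, c, mul_comm]
  have hcoframe (m : Fin (2 * n + 1)) : coframe n w m v =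
      v m + if m = tI n then contactForm n w v - v (tI n) else 0 := by
    split_ifs with hm
    · rw [hm, coframe_tI, add_sub_cancel]
    · rw [coframe_of_ne hm, add_zero, ContinuousLinearMap.proj_apply]
  have hct : c (tI n) = 0 := by simp [c, contactForm_single_tI]
  have hc : ∑ m, c m * v m = v (tI n) - contactForm n w v := by
    simp [c, sub_mul, expand]
  calc (∑ m, ℓ (frame n w m) • coframe n w m) v
      = ∑ m, ℓ (Pi.single m 1) * v m + ℓ (Pi.single (tI n) 1) * ∑ m, c m * v m +
          ℓ (Pi.single (tI n) 1) * (contactForm n w v - v (tI n)) := by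
        simp only [sum_apply, smul_apply, hframe, hcoframe, smul_eq_mul, mul_add, add_mul,
          mul_assoc, mul_ite, mul_zero, add_zero, Finset.sum_add_distrib,
          Finset.sum_ite_eq', Finset.mem_univ, if_true, hct, zero_mul, Finset.mul_sum]
    _ = ℓ v := by rw [expand, hc]; ring

section Stokes

variable {k : ℕ} {a b c : (Fin (k + 2) → ℝ) → ℝ} {U : Fin k → (Fin (k + 2) → ℝ) → ℝ}

lemma jacobianDet_vecCons_swap (x : Fin (k + 2) → ℝ) :
    jacobianDet (Matrix.vecCons b (Matrix.vecCons c U)) x =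
      -jacobianDet (Matrix.vecCons c (Matrix.vecCons b U)) x := by
  rw [jacobianDet, jacobianDet, ← (covDet _).map_swap _ (zero_ne_one (α := Fin (k + 2)))]
  congr 1
  ext1 i
  cases i using Fin.cases with
  | zero => simp
  | succ i =>
    cases i using Fin.cases with
    | zero => simp
    | succ i =>
      rw [Function.comp_apply, Equiv.swap_apply_of_ne_of_ne (Fin.succ_ne_zero _)
        (by simp [Fin.ext_iff])]
      rfl

/- Integration by parts of `∫ a db ∧ dc ∧ dU`, in cyclic form. -/
lemma integral_mul_jacobianDet_rotate (ha : ContDiff ℝ 2 a) (hb : ContDiff ℝ 2 b)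
    (hc : ContDiff ℝ 2 c) (hU : ∀ i, ContDiff ℝ 2 (U i)) (hac : HasCompactSupport a) :
    ∫ x, b x * jacobianDet (Matrix.vecCons c (Matrix.vecCons a U)) x =
      ∫ x, a x * jacobianDet (Matrix.vecCons b (Matrix.vecCons c U)) x := by
  rw [integral_mul_jacobianDet_vecCons ha hb (contDiff_vecCons hc hU) hac, ← integral_neg]
  congr 1 with x
  rw [jacobianDet_vecCons_swap, mul_neg]

lemma integrable_mul_jacobianDet_vecCons (ha : ContDiff ℝ 2 a) (hb : ContDiff ℝ 2 b)
    (hc : ContDiff ℝ 2 c) (hU : ∀ i, ContDiff ℝ 2 (U i)) (hac : HasCompactSupport a) :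
    Integrable fun x ↦ b x * jacobianDet (Matrix.vecCons c (Matrix.vecCons a U)) x := by
  have hcont : Continuous (jacobianDet (Matrix.vecCons c (Matrix.vecCons a U))) :=
    continuous_jacobianDet fun i ↦
      (contDiff_vecCons hc (contDiff_vecCons ha hU) i).of_le one_le_two
  have hsupp : HasCompactSupport (jacobianDet (Matrix.vecCons c (Matrix.vecCons a U))) :=
    hasCompactSupport_jacobianDet (i := 1) hac
  exact (hb.continuous.mul hcont).integrable_of_hasCompactSupport hsupp.mul_left

lemma integral_sub_mul_jacobianDet (ha : ContDiff ℝ 2 a) (hb : ContDiff ℝ 2 b)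
    (hc : ContDiff ℝ 2 c) (hU : ∀ i, ContDiff ℝ 2 (U i)) (hac : HasCompactSupport a) :
    ∫ x, (b x * jacobianDet (Matrix.vecCons c (Matrix.vecCons a U)) x -
        c x * jacobianDet (Matrix.vecCons b (Matrix.vecCons a U)) x) =
      2 * ∫ x, a x * jacobianDet (Matrix.vecCons b (Matrix.vecCons c U)) x := by
  rw [integral_sub (integrable_mul_jacobianDet_vecCons ha hb hc hU hac)
      (integrable_mul_jacobianDet_vecCons ha hc hb hU hac),
    integral_mul_jacobianDet_rotate ha hb hc hU hac,
    integral_mul_jacobianDet_rotate ha hc hb hU hac]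
  simp_rw [jacobianDet_vecCons_swap (b := c), mul_neg, integral_neg]
  ring

variable {F : (Fin (k + 2) → ℝ) → Fin (2 * n + 1) → ℝ}

lemma covDet_contactForm (hF : ContDiff ℝ 2 F) (V : Fin (k + 1) → (Fin (k + 2) → ℝ) → ℝ)
    (x : Fin (k + 2) → ℝ) :
    covDet _ (Matrix.vecCons (contactForm n (F x) ∘L fderiv ℝ F x) fun i ↦ fderiv ℝ (V i) x) =
      jacobianDet (Matrix.vecCons (fun y ↦ F y (tI n)) V) x + 2 * ∑ j,
        (F x (xI n j) * jacobianDet (Matrix.vecCons (fun y ↦ F y (yI n j)) V) x -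
          F x (yI n j) * jacobianDet (Matrix.vecCons (fun y ↦ F y (xI n j)) V) x) := by
  have hproj (m : Fin (2 * n + 1)) :
      fderiv ℝ (fun y ↦ F y m) x = ContinuousLinearMap.proj (R := ℝ) m ∘L fderiv ℝ F x :=
    fderiv_apply (hF.differentiable two_ne_zero x) m
  have hθ : contactForm n (F x) ∘L fderiv ℝ F x = fderiv ℝ (fun y ↦ F y (tI n)) x +
      (2 : ℝ) • ∑ j, (F x (xI n j) • fderiv ℝ (fun y ↦ F y (yI n j)) x -
        F x (yI n j) • fderiv ℝ (fun y ↦ F y (xI n j)) x) := by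
    ext v
    simp [contactForm_apply, hproj]
  let D : ((Fin (k + 2) → ℝ) →L[ℝ] ℝ) →ₗ[ℝ] ℝ :=
    { toFun := fun ℓ ↦ covDet _ (Matrix.vecCons ℓ fun i ↦ fderiv ℝ (V i) x)
      map_add' := fun _ _ ↦ AlternatingMap.map_vecCons_add ..
      map_smul' := fun _ _ ↦ AlternatingMap.map_vecCons_smul .. }
  have hD (b : (Fin (k + 2) → ℝ) → ℝ) :
      jacobianDet (Matrix.vecCons b V) x = D (fderiv ℝ b x) := jacobianDet_vecCons x
  simp only [hD]
  change D (contactForm n (F x) ∘L fderiv ℝ F x) = _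
  simp only [hθ, map_add, map_smul, map_sum, map_sub, smul_eq_mul]

/- Stokes' theorem for the form `a θ ∧ dU`, as `dθ = 4 ∑ dx_j ∧ dy_j`. -/
lemma integral_covDet_contactForm (hF : ContDiff ℝ 2 F) (ha : ContDiff ℝ 2 a)
    (hac : HasCompactSupport a) (hU : ∀ i, ContDiff ℝ 2 (U i)) :
    ∫ x, covDet _ (Matrix.vecCons (contactForm n (F x) ∘L fderiv ℝ F x)
        fun i ↦ fderiv ℝ (Matrix.vecCons a U i) x) =
      4 * ∑ j, ∫ x, a x * jacobianDet (Matrix.vecCons (fun y ↦ F y (xI n j))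
        (Matrix.vecCons (fun y ↦ F y (yI n j)) U)) x := by
  have hFm (m : Fin (2 * n + 1)) : ContDiff ℝ 2 fun y ↦ F y m := contDiff_pi.mp hF m
  have hzero : ∫ x, jacobianDet
      (Matrix.vecCons (fun y ↦ F y (tI n)) (Matrix.vecCons a U)) x = 0 :=
    integral_jacobianDet_eq_zero (contDiff_vecCons (hFm _) (contDiff_vecCons ha hU)) (i₀ := 1) hac
  let form (j : Fin n) (x : Fin (k + 2) → ℝ) : ℝ :=
    F x (xI n j) * jacobianDet (Matrix.vecCons (fun y ↦ F y (yI n j)) (Matrix.vecCons a U)) x -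
      F x (yI n j) * jacobianDet (Matrix.vecCons (fun y ↦ F y (xI n j)) (Matrix.vecCons a U)) x
  have hform (j : Fin n) : Integrable (form j) :=
    (integrable_mul_jacobianDet_vecCons ha (hFm _) (hFm _) hU hac).sub
      (integrable_mul_jacobianDet_vecCons ha (hFm _) (hFm _) hU hac)
  calc ∫ x, covDet _ (Matrix.vecCons (contactForm n (F x) ∘L fderiv ℝ F x)
        fun i ↦ fderiv ℝ (Matrix.vecCons a U i) x)
      = ∫ x, (jacobianDet (Matrix.vecCons (fun y ↦ F y (tI n)) (Matrix.vecCons a U)) x +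
          2 * ∑ j, form j x) := integral_congr_ae (.of_forall (covDet_contactForm hF _))
    _ = 2 * ∑ j, ∫ x, form j x := by
      have ht : Integrable
          (jacobianDet (Matrix.vecCons (fun y ↦ F y (tI n)) (Matrix.vecCons a U))) := by
        simpa using integrable_mul_jacobianDet_vecCons ha (contDiff_const (c := 1)) (hFm _) hU hac
      rw [integral_add ht ((integrable_finsetSum _ fun j _ ↦ hform j).const_mul 2), hzero, zero_add,
        integral_const_mul, integral_finsetSum _ fun j _ ↦ hform j]
    _ = _ := by
      simp_rw [form, integral_sub_mul_jacobianDet ha (hFm _) (hFm _) hU hac, ← Finset.mul_sum]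
      ring

end Stokes

end Contact

section Asymptotics

open Filter (Tendsto)

lemma tendsto_integral_zero_of_norm_le {α X G : Type*} [MeasurableSpace X] [NormedAddCommGroup G]
    [NormedSpace ℝ G] {μ : Measure X} {l : Filter α} {S : Set X} (hS : μ S < ⊤)
    {g : α → X → G} {r : α → ℝ} (hr : Tendsto r l (𝓝 0)) (hgS : ∀ᶠ s in l, ∀ x ∉ S, g s x = 0)
    (hg : ∀ᶠ s in l, ∀ x ∈ S, ‖g s x‖ ≤ r s) : Tendsto (fun s ↦ ∫ x, g s x ∂μ) l (𝓝 0) := by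
  refine squeeze_zero_norm' (a := fun s ↦ r s * μ.real S) ?_ (by simpa using hr.mul_const _)
  filter_upwards [hgS, hg] with s hsS hs
  rw [← setIntegral_eq_integral_of_forall_compl_eq_zero hsS]
  exact norm_setIntegral_le_of_norm_le_const hS hs

lemma norm_fderiv_mul_comp_le {E W : Type*} [NormedAddCommGroup E] [NormedSpace ℝ E]
    [NormedAddCommGroup W] [NormedSpace ℝ W] {χ : E → ℝ} {H : W → ℝ} {F : E → W} {x : E}
    {A B D : ℝ} (hχ : DifferentiableAt ℝ χ x) (hH : DifferentiableAt ℝ H (F x))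
    (hF : DifferentiableAt ℝ F x) (hχA : ‖χ x‖ ≤ A) (hDχA : ‖fderiv ℝ χ x‖ ≤ A)
    (hHB : ‖H (F x)‖ ≤ B) (hDHB : ‖fderiv ℝ H (F x)‖ ≤ B) (hDF : ‖fderiv ℝ F x‖ ≤ D) :
    ‖fderiv ℝ (fun y ↦ χ y * H (F y)) x‖ ≤ A * (B * D) + B * A := by
  have hderiv : fderiv ℝ (fun y ↦ χ y * H (F y)) x =
      χ x • (fderiv ℝ H (F x) ∘L fderiv ℝ F x) + H (F x) • fderiv ℝ χ x :=
    (hχ.hasFDerivAt.mul (hH.hasFDerivAt.comp x hF.hasFDerivAt)).fderiv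
  have hA := (norm_nonneg _).trans hχA
  have hB := (norm_nonneg _).trans hHB
  rw [hderiv]
  refine (norm_add_le _ _).trans ?_
  rw [norm_smul, norm_smul]
  gcongr
  exact (ContinuousLinearMap.opNorm_comp_le _ _).trans (by gcongr)

lemma jacobianDet_comp_eq_sum {n : ℕ} {ι : Type*} [Fintype ι] [DecidableEq ι]
    {G : ι → (Fin (2 * n + 1) → ℝ) → ℝ} {F : (ι → ℝ) → Fin (2 * n + 1) → ℝ} {x : ι → ℝ}
    (hG : ∀ i, DifferentiableAt ℝ (G i) (F x)) (hF : DifferentiableAt ℝ F x) :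
    jacobianDet (fun i y ↦ G i (F y)) x = ∑ κ : ι → Fin (2 * n + 1),
      (∏ i, fderiv ℝ (G i) (F x) (frame n (F x) (κ i))) *
        covDet ι fun i ↦ coframe n (F x) (κ i) ∘L fderiv ℝ F x := by
  have hderiv (i : ι) : fderiv ℝ (fun y ↦ G i (F y)) x =
      ∑ m, fderiv ℝ (G i) (F x) (frame n (F x) m) • (coframe n (F x) m ∘L fderiv ℝ F x) := by
    refine ((hG i).hasFDerivAt.comp x hF.hasFDerivAt).fderiv.trans ?_
    nth_rw 1 [← sum_apply_frame_smul_coframe (F x) (fderiv ℝ (G i) (F x))]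
    ext
    simp
  simp only [jacobianDet, hderiv]
  refine ((covDet ι).toMultilinearMap.map_sum _).trans (Finset.sum_congr rfl fun κ _ ↦ ?_)
  exact (covDet ι).toMultilinearMap.map_smul_univ _ _

/-- The integral of a family of alternating forms. -/
noncomputable def integralAlternatingMap {X V ι : Type*} [MeasurableSpace X] [AddCommGroup V]
    [Module ℝ V] (μ : Measure X) (A : X → V [⋀^ι]→ₗ[ℝ] ℝ)
    (hA : ∀ v, Integrable (fun x ↦ A x v) μ) : V [⋀^ι]→ₗ[ℝ] ℝ where
  toFun v := ∫ x, A x v ∂μ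
  map_update_add' v i a b := by simp [integral_add (hA _) (hA _)]
  map_update_smul' v i c a := by simp [integral_const_mul]
  map_eq_zero_of_eq' v i j hv hij := by simp [AlternatingMap.map_eq_zero_of_eq _ v hv hij]

/-- The integral `∫ a F^*(v_1 ∧ ⋯ ∧ v_N)` as an alternating form of the constant covectors `v`. -/
noncomputable def pullbackIntegral {ι W : Type*} [Fintype ι] [DecidableEq ι]
    [NormedAddCommGroup W] [NormedSpace ℝ W] {a : (ι → ℝ) → ℝ} {F : (ι → ℝ) → W}
    (ha : Continuous a) (hac : HasCompactSupport a) (hF : ContDiff ℝ 1 F) :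
    (W →L[ℝ] ℝ) [⋀^ι]→ₗ[ℝ] ℝ :=
  integralAlternatingMap volume
    (fun x ↦ a x • (covDet ι).compLinearMap
      (ContinuousLinearMap.precomp ℝ (fderiv ℝ F x)).toLinearMap)
    fun _ ↦ (ha.mul (continuous_covDet.comp (continuous_pi fun _ ↦
      continuous_const.clm_comp (hF.continuous_fderiv one_ne_zero)))
        ).integrable_of_hasCompactSupport hac.mul_right

/-- A family of smooth maps `F s` is asymptotically horizontal if it deviates from the contact
distribution by `η s`, a quantity negligible against the growth `δ s` of its derivatives, in the
sense that the `n`-fold products `δ s ^ n * η s` tend to zero. -/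
structure AsymptoticallyHorizontal {α E : Type*} [NormedAddCommGroup E] [NormedSpace ℝ E] {n : ℕ}
    (F : α → E → Fin (2 * n + 1) → ℝ) (l : Filter α) (S : Set E) (δ η : α → ℝ) : Prop where
  contDiff : ∀ s, ContDiff ℝ 2 (F s)
  one_le : ∀ᶠ s in l, 1 ≤ δ s
  norm_fderiv_le : ∀ᶠ s in l, ∀ x ∈ S, ‖fderiv ℝ (F s) x‖ ≤ δ s
  norm_contactForm_comp_le :
    ∀ᶠ s in l, ∀ x ∈ S, ‖contactForm n (F s x) ∘L fderiv ℝ (F s) x‖ ≤ η s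
  tendsto_zero : Tendsto (fun s ↦ δ s ^ n * η s) l (𝓝 0)

/-- A family of compactly supported amplitudes is slowly varying relative to `δ` if it is bounded
and its derivatives grow at most like `δ s`, with the common constant `C`. -/
structure SlowlyVarying {α E : Type*} [NormedAddCommGroup E] [NormedSpace ℝ E]
    (a : α → E → ℝ) (l : Filter α) (S : Set E) (δ : α → ℝ) (C : ℝ) : Prop where
  contDiff : ∀ s, ContDiff ℝ 2 (a s)
  tsupport_subset : ∀ s, tsupport (a s) ⊆ S
  abs_le : ∀ᶠ s in l, ∀ x ∈ S, |a s x| ≤ C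
  norm_fderiv_le : ∀ᶠ s in l, ∀ x ∈ S, ‖fderiv ℝ (a s) x‖ ≤ C * δ s

namespace AsymptoticallyHorizontal

section Coframe

variable {α E : Type*} [NormedAddCommGroup E] [NormedSpace ℝ E] {n : ℕ} {l : Filter α}
  {F : α → E → Fin (2 * n + 1) → ℝ} {S : Set E} {δ η : α → ℝ}

lemma norm_coframe_comp_le (hF : AsymptoticallyHorizontal F l S δ η) :
    ∀ᶠ s in l, ∀ x ∈ S, ∀ m, ‖coframe n (F s x) m ∘L fderiv ℝ (F s) x‖ ≤ δ s := by
  filter_upwards [hF.one_le, hF.norm_fderiv_le, hF.norm_contactForm_comp_le,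
    hF.tendsto_zero.eventually_le_const one_pos] with s hδ hD hθ hη x hx m
  obtain rfl | hm := eq_or_ne m (tI n)
  · rw [coframe_tI]
    have hη₀ : 0 ≤ η s := (norm_nonneg _).trans (hθ x hx)
    calc ‖contactForm n (F s x) ∘L fderiv ℝ (F s) x‖ ≤ η s := hθ x hx
      _ ≤ δ s ^ n * η s := le_mul_of_one_le_left hη₀ (one_le_pow₀ hδ)
      _ ≤ δ s := hη.trans hδ
  · rw [coframe_of_ne hm]
    refine ContinuousLinearMap.opNorm_le_bound _ (zero_le_one.trans hδ) fun v ↦ ?_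
    exact (norm_le_pi_norm _ m).trans ((fderiv ℝ (F s) x).le_of_opNorm_le (hD x hx) v)

end Coframe

section Words

variable {α : Type*} {l : Filter α} {δ η : α → ℝ} {C : ℝ}

lemma tendsto_integral_mul_covDet_of_contact {n : ℕ} {S : Set (Fin (n + 1) → ℝ)}
    {F : α → (Fin (n + 1) → ℝ) → Fin (2 * n + 1) → ℝ} {a : α → (Fin (n + 1) → ℝ) → ℝ}
    (hF : AsymptoticallyHorizontal F l S δ η) (hS : IsCompact S) (ha : SlowlyVarying a l S δ C)
    {κ : Fin (n + 1) → Fin (2 * n + 1)} {i₀ : Fin (n + 1)} (hi₀ : κ i₀ = tI n) :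
    Tendsto (fun s ↦ ∫ x, a s x *
      covDet _ fun i ↦ coframe n (F s x) (κ i) ∘L fderiv ℝ (F s) x) l (𝓝 0) := by
  obtain ⟨B, hB, hdet⟩ := exists_abs_covDet_le (Fin (n + 1))
  refine tendsto_integral_zero_of_norm_le hS.measure_lt_top
    (r := fun s ↦ C * B * (δ s ^ n * η s)) (by simpa using hF.tendsto_zero.const_mul (C * B))
    (.of_forall fun s x hx ↦ by
      rw [image_eq_zero_of_notMem_tsupport (mt (@ha.tsupport_subset s x) hx), zero_mul]) ?_
  filter_upwards [hF.norm_coframe_comp_le, hF.norm_contactForm_comp_le, ha.abs_le]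
    with s hD hθ has x hx
  have hprod : ∏ i, ‖coframe n (F s x) (κ i) ∘L fderiv ℝ (F s) x‖ ≤ δ s ^ n * η s := by
    rw [← Finset.prod_erase_mul _ _ (Finset.mem_univ i₀), hi₀, coframe_tI]
    have hδ : 0 ≤ δ s := (norm_nonneg _).trans (hD x hx 0)
    gcongr
    · refine (Finset.prod_le_prod (fun _ _ ↦ norm_nonneg _) fun i _ ↦ hD x hx (κ i)).trans_eq ?_
      simp
    · exact hθ x hx
  have hC : 0 ≤ C := (abs_nonneg _).trans (has x hx)
  rw [norm_mul, mul_assoc, Real.norm_eq_abs, Real.norm_eq_abs]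
  gcongr
  · exact has x hx
  · exact (hdet _).trans (by gcongr)

variable {k : ℕ} {S : Set (Fin (k + 2) → ℝ)}
  {F : α → (Fin (k + 2) → ℝ) → Fin (2 * (k + 1) + 1) → ℝ} {a : α → (Fin (k + 2) → ℝ) → ℝ}

lemma tendsto_integral_covDet_contactForm (hF : AsymptoticallyHorizontal F l S δ η)
    (hS : IsCompact S) (ha : SlowlyVarying a l S δ C)
    (v : Fin k → (Fin (2 * (k + 1) + 1) → ℝ) →L[ℝ] ℝ) :
    Tendsto (fun s ↦ ∫ x, covDet _ (Matrix.vecCons (contactForm _ (F s x) ∘L fderiv ℝ (F s) x)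
      (Matrix.vecCons (fderiv ℝ (a s) x) fun i ↦ v i ∘L fderiv ℝ (F s) x))) l (𝓝 0) := by
  obtain ⟨B, hB, hdet⟩ := exists_abs_covDet_le (Fin (k + 2))
  set P : ℝ := ∏ i, ‖v i‖
  refine tendsto_integral_zero_of_norm_le hS.measure_lt_top
    (r := fun s ↦ B * C * P * (δ s ^ (k + 1) * η s))
    (by simpa using hF.tendsto_zero.const_mul (B * C * P)) (.of_forall fun s x hx ↦ ?_) ?_
  · refine (covDet _).map_coord_zero 1 ?_
    have hx' : x ∉ tsupport (fderiv ℝ (a s)) := fun h ↦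
      hx (ha.tsupport_subset s (tsupport_fderiv_subset ℝ h))
    simpa using image_eq_zero_of_notMem_tsupport hx'
  filter_upwards [hF.norm_fderiv_le, hF.norm_contactForm_comp_le, ha.norm_fderiv_le]
    with s hD hθ has x hx
  have hη : 0 ≤ η s := (norm_nonneg _).trans (hθ x hx)
  have hCδ : 0 ≤ C * δ s := (norm_nonneg _).trans (has x hx)
  have hv (i : Fin k) : ‖v i ∘L fderiv ℝ (F s) x‖ ≤ ‖v i‖ * δ s :=
    ((v i).opNorm_comp_le _).trans (by gcongr; exact hD x hx)
  have hvprod : ∏ i, ‖v i ∘L fderiv ℝ (F s) x‖ ≤ P * δ s ^ k := by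
    refine (Finset.prod_le_prod (fun _ _ ↦ norm_nonneg _) fun i _ ↦ hv i).trans_eq ?_
    simp [P, Finset.prod_mul_distrib]
  rw [Real.norm_eq_abs]
  refine (hdet _).trans ?_
  simp only [Fin.prod_univ_succ, Matrix.cons_val_zero, Matrix.cons_val_succ]
  calc B * (‖contactForm _ (F s x) ∘L fderiv ℝ (F s) x‖ * (‖fderiv ℝ (a s) x‖ *
        ∏ i, ‖v i ∘L fderiv ℝ (F s) x‖))
      ≤ B * (η s * (C * δ s * (P * δ s ^ k))) := by
        gcongr
        exacts [hθ x hx, has x hx]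
    _ = B * C * P * (δ s ^ (k + 1) * η s) := by ring

lemma tendsto_sum_integral_mul_covDet (hF : AsymptoticallyHorizontal F l S δ η)
    (hS : IsCompact S) (ha : SlowlyVarying a l S δ C)
    (v : Fin k → (Fin (2 * (k + 1) + 1) → ℝ) →L[ℝ] ℝ) :
    Tendsto (fun s ↦ ∑ j, ∫ x, a s x * covDet _ fun i ↦
      Matrix.vecCons (.proj (xI (k + 1) j)) (Matrix.vecCons (.proj (yI (k + 1) j)) v) i ∘L
        fderiv ℝ (F s) x) l (𝓝 0) := by
  have h := (tendsto_integral_covDet_contactForm hF hS ha v).const_mul (1 / 4)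
  rw [mul_zero] at h
  refine h.congr fun s ↦ ?_
  have hFs := hF.contDiff s
  have hcomp (ℓ : (Fin (2 * (k + 1) + 1) → ℝ) →L[ℝ] ℝ) (x : Fin (k + 2) → ℝ) :
      fderiv ℝ (fun y ↦ ℓ (F s y)) x = ℓ ∘L fderiv ℝ (F s) x :=
    (ℓ.hasFDerivAt.comp x (hFs.differentiable two_ne_zero x).hasFDerivAt).fderiv
  have hStokes := integral_covDet_contactForm hFs (ha.contDiff s)
    (hS.of_isClosed_subset (isClosed_tsupport _) (ha.tsupport_subset s))
    (U := fun i y ↦ v i (F s y)) fun i ↦ (v i).contDiff.comp hFs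
  have hleft (x : Fin (k + 2) → ℝ) : (fun i ↦ fderiv ℝ
      (Matrix.vecCons (a s) (fun i y ↦ v i (F s y)) i) x) =
      Matrix.vecCons (fderiv ℝ (a s) x) fun i ↦ v i ∘L fderiv ℝ (F s) x := by
    ext1 i
    cases i using Fin.cases with
    | zero => rfl
    | succ i => exact hcomp (v i) x
  have hright (j : Fin (k + 1)) (x : Fin (k + 2) → ℝ) : jacobianDet
      (Matrix.vecCons (fun y ↦ F s y (xI (k + 1) j)) (Matrix.vecCons (fun y ↦ F s y (yI (k + 1) j))
        fun i y ↦ v i (F s y))) x = covDet _ fun i ↦ Matrix.vecCons (.proj (xI (k + 1) j))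
          (Matrix.vecCons (.proj (yI (k + 1) j)) v) i ∘L fderiv ℝ (F s) x := by
    refine congrArg (covDet _) (funext fun i ↦ ?_)
    cases i using Fin.cases with
    | zero => exact hcomp (.proj _) x
    | succ i =>
      cases i using Fin.cases with
      | zero => exact hcomp (.proj _) x
      | succ i => exact hcomp (v i) x
  simp only [hleft, hright] at hStokes
  rw [hStokes]
  ring

lemma tendsto_integral_mul_covDet_of_horizontal (hF : AsymptoticallyHorizontal F l S δ η)
    (hS : IsCompact S) (ha : SlowlyVarying a l S δ C)
    {κ : Fin (k + 2) → Fin (2 * (k + 1) + 1)} (hκ : ∀ i, κ i ≠ tI (k + 1)) :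
    Tendsto (fun s ↦ ∫ x, a s x *
      covDet _ fun i ↦ coframe (k + 1) (F s x) (κ i) ∘L fderiv ℝ (F s) x) l (𝓝 0) := by
  let b (q : Fin (k + 1) × Bool) : (Fin (2 * (k + 1) + 1) → ℝ) →L[ℝ] ℝ :=
    .proj (if q.2 then yI (k + 1) q.1 else xI (k + 1) q.1)
  have hletter (m : Fin (2 * (k + 1) + 1)) (hm : m ≠ tI (k + 1)) : ∃ q, b q = .proj m := by
    obtain ⟨j, rfl | rfl⟩ := exists_eq_xI_or_eq_yI hm
    exacts [⟨(j, false), rfl⟩, ⟨(j, true), rfl⟩]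
  choose q hq using fun i ↦ hletter (κ i) (hκ i)
  have hmem := alternating_mem_of_trace_mem b (k := k) (by simp)
    (AlternatingMap.pi fun s ↦ pullbackIntegral (ha.contDiff s).continuous
      (hS.of_isClosed_subset (isClosed_tsupport _) (ha.tsupport_subset s))
      ((hF.contDiff s).of_le one_le_two))
    (Filter.zeroAtFilterSubmodule ℝ l) (fun v ↦ ?_) q
  · refine hmem.congr fun s ↦ integral_congr_ae (.of_forall fun x ↦ ?_)
    simp only [hq, coframe_of_ne (hκ _)]
    rfl
  · refine (tendsto_sum_integral_mul_covDet hF hS ha v).congr fun s ↦ ?_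
    rw [Finset.sum_apply]
    rfl

end Words

section Comp

variable {α : Type*} {l : Filter α} {δ η : α → ℝ} {n : ℕ} {S : Set (Fin (n + 1) → ℝ)}
  {F : α → (Fin (n + 1) → ℝ) → Fin (2 * n + 1) → ℝ}

lemma tendsto_integral_mul_covDet (hF : AsymptoticallyHorizontal F l S δ η) (hS : IsCompact S)
    {a : α → (Fin (n + 1) → ℝ) → ℝ} {C : ℝ} (ha : SlowlyVarying a l S δ C)
    (κ : Fin (n + 1) → Fin (2 * n + 1)) :
    Tendsto (fun s ↦ ∫ x, a s x *
      covDet _ fun i ↦ coframe n (F s x) (κ i) ∘L fderiv ℝ (F s) x) l (𝓝 0) := by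
  by_cases hκ : ∃ i, κ i = tI n
  · exact tendsto_integral_mul_covDet_of_contact hF hS ha hκ.choose_spec
  push Not at hκ
  cases n with
  | zero => exact absurd (Subsingleton.elim (α := Fin 1) _ _) (hκ 0)
  | succ k => exact tendsto_integral_mul_covDet_of_horizontal hF hS ha hκ

lemma slowlyVarying_mul_comp (hF : AsymptoticallyHorizontal F l S δ η) (hS : IsCompact S)
    {χ : (Fin (n + 1) → ℝ) → ℝ} (hχ : ContDiff ℝ 2 χ) (hχS : tsupport χ ⊆ S)
    {K : Set (Fin (2 * n + 1) → ℝ)} (hK : IsCompact K) (hFK : ∀ᶠ s in l, ∀ x ∈ S, F s x ∈ K)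
    {H : (Fin (2 * n + 1) → ℝ) → ℝ} (hH : ContDiff ℝ 2 H) :
    ∃ C, SlowlyVarying (fun s x ↦ χ x * H (F s x)) l S δ C := by
  obtain ⟨A, hA⟩ := hS.exists_bound_of_continuousOn (f := fun x ↦ (χ x, fderiv ℝ χ x))
    (hχ.continuous.prodMk (hχ.continuous_fderiv two_ne_zero)).continuousOn
  obtain ⟨B, hB⟩ := hK.exists_bound_of_continuousOn (f := fun w ↦ (H w, fderiv ℝ H w))
    (hH.continuous.prodMk (hH.continuous_fderiv two_ne_zero)).continuousOn
  simp only [norm_prod_le_iff] at hA hB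
  refine ⟨2 * (A * B), fun s ↦ hχ.mul (hH.comp (hF.contDiff s)),
    fun s ↦ tsupport_mul_subset_left.trans hχS, ?_, ?_⟩
  · filter_upwards [hFK] with s hs x hx
    obtain ⟨⟨hχx, -⟩, hHx, -⟩ := And.intro (hA x hx) (hB _ (hs x hx))
    have hA₀ := (norm_nonneg _).trans hχx
    have hB₀ := (norm_nonneg _).trans hHx
    calc |χ x * H (F s x)| = ‖χ x‖ * ‖H (F s x)‖ := abs_mul _ _
      _ ≤ A * B := by gcongr
      _ ≤ 2 * (A * B) := le_mul_of_one_le_left (mul_nonneg hA₀ hB₀) one_le_two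
  · filter_upwards [hFK, hF.one_le, hF.norm_fderiv_le] with s hs hδ hD x hx
    obtain ⟨⟨hχx, hDχx⟩, hHx, hDHx⟩ := And.intro (hA x hx) (hB _ (hs x hx))
    have hA₀ := (norm_nonneg _).trans hχx
    have hB₀ := (norm_nonneg _).trans hHx
    have h := norm_fderiv_mul_comp_le (hχ.differentiable two_ne_zero x)
      (hH.differentiable two_ne_zero _) ((hF.contDiff s).differentiable two_ne_zero x)
      hχx hDχx hHx hDHx (hD x hx)
    linarith [le_mul_of_one_le_right (mul_nonneg hA₀ hB₀) hδ]

theorem tendsto_integral_mul_jacobianDet_comp (hF : AsymptoticallyHorizontal F l S δ η)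
    (hS : IsCompact S) {χ : (Fin (n + 1) → ℝ) → ℝ} (hχ : ContDiff ℝ 2 χ) (hχS : tsupport χ ⊆ S)
    {K : Set (Fin (2 * n + 1) → ℝ)} (hK : IsCompact K) (hFK : ∀ᶠ s in l, ∀ x ∈ S, F s x ∈ K)
    {G : Fin (n + 1) → (Fin (2 * n + 1) → ℝ) → ℝ} (hG : ∀ i, ContDiff ℝ 3 (G i)) :
    Tendsto (fun s ↦ ∫ x, χ x * jacobianDet (fun i y ↦ G i (F s y)) x) l (𝓝 0) := by
  have hχc : HasCompactSupport χ := hS.of_isClosed_subset (isClosed_tsupport _) hχS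
  let H (κ : Fin (n + 1) → Fin (2 * n + 1)) (w : Fin (2 * n + 1) → ℝ) : ℝ :=
    ∏ i, fderiv ℝ (G i) w (frame n w (κ i))
  have hH (κ : Fin (n + 1) → Fin (2 * n + 1)) : ContDiff ℝ 2 (H κ) :=
    contDiff_prod fun i _ ↦ ((hG i).fderiv_right le_rfl).clm_apply (contDiff_frame _)
  have hterm (κ : Fin (n + 1) → Fin (2 * n + 1)) : Tendsto (fun s ↦ ∫ x, χ x * H κ (F s x) *
      covDet _ fun i ↦ coframe n (F s x) (κ i) ∘L fderiv ℝ (F s) x) l (𝓝 0) :=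
    have ⟨_, ha⟩ := hF.slowlyVarying_mul_comp hS hχ hχS hK hFK (hH κ)
    hF.tendsto_integral_mul_covDet hS ha κ
  have hsum := tendsto_finsetSum Finset.univ fun κ _ ↦ hterm κ
  simp only [Finset.sum_const_zero] at hsum
  refine hsum.congr fun s ↦ ?_
  have hFs := hF.contDiff s
  rw [← integral_finsetSum _ fun κ _ ↦ ?_]
  · congr 1 with x
    rw [jacobianDet_comp_eq_sum (fun i ↦ (hG i).differentiable three_ne_zero _)
      (hFs.differentiable two_ne_zero x), Finset.mul_sum]
    simp only [H, mul_assoc]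
  · have hcovDet : Continuous fun x ↦
        covDet _ fun i ↦ coframe n (F s x) (κ i) ∘L fderiv ℝ (F s) x :=
      continuous_covDet.comp (continuous_pi fun i ↦ ((continuous_coframe (κ i)).comp
        hFs.continuous).clm_comp (hFs.continuous_fderiv two_ne_zero))
    exact ((hχ.continuous.mul ((hH κ).continuous.comp hFs.continuous)).mul
      hcovDet).integrable_of_hasCompactSupport hχc.mul_right.mul_right

end Comp

end AsymptoticallyHorizontal

end Asymptotics

section Nonembedding

open Filter (Tendsto)
open scoped ContDiff

theorem AsymptoticallyHorizontal.not_injOn {α : Type*} {l : Filter α} [l.NeBot] {n : ℕ}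
    {F : α → (Fin (n + 1) → ℝ) → Fin (2 * n + 1) → ℝ} {δ η : α → ℝ}
    (hF : AsymptoticallyHorizontal F l (closedBall 0 4) δ η)
    {u : (Fin (n + 1) → ℝ) → Fin (2 * n + 1) → ℝ} (hu : Continuous u)
    (hFu : TendstoUniformlyOn F u l (closedBall 0 4)) : ¬ InjOn u (closedBall 0 4) := by
  intro hinj
  have hS : IsCompact (closedBall (0 : Fin (n + 1) → ℝ) 4) := isCompact_closedBall 0 4
  choose g hg hgu using fun i ↦
    exists_contDiff_near_of_injOn hu hS hinj (continuous_apply i) one_half_pos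
  have hK := (hS.image hu).cthickening (r := 1)
  set K := cthickening 1 (u '' closedBall 0 4)
  have huK {x : Fin (n + 1) → ℝ} (hx : x ∈ closedBall 0 4) : u x ∈ K :=
    self_subset_cthickening _ (mem_image_of_mem u hx)
  have hFK : ∀ᶠ s in l, ∀ x ∈ closedBall 0 4, F s x ∈ K := by
    filter_upwards [tendstoUniformlyOn_iff.mp hFu 1 one_pos] with s hs x hx
    exact mem_cthickening_of_dist_le _ _ _ _ (mem_image_of_mem u hx)
      ((dist_comm _ _).trans_le (hs x hx).le)
  have hclose : ∀ᶠ s in l, ∀ i, ∀ x ∈ closedBall 0 4, |g i (F s x) - x i| < 1 := by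
    refine Filter.eventually_all.mpr fun i ↦ ?_
    have huc := hK.uniformContinuousOn_of_continuous (hg i).continuous.continuousOn
    filter_upwards [tendstoUniformlyOn_iff.mp
      (huc.comp_tendstoUniformlyOn_eventually hFK (fun _ ↦ huK) hFu) (1 / 2) one_half_pos]
      with s hs x hx
    have h := hs x hx
    rw [dist_comm, Real.dist_eq] at h
    linarith [abs_sub_le (g i (F s x)) (g i (u x)) (x i), hgu i x hx]
  let χ : ContDiffBump (0 : Fin (n + 1) → ℝ) := ⟨3, 4, by norm_num, by norm_num⟩
  have hto_zero := hF.tendsto_integral_mul_jacobianDet_comp hS χ.contDiff χ.tsupport_eq.subset hK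
    hFK fun i ↦ Real.smoothTransition.contDiff.comp ((hg i).of_le (WithTop.coe_le_coe.mpr le_top))
  refine one_ne_zero (tendsto_nhds_unique (tendsto_const_nhds.congr' ?_) hto_zero)
  filter_upwards [hclose] with s hs
  refine (integral_mul_jacobianDet_smoothTransition_eq_one χ.contDiff χ.hasCompactSupport
    (fun x hx ↦ χ.one_of_mem_closedBall (by simpa using hx.le)) (fun i ↦ ?_) fun x hx i ↦ ?_).symm
  · exact ((hg i).of_le (WithTop.coe_le_coe.mpr le_top)).comp (hF.contDiff s)
  · exact hs i x (χ.tsupport_eq.subset hx)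

lemma tendsto_rpow_pow_mul_rpow_nhdsGT_zero (D : ℝ) {n : ℕ} {a b : ℝ} (h : 0 < n * a + b) :
    Tendsto (fun ε : ℝ ↦ (D * ε ^ a) ^ n * (D * ε ^ b)) (𝓝[>] 0) (𝓝 0) := by
  have hto : Tendsto (fun ε : ℝ ↦ D ^ (n + 1) * ε ^ (n * a + b)) (𝓝[>] 0) (𝓝 0) := by
    simpa [Real.zero_rpow h.ne'] using ((Real.continuousAt_rpow_const 0 _
      (.inr h.le)).tendsto.mono_left nhdsWithin_le_nhds).const_mul (D ^ (n + 1))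
  refine hto.congr' ?_
  filter_upwards [self_mem_nhdsWithin] with ε (hε : 0 < ε)
  rw [Real.rpow_add hε, mul_comm (n : ℝ), Real.rpow_mul hε.le, Real.rpow_natCast]
  ring

lemma uniformContinuous_of_dist_le_rpow {X Y : Type*} [PseudoMetricSpace X] [PseudoMetricSpace Y]
    {u : X → Y} {C γ : ℝ} (hγ : 0 < γ) (hu : ∀ p q, dist (u q) (u p) ≤ C * dist q p ^ γ) :
    UniformContinuous u := by
  have hholder : HolderWith C.toNNReal γ.toNNReal u := fun q p ↦ by
    rw [edist_dist, edist_dist, Real.coe_toNNReal γ hγ.le,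
      ENNReal.ofReal_rpow_of_nonneg dist_nonneg hγ.le, ← ENNReal.ofReal,
      ← ENNReal.ofReal_mul' (by positivity)]
    exact ENNReal.ofReal_le_ofReal (hu p q)
  exact hholder.uniformContinuous (Real.toNNReal_pos.mpr hγ)

section Holder

variable {E : Type*} [NormedAddCommGroup E] [NormedSpace ℝ E] [FiniteDimensional ℝ E]
  [MeasurableSpace E] [BorelSpace E] {n : ℕ} {u : E → Fin (2 * n + 1) → ℝ} {γ C : ℝ}

lemma norm_contactForm_comp_fderiv_mollify_le (hu : Continuous u) {ε A B : ℝ} (hε : 0 < ε) {p : E}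
    (hA : ∀ q ∈ ball p ε, ‖u q - u p‖ ≤ A)
    (hB : ∀ q ∈ ball p ε, |contactForm n (u p) (u q - u p)| ≤ B) :
    ‖contactForm n (mollify ε u p) ∘L fderiv ℝ (mollify ε u) p‖ ≤
      mollifierVariation E * (B + 4 * n * A ^ 2) / ε := by
  have hA₀ : 0 ≤ A := (norm_nonneg _).trans (hA p (mem_ball_self hε))
  have hfrozen := norm_comp_fderiv_mollify_le hu hε (contactForm n (u p)) hB
  have hderiv := norm_fderiv_mollify_le hu hε hA
  have hdiff : ‖contactForm n (mollify ε u p) - contactForm n (u p)‖ ≤ 4 * n * A :=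
    (norm_contactForm_sub_le _ _).trans (by gcongr; exact norm_mollify_sub_le hu hε hA)
  calc ‖contactForm n (mollify ε u p) ∘L fderiv ℝ (mollify ε u) p‖
      = ‖contactForm n (u p) ∘L fderiv ℝ (mollify ε u) p +
          (contactForm n (mollify ε u p) - contactForm n (u p)) ∘L
            fderiv ℝ (mollify ε u) p‖ := by
        rw [ContinuousLinearMap.sub_comp, add_sub_cancel]
    _ ≤ mollifierVariation E * B / ε + 4 * n * A * (mollifierVariation E * A / ε) := by
        refine (norm_add_le _ _).trans (add_le_add hfrozen ?_)
        exact (ContinuousLinearMap.opNorm_comp_le _ _).trans (by gcongr)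
    _ = mollifierVariation E * (B + 4 * n * A ^ 2) / ε := by ring

lemma mul_dist_rpow_le {X : Type*} [PseudoMetricSpace X] {p q : X} {ε r : ℝ} (hC : 0 ≤ C)
    (hr : 0 ≤ r) (hq : q ∈ ball p ε) : C * dist q p ^ r ≤ C * ε ^ r := by
  gcongr
  exact hq.le

lemma norm_fderiv_mollify_le_of_holder {W : Type*} [NormedAddCommGroup W] [NormedSpace ℝ W]
    [CompleteSpace W] {u : E → W} (hu : Continuous u) (hC : 0 ≤ C) (hγ : 0 ≤ γ) {ε : ℝ}
    (hε : 0 < ε) {p : E} (hhold : ∀ q, ‖u q - u p‖ ≤ C * dist q p ^ γ) :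
    ‖fderiv ℝ (mollify ε u) p‖ ≤ mollifierVariation E * C * ε ^ (γ - 1) := by
  refine (norm_fderiv_mollify_le hu hε fun q hq ↦
    (hhold q).trans (mul_dist_rpow_le hC hγ hq)).trans_eq ?_
  rw [Real.rpow_sub hε, Real.rpow_one]
  ring

lemma norm_contactForm_comp_fderiv_mollify_le_of_holder (hu : Continuous u) (hC : 0 ≤ C)
    (hγ : 0 ≤ γ) {ε : ℝ} (hε : 0 < ε) {p : E} (hhold : ∀ q, ‖u q - u p‖ ≤ C * dist q p ^ γ)
    (hcontact : ∀ q, |contactForm n (u p) (u q - u p)| ≤ C * dist q p ^ (2 * γ)) :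
    ‖contactForm n (mollify ε u p) ∘L fderiv ℝ (mollify ε u) p‖ ≤
      mollifierVariation E * C * (1 + 4 * n * C) * ε ^ (2 * γ - 1) := by
  refine (norm_contactForm_comp_fderiv_mollify_le hu hε
    (fun q hq ↦ (hhold q).trans (mul_dist_rpow_le hC hγ hq))
    fun q hq ↦ (hcontact q).trans (mul_dist_rpow_le hC (by positivity) hq)).trans_eq ?_
  rw [Real.rpow_sub hε, Real.rpow_one, two_mul γ, Real.rpow_add hε]
  ring

/- The exponent `n (γ - 1) + (2 γ - 1)` is positive exactly when `(n + 1) / (n + 2) < γ`. -/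
lemma exists_asymptoticallyHorizontal_mollify (hu : Continuous u) (hC : 0 ≤ C)
    (hγ : ((n : ℝ) + 1) / (n + 2) < γ) (hγ₁ : γ ≤ 1)
    (hhold : ∀ p q, ‖u q - u p‖ ≤ C * dist q p ^ γ)
    (hcontact : ∀ p q, |contactForm n (u p) (u q - u p)| ≤ C * dist q p ^ (2 * γ)) (S : Set E) :
    ∃ D, AsymptoticallyHorizontal (fun ε ↦ mollify ε u) (𝓝[>] 0) S
      (fun ε ↦ D * ε ^ (γ - 1)) fun ε ↦ D * ε ^ (2 * γ - 1) := by
  set M := mollifierVariation E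
  have hM : 0 ≤ M := mollifierVariation_nonneg E
  have hγ₀ : 0 ≤ γ := le_trans (by positivity) hγ.le
  set D : ℝ := 1 + M * C * (1 + 4 * n * C)
  have hD : M * C * (1 + 4 * n * C) ≤ D := le_add_of_nonneg_left zero_le_one
  refine ⟨D, fun ε ↦ (contDiff_mollify hu ε).of_le (WithTop.coe_le_coe.mpr le_top), ?_, ?_, ?_, ?_⟩
  · filter_upwards [self_mem_nhdsWithin, Ioc_mem_nhdsGT one_pos] with ε hε hε₁
    have hone := Real.one_le_rpow_of_pos_of_le_one_of_nonpos hε hε₁.2 (sub_nonpos.mpr hγ₁)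
    exact one_le_mul_of_one_le_of_one_le (le_add_of_nonneg_right (by positivity)) hone
  · filter_upwards [self_mem_nhdsWithin] with ε (hε : 0 < ε) p _
    refine (norm_fderiv_mollify_le_of_holder hu hC hγ₀ hε (hhold p)).trans ?_
    gcongr
    exact (le_mul_of_one_le_right (by positivity) (le_add_of_nonneg_right (by positivity))).trans hD
  · filter_upwards [self_mem_nhdsWithin] with ε (hε : 0 < ε) p _
    refine (norm_contactForm_comp_fderiv_mollify_le_of_holder hu hC hγ₀ hε (hhold p)
      (hcontact p)).trans ?_
    gcongr
  · have hexp : 0 < n * (γ - 1) + (2 * γ - 1) := by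
      rw [div_lt_iff₀ (by positivity)] at hγ
      linarith
    exact tendsto_rpow_pow_mul_rpow_nhdsGT_zero D hexp

lemma not_injective_of_holder {u : (Fin (n + 1) → ℝ) → Fin (2 * n + 1) → ℝ} (hC : 0 ≤ C)
    (hγ : ((n : ℝ) + 1) / (n + 2) < γ) (hγ₁ : γ ≤ 1)
    (hhold : ∀ p q, ‖u q - u p‖ ≤ C * dist q p ^ γ)
    (hcontact : ∀ p q, |contactForm n (u p) (u q - u p)| ≤ C * dist q p ^ (2 * γ)) :
    ¬ Function.Injective u := fun hinj ↦ by
  have hu : UniformContinuous u :=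
    uniformContinuous_of_dist_le_rpow (lt_trans (by positivity) hγ) (by simpa [dist_eq_norm])
  obtain ⟨D, hD⟩ := exists_asymptoticallyHorizontal_mollify hu.continuous hC hγ hγ₁ hhold hcontact
    (closedBall 0 4)
  exact hD.not_injOn hu.continuous (tendstoUniformly_mollify hu).tendstoUniformlyOn hinj.injOn

end Holder

end Nonembedding

section Koranyi

variable {n : ℕ}

lemma dK_nonneg (n : ℕ) (p q : EuclideanSpace ℝ (Fin (2 * n + 1))) : 0 ≤ dK n p q :=
  Real.rpow_nonneg (by positivity) _

lemma dK_pow_four (p q : EuclideanSpace ℝ (Fin (2 * n + 1))) :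
    dK n p q ^ 4 = (∑ i : Fin (2 * n), (p (Fin.castSucc i) - q (Fin.castSucc i)) ^ 2) ^ 2 +
      contactForm n q.ofLp (p.ofLp - q.ofLp) ^ 2 := by
  have hcontact : contactForm n q.ofLp (p.ofLp - q.ofLp) = p (tI n) - q (tI n) +
      2 * ∑ j : Fin n, (q (xI n j) * p (yI n j) - p (xI n j) * q (yI n j)) := by
    rw [contactForm_apply]
    congr 3 with j
    simp only [Pi.sub_apply]
    ring
  rw [hcontact, dK, ← Real.rpow_natCast, ← Real.rpow_mul (by positivity)]
  norm_num

lemma abs_sub_le_dK (p q : EuclideanSpace ℝ (Fin (2 * n + 1))) {i : Fin (2 * n + 1)}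
    (hi : i ≠ tI n) : |p i - q i| ≤ dK n p q := by
  obtain ⟨i, rfl⟩ := Fin.exists_castSucc_eq.mpr hi
  refine le_of_sq_le_sq ?_ (dK_nonneg n p q)
  rw [sq_abs]
  refine (Finset.single_le_sum (f := fun i : Fin (2 * n) ↦ (p i.castSucc - q i.castSucc) ^ 2)
    (fun i _ ↦ sq_nonneg _) (Finset.mem_univ i)).trans (le_of_sq_le_sq ?_ (sq_nonneg _))
  rw [← pow_mul, dK_pow_four]
  exact le_add_of_nonneg_right (sq_nonneg _)

lemma abs_contactForm_sub_le_dK_sq (p q : EuclideanSpace ℝ (Fin (2 * n + 1))) :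
    |contactForm n q.ofLp (p.ofLp - q.ofLp)| ≤ dK n p q ^ 2 := by
  refine abs_le_of_sq_le_sq ?_ (sq_nonneg _)
  rw [← pow_mul, dK_pow_four]
  exact le_add_of_nonneg_left (sq_nonneg _)

lemma abs_apply_tI_le (w v : Fin (2 * n + 1) → ℝ) :
    |v (tI n)| ≤ |contactForm n w v| + 4 * n * ‖w‖ * ‖Function.update v (tI n) 0‖ := by
  set h := Function.update v (tI n) 0
  have hv : v = v (tI n) • Pi.single (tI n) 1 + h := by
    ext i
    obtain rfl | hi := eq_or_ne i (tI n) <;> simp [h, *]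
  have hsplit : contactForm n w v = v (tI n) + contactForm n w h := by
    nth_rw 1 [hv]
    rw [map_add, map_smul, contactForm_single_tI, smul_eq_mul, mul_one]
  have hhoriz : contactForm n w h = (contactForm n w - contactForm n 0) h := by
    simp [contactForm_apply 0, h]
  calc |v (tI n)| = |contactForm n w v - contactForm n w h| := by rw [hsplit, add_sub_cancel_right]
    _ ≤ |contactForm n w v| + |contactForm n w h| := abs_sub _ _
    _ ≤ |contactForm n w v| + 4 * n * ‖w‖ * ‖h‖ := by
      rw [hhoriz]
      gcongr
      refine (contactForm n w - contactForm n 0).le_of_opNorm_le ?_ h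
      simpa using norm_contactForm_sub_le w 0

lemma norm_sub_le_dK (p q : EuclideanSpace ℝ (Fin (2 * n + 1))) :
    ‖p.ofLp - q.ofLp‖ ≤ dK n p q ^ 2 + (1 + 4 * n * ‖q.ofLp‖) * dK n p q := by
  set d := dK n p q
  have hd : 0 ≤ d := dK_nonneg n p q
  have hh : ‖Function.update (p.ofLp - q.ofLp) (tI n) 0‖ ≤ d :=
    (pi_norm_le_iff_of_nonneg hd).mpr fun i ↦ by
      obtain rfl | hi := eq_or_ne i (tI n)
      · simpa using hd
      · simpa [hi] using abs_sub_le_dK p q hi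
  have hrest : 0 ≤ 4 * n * ‖q.ofLp‖ * d := by positivity
  refine (pi_norm_le_iff_of_nonneg (by positivity)).mpr fun i ↦ ?_
  rw [Real.norm_eq_abs]
  obtain rfl | hi := eq_or_ne i (tI n)
  · calc |(p.ofLp - q.ofLp) (tI n)|
        ≤ |contactForm n q.ofLp (p.ofLp - q.ofLp)| + 4 * n * ‖q.ofLp‖ *
            ‖Function.update (p.ofLp - q.ofLp) (tI n) 0‖ := abs_apply_tI_le _ _
      _ ≤ d ^ 2 + 4 * n * ‖q.ofLp‖ * d := by
        gcongr
        exact abs_contactForm_sub_le_dK_sq p q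
      _ ≤ d ^ 2 + (1 + 4 * n * ‖q.ofLp‖) * d := by linarith
  · calc |(p.ofLp - q.ofLp) i| ≤ d := abs_sub_le_dK p q hi
      _ ≤ d ^ 2 + (1 + 4 * n * ‖q.ofLp‖) * d := by linarith [sq_nonneg d]

lemma norm_sub_le_mul_dK {p q : EuclideanSpace ℝ (Fin (2 * n + 1))} {B R : ℝ}
    (hB : dK n p q ≤ B) (hR : ‖q.ofLp‖ ≤ R) :
    ‖p.ofLp - q.ofLp‖ ≤ (B + (1 + 4 * n * R)) * dK n p q := by
  refine (norm_sub_le_dK p q).trans ?_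
  rw [sq, ← add_mul]
  exact mul_le_mul_of_nonneg_right (add_le_add hB (by gcongr)) (dK_nonneg n p q)

lemma not_injective_of_dK_le {u : (Fin (n + 1) → ℝ) → EuclideanSpace ℝ (Fin (2 * n + 1))}
    {γ B C : ℝ} (hγ : ((n : ℝ) + 1) / (n + 2) < γ) (hγ₁ : γ ≤ 1)
    (hbdd : ∀ p q, dK n (u q) (u p) ≤ B) (hhold : ∀ p q, dK n (u q) (u p) ≤ C * dist q p ^ γ) :
    ¬ Function.Injective u := by
  have hB : 0 ≤ B := (dK_nonneg n _ _).trans (hbdd 0 0)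
  obtain ⟨R, hR⟩ : ∃ R, ∀ p, ‖(u p).ofLp‖ ≤ R := by
    refine ⟨(B + (1 + 4 * n * ‖(u 0).ofLp‖)) * B + ‖(u 0).ofLp‖, fun p ↦ ?_⟩
    refine (norm_le_norm_sub_add _ (u 0).ofLp).trans (add_le_add_left ?_ _)
    refine (norm_sub_le_mul_dK (hbdd 0 p) le_rfl).trans ?_
    gcongr
    exact hbdd 0 p
  have hR₀ : 0 ≤ R := (norm_nonneg _).trans (hR 0)
  have hnorm (p q) :
      ‖(u q).ofLp - (u p).ofLp‖ ≤ (B + (1 + 4 * n * R)) * C * dist q p ^ γ := by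
    refine (norm_sub_le_mul_dK (hbdd p q) (hR p)).trans ?_
    exact (mul_le_mul_of_nonneg_left (hhold p q) (by positivity)).trans_eq (mul_assoc _ _ _).symm
  have hcontact (p q) : |contactForm n (u p).ofLp ((u q).ofLp - (u p).ofLp)| ≤
      C ^ 2 * dist q p ^ (2 * γ) := by
    refine (abs_contactForm_sub_le_dK_sq _ _).trans ?_
    rw [mul_comm 2 γ, Real.rpow_mul dist_nonneg, Real.rpow_two, ← mul_pow]
    gcongr
    exacts [dK_nonneg n _ _, hhold p q]
  intro hinj
  exact not_injective_of_holder (u := fun p ↦ (u p).ofLp) ((sq_nonneg C).trans (le_max_right _ _))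
    hγ hγ₁ (fun p q ↦ (hnorm p q).trans (by gcongr; exact le_max_left _ _))
    (fun p q ↦ (hcontact p q).trans (by gcongr; exact le_max_right _ _))
    ((WithLp.ofLp_injective 2).comp hinj)

end Koranyi

section Chart

lemma lipschitzWith_arctan : LipschitzWith 1 Real.arctan := by
  refine lipschitzWith_of_nnnorm_deriv_le Real.differentiable_arctan fun x ↦ ?_
  rw [← NNReal.coe_le_coe, coe_nnnorm, Real.deriv_arctan, Real.norm_of_nonneg (by positivity)]
  exact div_le_one_of_le₀ (by nlinarith [sq_nonneg x]) (by positivity)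

lemma exists_lipschitzWith_injective_forall_mem {E : Type*} [NormedAddCommGroup E]
    [NormedSpace ℝ E] {k : ℕ} (hk : k ≤ Module.rank ℝ E) {x₀ : E} {s : Set E} (hs : s ∈ 𝓝 x₀) :
    ∃ K, ∃ φ : (Fin k → ℝ) → E, LipschitzWith K φ ∧ Function.Injective φ ∧ ∀ p, φ p ∈ s := by
  obtain ⟨v, hv⟩ := exists_linearIndependent_of_le_rank hk
  obtain ⟨ε, hε, hεs⟩ := Metric.mem_nhds_iff.mp hs
  let L := (Fintype.linearCombination ℝ v).toContinuousLinearMap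
  have hL : Function.Injective L := hv.fintypeLinearCombination_injective
  let a (p : Fin k → ℝ) : Fin k → ℝ := fun i ↦ Real.arctan (p i)
  have ha : LipschitzWith 1 a := .of_dist_le_mul fun p q ↦
    (dist_pi_le_iff (by positivity)).mpr fun i ↦ (lipschitzWith_arctan.dist_le_mul _ _).trans
      (mul_le_mul_of_nonneg_left (dist_le_pi_dist p q i) zero_le_one)
  have ha_inj : Function.Injective a := fun p q h ↦
    funext fun i ↦ Real.arctan_injective (congrFun h i)
  have ha_le (p) : ‖a p‖ ≤ 2 := (pi_norm_le_iff_of_nonneg zero_le_two).mpr fun i ↦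
    abs_le.mpr ⟨by linarith [Real.neg_pi_div_two_lt_arctan (p i), Real.pi_le_four],
      by linarith [Real.arctan_lt_pi_div_two (p i), Real.pi_le_four]⟩
  set r := ε / (‖L‖ * 2 + 1)
  have hr : 0 < r := by positivity
  refine ⟨_, fun p ↦ x₀ + (r • L) (a p),
    (LipschitzWith.const x₀).add ((r • L).lipschitz.comp ha),
    (add_right_injective x₀).comp ((smul_right_injective E hr.ne').comp (hL.comp ha_inj)),
    fun p ↦ hεs ?_⟩
  rw [mem_ball, dist_eq_norm, add_sub_cancel_left, smul_apply, norm_smul,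
    Real.norm_of_nonneg hr.le]
  calc r * ‖L (a p)‖ ≤ r * (‖L‖ * 2) := by
        gcongr
        exact L.le_opNorm_of_le (ha_le p)
    _ < r * (‖L‖ * 2 + 1) := by gcongr; exact lt_add_one _
    _ = ε := div_mul_cancel₀ ε (by positivity)

end Chart

theorem stmt1_general {n : ℕ} {E : Type*} [NormedAddCommGroup E] [NormedSpace ℝ E]
    (hE : (n : Cardinal) + 1 ≤ Module.rank ℝ E) {γ C : ℝ}
    {f : E → EuclideanSpace ℝ (Fin (2 * n + 1))} {x₀ : E} {s : Set E} (hs : s ∈ 𝓝 x₀)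
    (hf : InjOn f s) (hhold : ∀ x ∈ s, ∀ y ∈ s, dK n (f x) (f y) ≤ C * dist x y ^ γ) :
    γ ≤ ((n : ℝ) + 1) / (n + 2) := by
  by_contra! hγ
  obtain ⟨K, φ, hφ, hφinj, hφs⟩ := exists_lipschitzWith_injective_forall_mem
    (k := n + 1) (mod_cast hE) (Filter.inter_mem hs (closedBall_mem_nhds x₀ one_half_pos))
  have hγ₀ : 0 < γ := lt_trans (by positivity) hγ
  have hle_one (p q) : dist (φ q) (φ p) ≤ 1 :=
    (dist_triangle_right _ _ x₀).trans (by linarith [(hφs q).2.out, (hφs p).2.out])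
  have hdK (p q) : dK n (f (φ q)) (f (φ p)) ≤ |C| * dist (φ q) (φ p) ^ γ :=
    (hhold _ (hφs q).1 _ (hφs p).1).trans (by gcongr; exact le_abs_self C)
  refine not_injective_of_dK_le (u := f ∘ φ) (γ := min γ 1) (B := |C|) (C := |C| * K ^ min γ 1)
    (lt_min hγ ?_) (min_le_right _ _) (fun p q ↦ (hdK p q).trans ?_)
    (fun p q ↦ (hdK p q).trans ?_) fun p q h ↦ hφinj (hf (hφs p).1 (hφs q).1 h)
  · rw [div_lt_one (by positivity)]
    linarith
  · exact mul_le_of_le_one_right (abs_nonneg C)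
      (Real.rpow_le_one dist_nonneg (hle_one p q) hγ₀.le)
  · rw [mul_assoc, ← Real.mul_rpow K.coe_nonneg dist_nonneg]
    gcongr
    exact (Real.rpow_le_rpow_of_exponent_ge' dist_nonneg (hle_one p q) (by positivity)
      (min_le_left _ _)).trans (Real.rpow_le_rpow dist_nonneg (hφ.dist_le_mul q p) (by positivity))

/-- Gromov's non-embedding theorem.
Every topological embedding `f : ℝ^m → ℝ^{2n+1}`, `m ≥ n+1`, which is locally `γ`-Hölder
continuous as a map into the Heisenberg group `ℍ^n`, satisfies `γ ≤ (n+1)/(n+2)`. -/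
theorem stmt1 (n m : ℕ) (hn : 1 ≤ n) (hm : n + 1 ≤ m) (γ : ℝ) (hγ0 : 0 < γ) (hγ1 : γ ≤ 1)
    (f : EuclideanSpace ℝ (Fin m) → EuclideanSpace ℝ (Fin (2*n+1)))
    (hemb : IsEmbedding f)
    (hhold : ∀ K : Set (EuclideanSpace ℝ (Fin m)), IsCompact K →
      ∃ C : ℝ, ∀ x ∈ K, ∀ y ∈ K, dK n (f x) (f y) ≤ C * dist x y ^ γ) :
    γ ≤ ((n:ℝ)+1)/((n:ℝ)+2) :=
  have ⟨_, hC⟩ := hhold (closedBall 0 1) (isCompact_closedBall 0 1)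
  stmt1_general (by rw [← Module.finrank_eq_rank, finrank_euclideanSpace_fin]; exact_mod_cast hm)
    (closedBall_mem_nhds 0 one_pos) hemb.injective.injOn hC
end

section
/- Let n ≥ 1 and γ > 2n/(2n+1). There is no continuous injective map f : S^{2n} → ℝ^{2n+1} (S^{2n} the unit sphere in ℝ^{2n+1}) which is γ-Hölder continuous as a map into the Heisenberg group ℍ^n, i.e. such that d_K(f(x), f(y)) ≤ C·|x−y|^γ for some constant C and all x, y ∈ S^{2n}. -/
open Metric Set MeasureTheory Topology

/-!
Call a set small if for every `ε > 0` and all large `m` it is covered by at most `ε m^{2n+1}`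
Korányi balls of radius `1/m`. The image `K` of `S^{2n}` under a `γ`-Hölder map needs only
`O(m^{2n/γ})` such balls, so it is small when `γ > 2n/(2n+1)`.

A closed small set `K` does not separate `ℍ^n`. Let `A` be open with frontier in `K` and let `w` be
horizontal. A point that right translation by `w/m` moves out of `A` lies within distance `O(1/m)`
of `K`, and since a Korányi ball of radius `1/m` has volume `O(m^{-(2n+2)})`, these points have
measure `o(1/m)`. The translation by `w = (w/m)^m` thus moves only a null subset of `A` out of `A`.
Horizontal elements generate `ℍ^n`, so the same holds for every right translation; but if `Kᶜ` were
the disjoint union of nonempty open sets `A` and `B`, some right translation would carry a nonempty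
open subset of `A` into `B`.

By Jordan–Brouwer separation, however, the image of an injective continuous map
`S^{2n} → ℝ^{2n+1}` has disconnected complement.
-/

section VolumePolynomial

lemma exists_polynomial_eval_eq_integral {α : Type*} [MeasurableSpace α] {μ : Measure α}
    {F : ℝ → α → ℝ} {d : ℕ} (hF : ∀ t, Integrable (F t) μ)
    (hpoly : ∀ x, ∃ p : Polynomial ℝ, p.natDegree ≤ d ∧ ∀ t, p.eval t = F t x) :
    ∃ p : Polynomial ℝ, ∀ t, p.eval t = ∫ x, F t x ∂μ := by
  let s := Finset.range (d + 1)
  let v : ℕ → ℝ := Nat.cast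
  have hv : InjOn v s := Nat.cast_injective.injOn
  refine ⟨Lagrange.interpolate s v fun i ↦ ∫ x, F (v i) x ∂μ, fun t ↦ ?_⟩
  have hinterp : ∀ x, F t x = ∑ i ∈ s, F (v i) x * (Lagrange.basis s v i).eval t := by
    intro x
    obtain ⟨p, hdeg, hp⟩ := hpoly x
    have hlt : p.degree < s.card := by
      rw [Finset.card_range]
      exact Polynomial.degree_le_natDegree.trans_lt (by exact_mod_cast Nat.lt_succ_of_le hdeg)
    rw [← hp, Lagrange.eq_interpolate hv hlt]
    simp only [Lagrange.interpolate_apply, Polynomial.eval_finsetSum, Polynomial.eval_mul,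
      Polynomial.eval_C, hp]
  simp only [hinterp, Lagrange.interpolate_apply, Polynomial.eval_finsetSum, Polynomial.eval_mul,
    Polynomial.eval_C]
  rw [integral_finsetSum s fun i _ ↦ (hF (v i)).mul_const _]
  simp only [integral_mul_const]

lemma exists_polynomial_eval_eq_det_one_add_smul {R M : Type*} [CommRing R] [Nontrivial R]
    [AddCommGroup M] [Module R M] [Module.Free R M] [Module.Finite R M] (A : M →ₗ[R] M) :
    ∃ p : Polynomial R, p.natDegree ≤ Module.finrank R M ∧
      ∀ t : R, p.eval t = LinearMap.det (1 + t • A) := by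
  classical
  let b := Module.finBasis R M
  let B := LinearMap.toMatrix b b A
  refine ⟨((Polynomial.X : Polynomial R) • B.map Polynomial.C +
    (1 : Matrix _ _ R).map Polynomial.C).det, ?_, fun t ↦ ?_⟩
  · simpa using Polynomial.natDegree_det_X_add_C_le B 1
  · rw [← Polynomial.coe_evalRingHom, RingHom.map_det, ← LinearMap.det_toMatrix b]
    congr 1
    ext i j
    have h1 : LinearMap.toMatrix b b (1 + t • A) = 1 + t • B := by
      rw [map_add, map_smul, LinearMap.toMatrix_one]
    rw [h1]
    obtain rfl | hij := eq_or_ne i j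
    · simp [mul_comm t, add_comm (1 : R)]
    · simp [hij, mul_comm t]

variable {E : Type*} [NormedAddCommGroup E] [NormedSpace ℝ E]

lemma injOn_add_smul_of_lipschitzOnWith {u : E → E} {s : Set E} {C : NNReal}
    (hu : LipschitzOnWith C u s) {t : ℝ} (ht : |t| * C < 1) : InjOn (fun x ↦ x + t • u x) s := by
  intro x hx y hy (hxy : x + t • u x = y + t • u y)
  have hsub : x - y = t • (u y - u x) := by
    rw [smul_sub, sub_eq_sub_iff_add_eq_add, hxy, add_comm]
  have hle : ‖x - y‖ ≤ |t| * C * ‖x - y‖ :=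
    calc ‖x - y‖ = |t| * ‖u x - u y‖ := by
          rw [hsub, norm_smul, Real.norm_eq_abs, norm_sub_rev]
      _ ≤ |t| * (C * ‖x - y‖) := by
          gcongr
          exact hu.norm_sub_le hx hy
      _ = |t| * C * ‖x - y‖ := by ring
  by_contra hne
  have hpos : 0 < ‖x - y‖ := norm_pos_iff.2 (sub_ne_zero.2 hne)
  nlinarith

lemma mapsTo_add_smul_ball {u : E → E} {R t : ℝ} (hball : ∀ x, ‖x + u x‖ ≤ R) (ht0 : 0 ≤ t)
    (ht1 : t < 1) : MapsTo (fun x ↦ x + t • u x) (ball 0 R) (ball 0 R) := by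
  intro x hx
  rw [mem_ball_zero_iff] at hx ⊢
  calc ‖x + t • u x‖ = ‖(1 - t) • x + t • (x + u x)‖ := by congr 1; module
    _ ≤ (1 - t) * ‖x‖ + t * ‖x + u x‖ := by
      refine (norm_add_le _ _).trans_eq ?_
      rw [norm_smul, norm_smul, Real.norm_of_nonneg (sub_nonneg.2 ht1.le),
        Real.norm_of_nonneg ht0]
    _ ≤ (1 - t) * ‖x‖ + t * R := by
      gcongr
      exact hball x
    _ < (1 - t) * R + t * R := by
      gcongr
    _ = R := by ring

lemma image_ball_eq_ball [ProperSpace E] {F : E → E} {c : E} {R : ℝ} (hR : 0 < R)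
    (hF : ContinuousOn F (closedBall c R)) (hball : MapsTo F (ball c R) (ball c R))
    (hsphere : MapsTo F (sphere c R) (sphere c R)) (hopen : IsOpen (F '' ball c R)) :
    F '' ball c R = ball c R := by
  refine hball.image_subset.antisymm <|
    (isPreconnected_ball (x := c) (r := R)).subset_of_closure_inter_subset hopen
      ⟨F c, hball (mem_ball_self hR), mem_image_of_mem F (mem_ball_self hR)⟩ ?_
  rintro y ⟨hy, hyball⟩
  have hclosure : closure (F '' ball c R) ⊆ F '' closedBall c R :=
    closure_minimal (image_mono ball_subset_closedBall)
      ((isCompact_closedBall c R).image_of_continuousOn hF).isClosed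
  obtain ⟨x, hx, rfl⟩ := hclosure hy
  refine ⟨x, (mem_closedBall.1 hx).lt_of_ne fun hxR ↦ ?_, rfl⟩
  exact (mem_ball.1 hyball).ne (mem_sphere.1 (hsphere hxR))

lemma eventually_forall_det_id_add_smul_pos {X : Type*} [TopologicalSpace X]
    {A : X → E →L[ℝ] E} (hA : Continuous A) {K : Set X} (hK : IsCompact K) :
    ∀ᶠ t in 𝓝 (0 : ℝ), ∀ x ∈ K, 0 < (ContinuousLinearMap.id ℝ E + t • A x).det := by
  have hdet : Continuous fun z : ℝ × X ↦ (ContinuousLinearMap.id ℝ E + z.1 • A z.2).det :=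
    ContinuousLinearMap.continuous_det.comp (by fun_prop)
  refine hK.eventually_forall_of_forall_eventually fun x _ ↦
    hdet.continuousAt.eventually (lt_mem_nhds ?_)
  simp [ContinuousLinearMap.det]

variable [FiniteDimensional ℝ E]

lemma isOpen_image_of_det_fderiv_ne_zero {F : E → E} {F' : E → E →L[ℝ] E} {s : Set E}
    (hs : IsOpen s) (hF : ∀ x ∈ s, HasStrictFDerivAt F (F' x) x)
    (hdet : ∀ x ∈ s, (F' x).det ≠ 0) : IsOpen (F '' s) := by
  have : CompleteSpace E := FiniteDimensional.complete ℝ E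
  rw [isOpen_iff_mem_nhds]
  rintro _ ⟨x, hx, rfl⟩
  have hmap : Filter.map F (𝓝 x) = 𝓝 (F x) := HasStrictFDerivAt.map_nhds_eq_of_equiv
    (f' := (F' x).toContinuousLinearEquivOfDetNeZero (hdet x hx)) (hF x hx)
  rw [← hmap]
  exact Filter.image_mem_map (hs.mem_nhds hx)

variable [MeasurableSpace E] [BorelSpace E] (μ : Measure E) [μ.IsAddHaarMeasure]

lemma setIntegral_det_fderiv_eq_measureReal_image {F : E → E} {F' : E → E →L[ℝ] E} {s : Set E}
    (hs : MeasurableSet s) (hF : ∀ x ∈ s, HasFDerivWithinAt F (F' x) s x) (hinj : InjOn F s)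
    (hdet : ∀ x ∈ s, 0 ≤ (F' x).det) : ∫ x in s, (F' x).det ∂μ = μ.real (F '' s) := by
  have hchange := integral_image_eq_integral_abs_det_fderiv_smul μ hs hF hinj fun _ ↦ (1 : ℝ)
  simp only [integral_const, measureReal_restrict_apply_univ, smul_eq_mul, mul_one] at hchange
  rw [hchange]
  exact setIntegral_congr_fun hs fun x hx ↦ (abs_of_nonneg (hdet x hx)).symm

lemma exists_polynomial_eval_eq_setIntegral_det {A : E → E →L[ℝ] E} (hA : Continuous A)
    {s : Set E} (hs : Bornology.IsBounded s) : ∃ p : Polynomial ℝ, ∀ t : ℝ,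
      p.eval t = ∫ x in s, (ContinuousLinearMap.id ℝ E + t • A x).det ∂μ := by
  have : ProperSpace E := FiniteDimensional.proper_real E
  refine exists_polynomial_eval_eq_integral (fun t ↦ ?_)
    fun x ↦ exists_polynomial_eval_eq_det_one_add_smul (A x : E →ₗ[ℝ] E)
  have hdet : Continuous fun x ↦ (ContinuousLinearMap.id ℝ E + t • A x).det :=
    ContinuousLinearMap.continuous_det.comp (by fun_prop)
  exact (hdet.continuousOn.integrableOn_compact hs.isCompact_closure).mono_set subset_closure

/-- Inverse function theorem, connectedness and change of variables: for small `t` the map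
`x ↦ x + t • u x` permutes the ball, so the integral of its Jacobian is the volume of the ball. -/
lemma eventually_setIntegral_det_id_add_smul_fderiv {u : E → E} {R : ℝ} (hR : 0 < R)
    (hu : ContDiff ℝ 1 u) (hball : ∀ x, ‖x + u x‖ ≤ R) (hsphere : ∀ x, ‖x‖ = R → u x = 0) :
    ∀ᶠ t in 𝓝[>] (0 : ℝ),
      ∫ x in ball 0 R, (ContinuousLinearMap.id ℝ E + t • fderiv ℝ u x).det ∂μ =
        μ.real (ball 0 R) := by
  have : ProperSpace E := FiniteDimensional.proper_real E
  obtain ⟨C, hC⟩ := (hu.contDiffOn (s := closedBall (0 : E) R)).exists_lipschitzOnWith one_ne_zero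
    (convex_closedBall _ _) (isCompact_closedBall _ _)
  have hlip : ∀ᶠ t in 𝓝 (0 : ℝ), |t| * (C : ℝ) < 1 :=
    (by fun_prop : Continuous fun t : ℝ ↦ |t| * (C : ℝ)).continuousAt.eventually
      (gt_mem_nhds (by simp))
  have hjac := eventually_forall_det_id_add_smul_pos (hu.continuous_fderiv one_ne_zero)
    (isCompact_closedBall (0 : E) R)
  filter_upwards [nhdsWithin_le_nhds hlip, nhdsWithin_le_nhds hjac,
    nhdsWithin_le_nhds (gt_mem_nhds one_pos), self_mem_nhdsWithin] with t htC hdet ht1 ht0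
  replace hdet : ∀ x ∈ ball (0 : E) R, 0 < (ContinuousLinearMap.id ℝ E + t • fderiv ℝ u x).det :=
    fun x hx ↦ hdet x (ball_subset_closedBall hx)
  have hderiv : ∀ x, HasStrictFDerivAt (fun x ↦ x + t • u x)
      (ContinuousLinearMap.id ℝ E + t • fderiv ℝ u x) x := fun x ↦
    (hasStrictFDerivAt_id x).add ((hu.contDiffAt.hasStrictFDerivAt one_ne_zero).const_smul t)
  have hcont : Continuous fun x ↦ x + t • u x :=
    continuous_id.add (hu.continuous.const_smul t)
  have himage : (fun x ↦ x + t • u x) '' ball 0 R = ball 0 R := by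
    refine image_ball_eq_ball hR hcont.continuousOn
      (mapsTo_add_smul_ball hball ht0.le ht1) (fun x hx ↦ ?_)
      (isOpen_image_of_det_fderiv_ne_zero isOpen_ball (fun x _ ↦ hderiv x)
        fun x hx ↦ (hdet x hx).ne')
    simpa [hsphere x (mem_sphere_zero_iff_norm.1 hx)] using hx
  rw [setIntegral_det_fderiv_eq_measureReal_image μ measurableSet_ball
    (fun x _ ↦ (hderiv x).hasFDerivAt.hasFDerivWithinAt)
    ((injOn_add_smul_of_lipschitzOnWith hC htC).mono ball_subset_closedBall)
    (fun x hx ↦ (hdet x hx).le), himage]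

end VolumePolynomial

section NoRetraction

variable {E : Type*} [NormedAddCommGroup E] [InnerProductSpace ℝ E] [FiniteDimensional ℝ E]

lemma det_fderiv_eq_zero_of_norm_const {r : E → E} {R : ℝ} (hR : 0 < R)
    (hnorm : ∀ x, ‖r x‖ = R) {x : E} (hr : DifferentiableAt ℝ r x) : (fderiv ℝ r x).det = 0 := by
  by_contra hdet
  let e := (fderiv ℝ r x).toContinuousLinearEquivOfDetNeZero hdet
  have hderiv : HasFDerivAt (fun y ↦ ‖r y‖ ^ 2) (2 • (innerSL ℝ (r x)).comp (fderiv ℝ r x)) x :=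
    hr.hasFDerivAt.norm_sq
  simp only [hnorm] at hderiv
  have hzero := congrArg (fun L : E →L[ℝ] ℝ ↦ L (e.symm (r x)))
    (hderiv.unique (hasFDerivAt_const _ _))
  have he : fderiv ℝ r x (e.symm (r x)) = r x := e.apply_symm_apply (r x)
  simp [he, hnorm, hR.ne'] at hzero

/-- Milnor–Rogers argument: if `r` fixed the sphere, the integral of `det (D(id + t • (r - id)))`
over the ball would be a polynomial in `t`, constant for small `t > 0` but zero at `t = 1`. -/
lemma exists_ne_of_contDiff_of_norm_const {r : E → E} {R : ℝ} (hR : 0 < R)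
    (hr : ContDiff ℝ 1 r) (hnorm : ∀ x, ‖r x‖ = R) : ∃ x, ‖x‖ = R ∧ r x ≠ x := by
  borelize E
  by_contra! hsphere
  have hu : ContDiff ℝ 1 fun x ↦ r x - x := hr.sub contDiff_id
  obtain ⟨p, hp⟩ := exists_polynomial_eval_eq_setIntegral_det volume
    (hu.continuous_fderiv one_ne_zero) (isBounded_ball (x := (0 : E)) (r := R))
  have hsmall := eventually_setIntegral_det_id_add_smul_fderiv volume hR hu
    (fun x ↦ by rw [add_sub_cancel, hnorm]) (fun x hx ↦ by rw [hsphere x hx, sub_self])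
  obtain ⟨δ, hδ, hδp⟩ := mem_nhdsGT_iff_exists_Ioo_subset.1 hsmall
  have hconst : p = Polynomial.C (volume.real (ball (0 : E) R)) :=
    Polynomial.eq_of_infinite_eval_eq _ _ <| (Ioo_infinite hδ).mono fun t ht ↦ by
      rw [mem_ofPred_eq, hp, Polynomial.eval_C]
      exact hδp ht
  have hdet (x : E) :
      (ContinuousLinearMap.id ℝ E + (1 : ℝ) • fderiv ℝ (fun y ↦ r y - y) x).det = 0 := by
    rw [fderiv_fun_sub (hr.differentiable one_ne_zero x) differentiableAt_fun_id, fderiv_fun_id,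
      one_smul, add_sub_cancel,
      det_fderiv_eq_zero_of_norm_const hR hnorm (hr.differentiable one_ne_zero x)]
  have hvol : volume.real (ball (0 : E) R) = 0 := by
    rw [← Polynomial.eval_C (a := volume.real (ball (0 : E) R)) (x := 1), ← hconst, hp]
    simp only [hdet, integral_zero]
  have hvol_pos : 0 < volume.real (ball (0 : E) R) :=
    ENNReal.toReal_pos (measure_ball_pos _ _ hR).ne' measure_ball_lt_top.ne
  exact hvol_pos.ne' hvol

end NoRetraction

section Homogeneity

lemma abs_max_zero_one_sub_dist_div_sub_le {X : Type*} [PseudoMetricSpace X] {ρ : ℝ} (hρ : 0 < ρ)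
    (x z w : X) : |max 0 (1 - dist z x / ρ) - max 0 (1 - dist w x / ρ)| ≤ dist z w / ρ := calc
  |max 0 (1 - dist z x / ρ) - max 0 (1 - dist w x / ρ)|
    ≤ |(1 - dist z x / ρ) - (1 - dist w x / ρ)| := by
      simpa using abs_max_sub_max_le_max 0 (1 - dist z x / ρ) 0 (1 - dist w x / ρ)
  _ = |dist w x - dist z x| / ρ := by
    rw [← abs_of_pos hρ, ← abs_div, abs_of_pos hρ]
    ring_nf
  _ ≤ dist z w / ρ := by
    gcongr
    rw [dist_comm z w]
    exact abs_dist_sub_le w z x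

variable {E : Type*} [NormedAddCommGroup E] [NormedSpace ℝ E]

lemma isConnected_ball_diff_of_countable (hE : 1 < Module.rank ℝ E) {s : Set E}
    (hs : s.Countable) (x : E) {r : ℝ} (hr : 0 < r) : IsConnected (ball x r \ s) := by
  let e := OpenPartialHomeomorph.univBall x r
  have hinj : InjOn e (e ⁻¹' s) :=
    e.injOn.mono fun _ _ ↦ OpenPartialHomeomorph.univBall_source x r ▸ mem_univ _
  have himage : e '' (e ⁻¹' s)ᶜ = ball x r \ s := by
    rw [← preimage_compl, image_preimage_eq_inter_range, ← image_univ,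
      ← OpenPartialHomeomorph.univBall_source x r, e.image_source_eq_target,
      OpenPartialHomeomorph.univBall_target x hr, inter_comm, ← sdiff_eq]
  rw [← himage]
  exact ((hs.preimage_of_injOn hinj).isConnected_compl_of_one_lt_rank hE).image _
    (OpenPartialHomeomorph.continuous_univBall x r).continuousOn

lemma isPreconnected_diff_of_countable (hE : 1 < Module.rank ℝ E) {V s : Set E}
    (hV : IsPreconnected V) (hVo : IsOpen V) (hs : s.Countable) : IsPreconnected (V \ s) := by
  refine isPreconnected_of_forall_constant fun f hf x hx y hy ↦ ?_
  have : Nontrivial E := rank_pos_iff_nontrivial.1 (one_pos.trans hE)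
  have hne (z : E) : (𝓝[sᶜ] z).NeBot := mem_closure_iff_nhdsWithin_neBot.1 (hs.dense_compl ℝ z)
  have hlocal : ∀ z ∈ V, ∃ b, ∀ᶠ w in 𝓝 z, ∀ᶠ w' in 𝓝[sᶜ] w, f w' = b := by
    intro z hz
    obtain ⟨r, hr, hrV⟩ := Metric.isOpen_iff.1 hVo z hz
    have hconn := isConnected_ball_diff_of_countable hE hs z hr
    obtain ⟨a, ha⟩ := hconn.nonempty
    refine ⟨f a, Filter.eventually_of_mem (ball_mem_nhds z hr) fun w hw ↦ ?_⟩
    filter_upwards [self_mem_nhdsWithin, mem_nhdsWithin_of_mem_nhds (isOpen_ball.mem_nhds hw)]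
      with w' hw's hw'
    exact hconn.isPreconnected.constant (hf.mono (sdiff_subset_sdiff_left hrV)) ⟨hw', hw's⟩ ha
  obtain ⟨b, hxb, hyb⟩ : ∃ b, (∀ᶠ w in 𝓝[sᶜ] x, f w = b) ∧ ∀ᶠ w in 𝓝[sᶜ] y, f w = b := by
    refine hV.induction₂ (fun x y ↦ ∃ b, (∀ᶠ w in 𝓝[sᶜ] x, f w = b) ∧ ∀ᶠ w in 𝓝[sᶜ] y, f w = b)
      (fun z hz ↦ ?_) ?_ (fun _ _ _ _ ⟨b, h, h'⟩ ↦ ⟨b, h', h⟩) hx.1 hy.1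
    · obtain ⟨b, hb⟩ := hlocal z hz
      exact nhdsWithin_le_nhds (hb.mono fun w hw ↦ ⟨b, hb.self_of_nhds, hw⟩)
    · rintro u v w - - - ⟨b, hub, hvb⟩ ⟨b', hvb', hwb'⟩
      obtain ⟨a, rfl, rfl⟩ := (hvb.and hvb').exists
      exact ⟨_, hub, hwb'⟩
  rw [hxb.self_of_nhdsWithin hx.2, hyb.self_of_nhdsWithin hy.2]

variable [CompleteSpace E]

lemma exists_homeomorph_of_mem_ball {x y : E} {ρ : ℝ} (hy : y ∈ ball x ρ) :
    ∃ ψ : E ≃ₜ E, (∀ z ∉ ball x ρ, ψ z = z) ∧ ψ x = y := by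
  have hρ : 0 < ρ := pos_of_mem_ball hy
  let a : E → ℝ := fun z ↦ max 0 (1 - dist z x / ρ)
  let F : E → E := fun z ↦ z + a z • (y - x)
  let c : NNReal := ⟨dist y x / ρ, by positivity⟩
  have hc : c < 1 := NNReal.coe_lt_coe.1 ((div_lt_one hρ).2 hy)
  have hF : ApproximatesLinearOn F (ContinuousLinearEquiv.refl ℝ E : E →L[ℝ] E) univ c := by
    intro z _ w _
    calc ‖F z - F w - (z - w)‖ = |a z - a w| * dist y x := by
          rw [dist_eq_norm, ← Real.norm_eq_abs, ← norm_smul]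
          congr 1
          simp only [F]
          module
      _ ≤ dist z w / ρ * dist y x := by
          gcongr
          exact abs_max_zero_one_sub_dist_div_sub_le hρ x z w
      _ = dist y x / ρ * ‖z - w‖ := by
          rw [dist_eq_norm z w]
          ring
  have hN : Subsingleton E ∨
      c < ‖((ContinuousLinearEquiv.refl ℝ E).symm : E →L[ℝ] E)‖₊⁻¹ := by
    refine (subsingleton_or_nontrivial E).imp_right fun (_ : Nontrivial E) ↦ ?_
    have hid : ‖((ContinuousLinearEquiv.refl ℝ E).symm : E →L[ℝ] E)‖₊ = 1 :=
      NNReal.eq ContinuousLinearMap.norm_id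
    rwa [hid, inv_one]
  refine ⟨hF.toHomeomorph F hN, fun z hz ↦ ?_, ?_⟩
  · have haz : a z = 0 :=
      max_eq_left (sub_nonpos.2 ((one_le_div hρ).2 (not_lt.1 hz)))
    change z + a z • (y - x) = z
    rw [haz, zero_smul, add_zero]
  · change x + a x • (y - x) = y
    simp [a]

lemma exists_homeomorph_apply_eq_of_isPreconnected {V : Set E} (hV : IsPreconnected V)
    (hVo : IsOpen V) {p q : E} (hp : p ∈ V) (hq : q ∈ V) :
    ∃ ψ : E ≃ₜ E, (∀ z ∉ V, ψ z = z) ∧ ψ p = q := by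
  refine hV.induction₂ (fun p q ↦ ∃ ψ : E ≃ₜ E, (∀ z ∉ V, ψ z = z) ∧ ψ p = q) ?_ ?_ ?_ hp hq
  · intro x hx
    obtain ⟨ρ, hρ, hball⟩ := Metric.isOpen_iff.1 hVo x hx
    filter_upwards [mem_nhdsWithin_of_mem_nhds (ball_mem_nhds x hρ)] with y hy
    obtain ⟨ψ, hψ, hxy⟩ := exists_homeomorph_of_mem_ball hy
    exact ⟨ψ, fun z hz ↦ hψ z fun h ↦ hz (hball h), hxy⟩
  · rintro x y z - - - ⟨ψ, hψ, hxy⟩ ⟨ψ', hψ', hyz⟩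
    exact ⟨ψ.trans ψ', fun w hw ↦ by simp [hψ w hw, hψ' w hw], by simp [hxy, hyz]⟩
  · rintro x y - - ⟨ψ, hψ, hxy⟩
    exact ⟨ψ.symm, fun w hw ↦ by rw [ψ.symm_apply_eq, hψ w hw], by rw [ψ.symm_apply_eq, hxy]⟩

lemma exists_homeomorph_forall_notMem_of_finite (hE : 1 < Module.rank ℝ E) {K D Z : Set E}
    (hK : IsCompact K) (hconn : IsPreconnected Kᶜ) (hD : Bornology.IsBounded D)
    (hZ : Z.Finite) (hZK : Disjoint Z K) :
    ∃ ψ : E ≃ₜ E, (∀ z ∈ K, ψ z = z) ∧ ∀ z ∈ Z, ψ z ∉ D := by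
  have : Nontrivial E := rank_pos_iff_nontrivial.1 (one_pos.trans hE)
  induction Z, hZ using Set.Finite.induction_on with
  | empty => exact ⟨Homeomorph.refl E, by simp, by simp⟩
  | @insert p Z hpZ hZ ih =>
    rw [disjoint_insert_left] at hZK
    obtain ⟨ψ, hψK, hψZ⟩ := ih hZK.2
    have hfin : (ψ '' Z).Finite := hZ.image ψ
    obtain ⟨q, hq⟩ : ∃ q, q ∉ D ∪ (K ∪ ψ '' Z) := by
      by_contra! hall
      have hbdd : Bornology.IsBounded (D ∪ (K ∪ ψ '' Z)) :=
        hD.union (hK.isBounded.union hfin.isBounded)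
      rw [eq_univ_of_forall hall] at hbdd
      exact NormedSpace.unbounded_univ ℝ E hbdd
    simp only [mem_union, not_or] at hq
    have hpK : ψ p ∉ K := fun h ↦ hZK.1 (ψ.injective (hψK _ h) ▸ h)
    have hpψZ : ψ p ∉ ψ '' Z := fun h ↦ hpZ (ψ.injective.mem_set_image.1 h)
    obtain ⟨ψ', hψ', hpq⟩ := exists_homeomorph_apply_eq_of_isPreconnected
      (isPreconnected_diff_of_countable hE hconn hK.isClosed.isOpen_compl hfin.countable)
      (hK.isClosed.isOpen_compl.sdiff hfin.isClosed) ⟨hpK, hpψZ⟩ hq.2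
    refine ⟨ψ.trans ψ', fun z hz ↦ ?_, forall_mem_insert.2 ⟨?_, fun z hz ↦ ?_⟩⟩
    · rw [Homeomorph.trans_apply, hψK z hz, hψ' z fun h ↦ h.1 hz]
    · rw [Homeomorph.trans_apply, hpq]
      exact hq.1
    · rw [Homeomorph.trans_apply, hψ' (ψ z) fun h ↦ h.2 (mem_image_of_mem ψ hz)]
      exact hψZ z hz

end Homogeneity

section Zeros

variable {E : Type*} [NormedAddCommGroup E]

lemma exists_continuous_cutoff (R : ℝ) : ∃ a : E → ℝ, Continuous a ∧ (∀ x, a x ∈ Icc 0 1) ∧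
    (∀ x, ‖x‖ ≤ R → a x = 0) ∧ (∀ x, R < ‖x‖ → 0 < a x) ∧
      ∀ᶠ x in Bornology.cobounded E, a x = 1 := by
  refine ⟨fun x ↦ max 0 (min 1 (‖x‖ - R)), by fun_prop,
    fun x ↦ ⟨le_max_left _ _, max_le zero_le_one (min_le_left _ _)⟩,
    fun x hx ↦ max_eq_left ((min_le_right _ _).trans (sub_nonpos.2 hx)),
    fun x hx ↦ lt_max_of_lt_right (lt_min one_pos (sub_pos.2 hx)), ?_⟩
  refine Filter.hasBasis_cobounded_norm.eventually_iff.2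
    ⟨R + 1, trivial, fun x (hx : R + 1 ≤ ‖x‖) ↦ ?_⟩
  simp only [min_eq_left (le_sub_iff_add_le'.2 hx), max_eq_right zero_le_one]

variable [NormedSpace ℝ E]

lemma exists_continuous_radial_retraction {R : ℝ} (hR : 0 < R) : ∃ ρ : E → E, Continuous ρ ∧
    (∀ x, ρ x ∈ closedBall 0 R) ∧ (∀ x, ‖x‖ ≤ R → ρ x = x) ∧
      ∀ x, R ≤ ‖x‖ → ρ x = (R / ‖x‖) • x := by
  have hmax (x : E) : 0 < max R ‖x‖ := lt_max_of_lt_left hR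
  have hdiv : Continuous fun x : E ↦ R / max R ‖x‖ :=
    continuous_const.div (by fun_prop) fun x ↦ (hmax x).ne'
  refine ⟨fun x ↦ (R / max R ‖x‖) • x, hdiv.smul continuous_id, fun x ↦ ?_, fun x hx ↦ ?_,
    fun x hx ↦ ?_⟩
  · rw [mem_closedBall_zero_iff, norm_smul, Real.norm_of_nonneg (div_nonneg hR.le (hmax x).le),
      div_mul_comm, mul_le_iff_le_one_left hR, div_le_one (hmax x)]
    exact le_max_right _ _
  · simp only [max_eq_left hx, div_self hR.ne', one_smul]
  · simp only [max_eq_right hx]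

variable [FiniteDimensional ℝ E]

lemma exists_norm_lt_forall_det_fderiv_ne_zero {g : E → E} (hg : Differentiable ℝ g) {ε : ℝ}
    (hε : 0 < ε) : ∃ c, ‖c‖ < ε ∧ ∀ x, g x = c → (fderiv ℝ g x).det ≠ 0 := by
  borelize E
  have hnull := addHaar_image_eq_zero_of_det_fderivWithin_eq_zero (Measure.addHaar : Measure E)
    (s := {x | (fderiv ℝ g x).det = 0}) (f := g) (f' := fderiv ℝ g)
    (fun x _ ↦ (hg x).hasFDerivAt.hasFDerivWithinAt) (fun x hx ↦ hx)
  by_contra! h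
  refine (measure_ball_pos Measure.addHaar (0 : E) hε).ne' (measure_mono_null (fun c hc ↦ ?_) hnull)
  obtain ⟨x, rfl, hx⟩ := h c (mem_ball_zero_iff.1 hc)
  exact ⟨x, hx, rfl⟩

lemma finite_setOf_eq_of_det_fderiv_ne_zero {g : E → E} (hg : Differentiable ℝ g) {c : E}
    (hbdd : Bornology.IsBounded {x | g x = c})
    (hdet : ∀ x, g x = c → (fderiv ℝ g x).det ≠ 0) : {x | g x = c}.Finite := by
  by_contra hinf
  have : ProperSpace E := FiniteDimensional.proper_real E
  have hclosed : IsClosed {x | g x = c} := isClosed_eq hg.continuous continuous_const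
  obtain ⟨x, hxc, hx⟩ := Set.Infinite.exists_accPt_of_subset_isCompact hinf
    (isCompact_of_isClosed_isBounded hclosed hbdd) Subset.rfl
  have hne : ∀ᶠ z in 𝓝[≠] x, g z ≠ c := (hg x).hasFDerivAt.eventually_ne
    ⟨_, ((fderiv ℝ g x).toContinuousLinearEquivOfDetNeZero (hdet x hxc)).antilipschitz⟩
  rw [accPt_iff_frequently_nhdsNE] at hx
  exact hx (hne.mono fun z hz h ↦ hz h)

lemma exists_continuous_finite_zeros {G : E → E} (hG : Continuous G) {ε : ℝ} (hε : 0 < ε)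
    (hbound : ∀ᶠ x in Bornology.cobounded E, ε ≤ ‖G x‖) :
    ∃ h : E → E, Continuous h ∧ (∀ x, ‖h x - G x‖ < ε) ∧ {x | h x = 0}.Finite := by
  obtain ⟨g, hg, hgG, -⟩ := hG.exists_contDiff_approx 1
    (continuous_const (y := ε / 2)) (fun _ ↦ half_pos hε)
  have hgd : Differentiable ℝ g := hg.differentiable one_ne_zero
  obtain ⟨c, hc, hdet⟩ := exists_norm_lt_forall_det_fderiv_ne_zero hgd (half_pos hε)
  have hclose (x : E) : ‖g x - c - G x‖ < ε := calc
    ‖g x - c - G x‖ = ‖g x - G x - c‖ := by rw [sub_right_comm]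
    _ ≤ dist (g x) (G x) + ‖c‖ := dist_eq_norm (g x) (G x) ▸ norm_sub_le _ _
    _ < ε := by linarith [hgG x]
  have hbdd : Bornology.IsBounded {x | g x = c} := by
    rw [← Bornology.isCobounded_compl_iff]
    filter_upwards [hbound] with x hx (hgx : g x = c)
    have hlt := hclose x
    rw [hgx, sub_self, zero_sub, norm_neg] at hlt
    exact hx.not_gt hlt
  refine ⟨fun x ↦ g x - c, hg.continuous.sub continuous_const, hclose, ?_⟩
  simpa only [sub_eq_zero] using finite_setOf_eq_of_det_fderiv_ne_zero hgd hbdd hdet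

lemma exists_continuous_extension_one_le_norm [Nontrivial E] {X : Type*} [TopologicalSpace X]
    [CompactSpace X] {f : X → E} (hf : Continuous f) (hinj : Function.Injective f) {g : X → E}
    (hg : Continuous g) :
    ∃ G : E → E, Continuous G ∧ (∀ x, G (f x) = g x) ∧
      ∀ᶠ y in Bornology.cobounded E, 1 ≤ ‖G y‖ := by
  have : TietzeExtension E := TietzeExtension.of_tvs ℝ
  obtain ⟨G₀, hG₀⟩ := ContinuousMap.exists_extension
    (hf.isClosedEmbedding hinj) (⟨g, hg⟩ : C(X, E))
  obtain ⟨R, hR⟩ := (isCompact_range hf).isBounded.subset_closedBall (0 : E)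
  obtain ⟨e, he⟩ := exists_norm_eq E zero_le_one
  obtain ⟨a, ha, -, ha0, -, ha1⟩ := exists_continuous_cutoff (E := E) R
  refine ⟨fun y ↦ (1 - a y) • G₀ y + a y • e,
    ((continuous_const.sub ha).smul G₀.continuous).add (ha.smul continuous_const), fun x ↦ ?_, ?_⟩
  · have hGx : G₀ (f x) = g x := DFunLike.congr_fun hG₀ x
    simp [ha0 (f x) (mem_closedBall_zero_iff.1 (hR (mem_range_self x))), hGx]
  · filter_upwards [ha1] with y hy
    simp [hy, he]

end Zeros

section Separation

variable {E : Type*} [NormedAddCommGroup E] [InnerProductSpace ℝ E] [FiniteDimensional ℝ E]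

theorem exists_eq_zero_of_eventuallyEq_id_cobounded {G : E → E} (hG : Continuous G)
    (hid : G =ᶠ[Bornology.cobounded E] id) : ∃ x, G x = 0 := by
  by_contra! hG0
  obtain ⟨R₀, -, hR₀⟩ := Filter.hasBasis_cobounded_norm.eventually_iff.1 hid
  obtain ⟨R, hR0, hR⟩ : ∃ R > 0, R₀ < R := ⟨max R₀ 0 + 1, by positivity, by grind⟩
  have hclosed : IsClosed {x : E | R ≤ ‖x‖} := isClosed_le continuous_const continuous_norm
  have hopen : IsOpen {x : E | R₀ < ‖x‖} := isOpen_lt continuous_const continuous_norm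
  obtain ⟨g, hg, hgG, hgid, -⟩ := hG.exists_contDiff_approx_and_eqOn 1 hG.norm
    (fun x ↦ norm_pos_iff.2 (hG0 x)) hclosed
    (hopen.mem_nhdsSet.2 fun x (hx : R ≤ ‖x‖) ↦ hR.trans_le hx)
    (contDiff_id.contDiffOn.congr fun x (hx : R₀ < ‖x‖) ↦ hR₀ hx.le)
  have hg0 (x : E) : g x ≠ 0 := by
    intro hx
    have hlt := hgG x
    rw [hx, dist_zero_left] at hlt
    exact hlt.false
  have hsmooth : ContDiff ℝ 1 fun x ↦ (R / ‖g x‖) • g x :=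
    (contDiff_const.div (hg.norm ℝ hg0) fun x ↦ norm_ne_zero_iff.2 (hg0 x)).smul hg
  have hnorm (x : E) : ‖(R / ‖g x‖) • g x‖ = R := by
    rw [norm_smul, norm_div, norm_norm, div_mul_cancel₀ _ (norm_ne_zero_iff.2 (hg0 x)),
      Real.norm_of_nonneg hR0.le]
  obtain ⟨x, hx, hne⟩ := exists_ne_of_contDiff_of_norm_const hR0 hsmooth hnorm
  have hgx : g x = x := (hgid (show R ≤ ‖x‖ from hx.ge)).trans (hR₀ (hR.le.trans hx.ge))
  rw [hgx, hx, div_self hR0.ne', one_smul] at hne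
  exact hne rfl

/-- The Poincaré–Bohl theorem. -/
theorem exists_eq_zero_of_inner_pos {F : E → E} {R : ℝ} (hR : 0 < R)
    (hF : ContinuousOn F (closedBall 0 R)) (hpos : ∀ x, ‖x‖ = R → 0 < inner ℝ (F x) x) :
    ∃ x ∈ closedBall 0 R, F x = 0 := by
  obtain ⟨a, ha, ha01, ha0, hapos, ha1⟩ := exists_continuous_cutoff (E := E) R
  obtain ⟨ρ, hρ, hρball, hρid, hρradial⟩ := exists_continuous_radial_retraction (E := E) hR
  let G : E → E := fun x ↦ (1 - a x) • F (ρ x) + a x • x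
  have hG : Continuous G :=
    ((continuous_const.sub ha).smul (hF.comp_continuous hρ hρball)).add (ha.smul continuous_id)
  have hGid : G =ᶠ[Bornology.cobounded E] id := by
    filter_upwards [ha1] with x hx
    simp [G, hx]
  obtain ⟨x, hx⟩ := exists_eq_zero_of_eventuallyEq_id_cobounded hG hGid
  obtain hxR | hxR := le_or_gt ‖x‖ R
  · refine ⟨x, mem_closedBall_zero_iff.2 hxR, ?_⟩
    simpa [G, ha0 x hxR, hρid x hxR] using hx
  · have hx0 : 0 < ‖x‖ := hR.trans hxR
    have hFx : 0 < inner ℝ (F (ρ x)) x := by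
      have hinner := hpos (ρ x) <| by
        rw [hρradial x hxR.le, norm_smul, Real.norm_of_nonneg (by positivity),
          div_mul_cancel₀ _ hx0.ne']
      nth_rw 2 [hρradial x hxR.le] at hinner
      rw [real_inner_smul_right] at hinner
      exact pos_of_mul_pos_right hinner (by positivity)
    have hGx : 0 < inner ℝ (G x) x := by
      simp only [G]
      rw [inner_add_left, real_inner_smul_left, real_inner_smul_left, real_inner_self_eq_norm_sq]
      exact add_pos_of_nonneg_of_pos (mul_nonneg (sub_nonneg.2 (ha01 x).2) hFx.le)
        (mul_pos (hapos x hxR) (by positivity))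
    rw [hx, inner_zero_left] at hGx
    exact hGx.false.elim

/-- If the complement of the range were connected, the zeros of an extension of `f⁻¹` could be
pushed off the image of the ball under an extension of `f`; the composition would then be a
zero-free map of the ball that is close to the identity on the sphere. -/
theorem not_isPreconnected_compl_range_of_injective (hE : 1 < Module.rank ℝ E)
    {f : sphere (0 : E) 1 → E} (hf : Continuous f) (hinj : Function.Injective f) :
    ¬ IsPreconnected (range f)ᶜ := by
  intro hconn
  have : ProperSpace E := FiniteDimensional.proper_real E
  have : Nontrivial E := rank_pos_iff_nontrivial.1 (one_pos.trans hE)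
  have : TietzeExtension E := TietzeExtension.of_tvs ℝ
  obtain ⟨φ, hφ⟩ := ContinuousMap.exists_extension
    (isClosed_sphere (x := (0 : E)) (ε := 1)).isClosedEmbedding_subtypeVal
    (⟨f, hf⟩ : C(sphere (0 : E) 1, E))
  have hφf (x : sphere (0 : E) 1) : φ x = f x := DFunLike.congr_fun hφ x
  obtain ⟨G, hG, hGf, hGbound⟩ := exists_continuous_extension_one_le_norm hf hinj
    continuous_subtype_val
  obtain ⟨h, hh, hhG, hfin⟩ := exists_continuous_finite_zeros hG one_pos hGbound
  have hhf (x : sphere (0 : E) 1) : 0 < inner ℝ (h (f x)) (x : E) := by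
    have hlt := abs_lt.1 ((abs_real_inner_le_norm (h (f x) - x) x).trans_lt <| by
      simpa [hGf] using hhG (f x))
    rw [inner_sub_left, real_inner_self_eq_norm_sq, norm_eq_of_mem_sphere x] at hlt
    linarith
  have hdisj : Disjoint {y | h y = 0} (range f) := by
    rw [Set.disjoint_right]
    rintro _ ⟨x, rfl⟩ (hx : h (f x) = 0)
    simpa [hx] using hhf x
  obtain ⟨ψ, hψf, hψ⟩ := exists_homeomorph_forall_notMem_of_finite hE (isCompact_range hf) hconn
    ((isCompact_closedBall (0 : E) 1).image φ.continuous).isBounded hfin hdisj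
  obtain ⟨x, hx, hx0⟩ := exists_eq_zero_of_inner_pos (F := fun x ↦ h (ψ.symm (φ x))) one_pos
    (by fun_prop) fun x hx ↦ by
      let y : sphere (0 : E) 1 := ⟨x, mem_sphere_zero_iff_norm.2 hx⟩
      have hψx : ψ.symm (φ x) = f y := by
        rw [ψ.symm_apply_eq, hψf _ (mem_range_self y), ← hφf]
      rw [hψx]
      exact hhf y
  exact hψ _ hx0 ⟨x, hx, (ψ.apply_symm_apply _).symm⟩

end Separation

section FiniteContent

/-- The metric space `X` has finite upper Minkowski content of dimension `d`, phrased through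
coverings: `O(δ⁻ᵈ)` balls of radius `δ ≤ 1` suffice to cover `X`. -/
def HasFiniteMinkowskiContent (X : Type*) [PseudoMetricSpace X] (d : ℕ) : Prop :=
  ∃ B : ℝ, ∀ δ : ℝ, 0 < δ → δ ≤ 1 →
    ∃ s : Finset X, (∀ x, ∃ c ∈ s, dist x c ≤ δ) ∧ s.card * δ ^ d ≤ B

lemma exists_finset_lt_dist_and_forall_exists_dist_le (X : Type*) [PseudoMetricSpace X]
    [CompactSpace X] {δ : ℝ} (hδ : 0 < δ) :
    ∃ s : Finset X, (s : Set X).Pairwise (δ < dist · ·) ∧ ∀ x, ∃ c ∈ s, dist x c ≤ δ := by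
  lift δ to NNReal using hδ.le
  have hhalf : δ / 2 ≠ 0 := (half_pos (NNReal.coe_pos.1 hδ)).ne'
  obtain ⟨N, -, hN, hcover⟩ := exists_finite_isCover_of_isCompact hhalf (isCompact_univ (X := X))
  have hfin : packingNumber δ (univ : Set X) ≠ ⊤ := by
    rw [← mul_div_cancel₀ δ (two_ne_zero)]
    exact ((packingNumber_two_mul_le_externalCoveringNumber _ _).trans
      hcover.externalCoveringNumber_le_encard).trans_lt hN.encard_lt_top |>.ne
  have hencard : (maximalSeparatedSet δ (univ : Set X)).encard ≠ ⊤ :=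
    (encard_maximalSeparatedSet hfin).trans_ne hfin
  refine ⟨(encard_ne_top_iff.1 hencard).toFinset, ?_, fun x ↦ ?_⟩
  · rw [Finite.coe_toFinset]
    refine isSeparated_maximalSeparatedSet.mono' fun x y hxy ↦ ?_
    rw [edist_nndist, ENNReal.coe_lt_coe] at hxy
    exact hxy
  · obtain ⟨c, hc, hxc : edist x c ≤ δ⟩ := isCover_maximalSeparatedSet hfin (mem_univ x)
    rw [edist_nndist, ENNReal.coe_le_coe] at hxc
    exact ⟨c, (Finite.mem_toFinset _).2 hc, hxc⟩

lemma HasFiniteMinkowskiContent.exists_finset_mul_dist_rpow_le {X : Type*} [PseudoMetricSpace X]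
    {d : ℕ} (hX : HasFiniteMinkowskiContent X d) (C : ℝ) {γ : ℝ} (hγ : 0 < γ) :
    ∃ B : ℝ, ∀ r : ℝ, 0 < r → r ≤ 1 → ∃ s : Finset X,
      (∀ x, ∃ c ∈ s, C * dist x c ^ γ ≤ r) ∧ s.card * r ^ (d / γ) ≤ B := by
  obtain ⟨B, hB⟩ := hX
  set D := max C 1
  have hD : 1 ≤ D := le_max_right _ _
  have hD0 : 0 < D := one_pos.trans_le hD
  refine ⟨B * D ^ (d / γ), fun r hr hr1 ↦ ?_⟩
  obtain ⟨s, hs, hcard⟩ := hB ((r / D) ^ γ⁻¹) (by positivity)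
    (Real.rpow_le_one (by positivity) (div_le_one_of_le₀ (hr1.trans hD) hD0.le) (by positivity))
  refine ⟨s, fun x ↦ ?_, ?_⟩
  · obtain ⟨c, hc, hxc⟩ := hs x
    refine ⟨c, hc, ?_⟩
    calc C * dist x c ^ γ ≤ D * ((r / D) ^ γ⁻¹) ^ γ := by
          gcongr
          exact le_max_left _ _
      _ = r := by rw [Real.rpow_inv_rpow (by positivity) hγ.ne', mul_div_cancel₀ _ hD0.ne']
  · rwa [← Real.rpow_mul_natCast (by positivity), inv_mul_eq_div, Real.div_rpow hr.le hD0.le,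
      mul_div_assoc', div_le_iff₀ (by positivity)] at hcard

variable {E : Type*} [NormedAddCommGroup E] [NormedSpace ℝ E] [FiniteDimensional ℝ E]

lemma card_mul_pow_finrank_add_pow_finrank_le {δ : ℝ} (hδ : 0 < δ) (hδ1 : δ ≤ 1)
    {s : Finset (sphere (0 : E) 1)} (hs : (s : Set (sphere (0 : E) 1)).Pairwise (δ < dist · ·)) :
    s.card * (δ / 2) ^ Module.finrank ℝ E + (1 - δ / 2) ^ Module.finrank ℝ E ≤
      (1 + δ / 2) ^ Module.finrank ℝ E := by
  borelize E
  let μ : Measure E := Measure.addHaar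
  have hμ (x : E) {r : ℝ} (hr : 0 < r) :
      μ.real (ball x r) = r ^ Module.finrank ℝ E * μ.real (ball 0 1) := by
    simp [Measure.real, Measure.addHaar_ball_of_pos μ x hr, ENNReal.toReal_mul, pow_nonneg hr.le]
  have hdisj : (s : Set (sphere (0 : E) 1)).PairwiseDisjoint fun c ↦ ball (c : E) (δ / 2) :=
    fun x hx y hy hxy ↦ ball_disjoint_ball <| (add_halves δ).trans_le (hs hx hy hxy).le
  have hdisj' : Disjoint (⋃ c ∈ s, ball (c : E) (δ / 2)) (ball 0 (1 - δ / 2)) :=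
    disjoint_iUnion₂_left.2 fun c _ ↦ ball_disjoint_ball <| by
      rw [dist_zero_right, norm_eq_of_mem_sphere, add_sub_cancel]
  have hsub : (⋃ c ∈ s, ball (c : E) (δ / 2)) ∪ ball 0 (1 - δ / 2) ⊆ ball 0 (1 + δ / 2) := by
    refine union_subset (iUnion₂_subset fun c _ ↦ ball_subset_ball' ?_) (ball_subset_ball ?_)
    · rw [dist_zero_right, norm_eq_of_mem_sphere, add_comm]
    · linarith
  have hle := measureReal_mono (μ := μ) hsub measure_ball_lt_top.ne
  rw [measureReal_union hdisj' measurableSet_ball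
    ((measure_mono (subset_union_left.trans hsub)).trans_lt measure_ball_lt_top).ne
    measure_ball_lt_top.ne, measureReal_biUnion_finset hdisj (fun _ _ ↦ measurableSet_ball)
      (fun _ _ ↦ measure_ball_lt_top.ne), hμ 0 (by linarith : 0 < 1 - δ / 2),
    hμ 0 (by linarith : 0 < 1 + δ / 2)] at hle
  simp only [hμ _ (half_pos hδ), Finset.sum_const, nsmul_eq_mul, ← mul_assoc, ← add_mul] at hle
  exact le_of_mul_le_mul_right hle
    (ENNReal.toReal_pos (measure_ball_pos _ _ one_pos).ne' measure_ball_lt_top.ne)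

theorem hasFiniteMinkowskiContent_sphere {d : ℕ} (hd : Module.finrank ℝ E = d + 1) :
    HasFiniteMinkowskiContent (sphere (0 : E) 1) d := by
  have : ProperSpace E := FiniteDimensional.proper_real E
  refine ⟨2 ^ (d + 1) * ((d + 1) * 2 ^ d), fun δ hδ hδ1 ↦ ?_⟩
  obtain ⟨s, hsep, hcover⟩ :=
    exists_finset_lt_dist_and_forall_exists_dist_le (sphere (0 : E) 1) hδ
  refine ⟨s, hcover, ?_⟩
  have hvol := card_mul_pow_finrank_add_pow_finrank_le hδ hδ1 hsep
  have hpow : (1 + δ / 2) ^ (d + 1) - (1 - δ / 2) ^ (d + 1) ≤ δ * ((d + 1) * 2 ^ d) := calc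
    _ ≤ |1 + δ / 2 - (1 - δ / 2)| * (d + 1 : ℕ) * max |1 + δ / 2| |1 - δ / 2| ^ d :=
      (le_abs_self _).trans (abs_pow_sub_pow_le _ _ (d + 1))
    _ ≤ δ * (d + 1 : ℕ) * 2 ^ d := by
      gcongr
      · exact (abs_of_pos (by linarith)).trans_le (by linarith)
      · exact max_le (abs_le.2 ⟨by linarith, by linarith⟩) (abs_le.2 ⟨by linarith, by linarith⟩)
    _ = δ * ((d + 1) * 2 ^ d) := by push_cast; ring
  rw [hd] at hvol
  refine le_of_mul_le_mul_left ?_ hδ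
  calc δ * (s.card * δ ^ d) = 2 ^ (d + 1) * (s.card * (δ / 2) ^ (d + 1)) := by
        rw [div_pow, pow_succ δ]; field_simp
    _ ≤ 2 ^ (d + 1) * (δ * ((d + 1) * 2 ^ d)) :=
      mul_le_mul_of_nonneg_left (by linarith) (by positivity)
    _ = δ * (2 ^ (d + 1) * ((d + 1) * 2 ^ d)) := by ring

end FiniteContent

section ExitSet

variable {G : Type*} [Group G]

/-- The points of `A` that right translation by `g` moves out of `A`. -/
def exitSet (A : Set G) (g : G) : Set G := A \ (· * g) ⁻¹' A

variable {A : Set G}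

lemma exitSet_one : exitSet A 1 = ∅ := by simp [exitSet]

lemma exitSet_mul_subset (g h : G) : exitSet A (g * h) ⊆ exitSet A g ∪ (· * g) ⁻¹' exitSet A h := by
  rintro p ⟨hp, hpA⟩
  rw [mem_preimage, ← mul_assoc] at hpA
  by_cases hpg : p * g ∈ A
  · exact Or.inr ⟨hpg, hpA⟩
  · exact Or.inl ⟨hp, hpg⟩

section Measure

variable [MeasurableSpace G] [MeasurableMul G] {μ : Measure G} [μ.IsMulRightInvariant]

lemma measure_exitSet_mul_le (g h : G) :
    μ (exitSet A (g * h)) ≤ μ (exitSet A g) + μ (exitSet A h) :=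
  calc μ (exitSet A (g * h)) ≤ μ (exitSet A g ∪ (· * g) ⁻¹' exitSet A h) :=
        measure_mono (exitSet_mul_subset g h)
    _ ≤ μ (exitSet A g) + μ ((· * g) ⁻¹' exitSet A h) := measure_union_le _ _
    _ = μ (exitSet A g) + μ (exitSet A h) := by rw [measure_preimage_mul_right]

lemma measure_exitSet_pow_le (g : G) (m : ℕ) : μ (exitSet A (g ^ m)) ≤ m * μ (exitSet A g) := by
  induction m with
  | zero => simp [exitSet_one]
  | succ m ih =>
    rw [pow_succ, Nat.cast_succ, add_mul, one_mul]
    exact (measure_exitSet_mul_le _ _).trans (add_le_add_left ih _)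

lemma measure_exitSet_eq_zero_of_closure_eq_top {S : Set G} (hS : Submonoid.closure S = ⊤)
    (hA : ∀ g ∈ S, μ (exitSet A g) = 0) (g : G) : μ (exitSet A g) = 0 := by
  have hg : g ∈ Submonoid.closure S := hS ▸ Submonoid.mem_top g
  induction hg using Submonoid.closure_induction with
  | mem g hg => exact hA g hg
  | one => rw [exitSet_one, measure_empty]
  | mul g h _ _ ihg ihh => exact nonpos_iff_eq_zero.1 <|
      (measure_exitSet_mul_le g h).trans_eq (by rw [ihg, ihh, add_zero])

end Measure

lemma exists_measure_exitSet_ne_zero [TopologicalSpace G] [SeparatelyContinuousMul G]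
    [MeasurableSpace G] (μ : Measure G) [μ.IsOpenPosMeasure] {B : Set G} (hA : IsOpen A)
    (hB : IsOpen B) (hAB : Disjoint A B) (hA' : A.Nonempty) (hB' : B.Nonempty) :
    ∃ g, μ (exitSet A g) ≠ 0 := by
  obtain ⟨a, ha⟩ := hA'
  obtain ⟨b, hb⟩ := hB'
  have hopen : IsOpen (A ∩ (· * (a⁻¹ * b)) ⁻¹' B) :=
    hA.inter (hB.preimage (continuous_mul_const _))
  have hpos := hopen.measure_pos μ ⟨a, ha, by rwa [mem_preimage, mul_inv_cancel_left]⟩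
  refine ⟨a⁻¹ * b, (hpos.trans_le (measure_mono ?_)).ne'⟩
  exact fun p ⟨hp, hpB⟩ ↦ ⟨hp, fun hpA ↦ hAB.notMem_of_mem_left hpA hpB⟩

end ExitSet

lemma isPreconnected_inter_frontier_nonempty {X : Type*} [TopologicalSpace X] {S A : Set X}
    (hS : IsPreconnected S) (hA : (S ∩ A).Nonempty) (hA' : (S ∩ Aᶜ).Nonempty) :
    (S ∩ frontier A).Nonempty := by
  by_contra! h
  have hsub : S ⊆ interior A ∪ interior Aᶜ := by
    rw [← compl_frontier_eq_union_interior]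
    exact fun x hx hxA ↦ h.subset ⟨hx, hxA⟩
  have hint : S ∩ A ⊆ interior A := fun x hx ↦
    (hsub hx.1).resolve_right fun hx' ↦ interior_subset hx' hx.2
  have hint' : S ∩ Aᶜ ⊆ interior Aᶜ := fun x hx ↦
    (hsub hx.1).resolve_left fun hx' ↦ hx.2 (interior_subset hx')
  obtain ⟨x, -, hx, hx'⟩ := hS _ _ isOpen_interior isOpen_interior hsub
    (hA.mono fun x hx ↦ ⟨hx.1, hint hx⟩) (hA'.mono fun x hx ↦ ⟨hx.1, hint' hx⟩)
  exact interior_subset hx' (interior_subset hx)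

lemma measurePreserving_transvection {E : Type*} [NormedAddCommGroup E] [NormedSpace ℝ E]
    [FiniteDimensional ℝ E] [MeasurableSpace E] [BorelSpace E] (μ : Measure E) [μ.IsAddHaarMeasure]
    {f : Module.Dual ℝ E} {v : E} (hf : f v = 0) :
    MeasurePreserving (LinearMap.transvection f v) μ μ := by
  have hdet : LinearMap.det (LinearMap.transvection f v) = 1 := by
    rw [LinearMap.transvection.det, hf, add_zero]
  refine ⟨(LinearMap.continuous_of_finiteDimensional _).measurable, ?_⟩
  rw [Measure.map_linearMap_addHaar_eq_smul_addHaar _ (hdet ▸ one_ne_zero), hdet, inv_one, abs_one,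
    ENNReal.ofReal_one, one_smul]

section Heisenberg

variable {n : ℕ}

/-- The space `ℝ^{2n+1}` underlying `ℍ^n`. -/
abbrev Heis (n : ℕ) : Type := EuclideanSpace ℝ (Fin (2 * n + 1))

variable (n) in
/-- The alternating form `(p, q) ↦ 2 ∑ⱼ (x'ⱼ yⱼ - xⱼ y'ⱼ)` occurring in the group law of `ℍ^n`. -/
noncomputable def heisForm : Heis n →ₗ[ℝ] Heis n →ₗ[ℝ] ℝ :=
  (2 : ℝ) • ∑ j : Fin n,
    ((LinearMap.mul ℝ ℝ).compl₁₂ (EuclideanSpace.projₗ (yI n j)) (EuclideanSpace.projₗ (xI n j)) -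
      (LinearMap.mul ℝ ℝ).compl₁₂ (EuclideanSpace.projₗ (xI n j)) (EuclideanSpace.projₗ (yI n j)))

variable (n) in
/-- The central direction `∂/∂t` of `ℍ^n`. -/
noncomputable def heisCenter : Heis n := EuclideanSpace.single (tI n) 1

lemma heisForm_apply (p q : Heis n) :
    heisForm n p q = 2 * ∑ j : Fin n, (q (xI n j) * p (yI n j) - p (xI n j) * q (yI n j)) := by
  simp [heisForm, LinearMap.sum_apply, mul_comm (q _)]

lemma heisForm_swap (p q : Heis n) : heisForm n p q = -heisForm n q p := by
  simp only [heisForm_apply, ← mul_neg, ← Finset.sum_neg_distrib, neg_sub, mul_comm (p _)]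

@[simp]
lemma heisForm_self (p : Heis n) : heisForm n p p = 0 :=
  self_eq_neg.1 (heisForm_swap p p)

lemma exists_castSucc_eq_xI (j : Fin n) : ∃ i : Fin (2 * n), i.castSucc = xI n j :=
  ⟨⟨2 * j, by omega⟩, rfl⟩

lemma exists_castSucc_eq_yI (j : Fin n) : ∃ i : Fin (2 * n), i.castSucc = yI n j :=
  ⟨⟨2 * j + 1, by omega⟩, rfl⟩

@[simp]
lemma heisCenter_castSucc (i : Fin (2 * n)) : heisCenter n i.castSucc = 0 := by
  simp [heisCenter, tI]

@[simp]
lemma heisCenter_tI : heisCenter n (tI n) = 1 := by simp [heisCenter]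

@[simp]
lemma heisForm_heisCenter_right (p : Heis n) : heisForm n p (heisCenter n) = 0 := by
  rw [heisForm_apply, Finset.sum_eq_zero, mul_zero]
  intro j _
  obtain ⟨i, hi⟩ := exists_castSucc_eq_xI j
  obtain ⟨k, hk⟩ := exists_castSucc_eq_yI j
  rw [← hi, ← hk, heisCenter_castSucc, heisCenter_castSucc, zero_mul, mul_zero, sub_zero]

@[simp]
lemma heisForm_heisCenter_left (p : Heis n) : heisForm n (heisCenter n) p = 0 := by
  rw [heisForm_swap, heisForm_heisCenter_right, neg_zero]

variable (n) in
/-- The group structure of `ℍ^n` for which `dK n p q` is the Korányi norm of `q⁻¹ * p`. It is only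
a local instance because `ℝ^{2n+1}` carries it as a bare vector space. -/
@[reducible]
noncomputable def heisenbergGroup : Group (Heis n) :=
  letI : Mul (Heis n) := ⟨fun p q ↦ p + q + heisForm n p q • heisCenter n⟩
  letI : One (Heis n) := ⟨0⟩
  letI : Inv (Heis n) := ⟨fun p ↦ -p⟩
  Group.ofLeftAxioms
    (fun p q r ↦ show p + q + heisForm n p q • heisCenter n + r +
        heisForm n (p + q + heisForm n p q • heisCenter n) r • heisCenter n =
      p + (q + r + heisForm n q r • heisCenter n) +
        heisForm n p (q + r + heisForm n q r • heisCenter n) • heisCenter n by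
      simp only [map_add, map_smul, LinearMap.add_apply, LinearMap.smul_apply,
        heisForm_heisCenter_right, heisForm_heisCenter_left, smul_zero, add_zero]
      module)
    (fun p ↦ show 0 + p + heisForm n 0 p • heisCenter n = p by simp)
    (fun p ↦ show -p + p + heisForm n (-p) p • heisCenter n = 0 by simp)

attribute [local instance] heisenbergGroup

lemma heis_mul_def (p q : Heis n) : p * q = p + q + heisForm n p q • heisCenter n := rfl

lemma heis_one_def : (1 : Heis n) = 0 := rfl

lemma heis_inv_def (p : Heis n) : p⁻¹ = -p := rfl

@[simp]
lemma heis_mul_castSucc (p q : Heis n) (i : Fin (2 * n)) :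
    (p * q) i.castSucc = p i.castSucc + q i.castSucc := by
  simp [heis_mul_def]

@[simp]
lemma heis_mul_tI (p q : Heis n) : (p * q) (tI n) = p (tI n) + q (tI n) + heisForm n p q := by
  simp [heis_mul_def]

lemma heis_pow_eq_smul (p : Heis n) (m : ℕ) : p ^ m = (m : ℝ) • p := by
  induction m with
  | zero => simp [heis_one_def]
  | succ m ih => simp [pow_succ, ih, heis_mul_def, add_smul]

instance : ContinuousMul (Heis n) where
  continuous_mul := by
    simp only [heis_mul_def, heisForm_apply]
    fun_prop

instance : (volume : Measure (Heis n)).IsMulLeftInvariant where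
  map_mul_left_eq_self c := by
    have h := (measurePreserving_add_left volume c).comp
      (measurePreserving_transvection volume (heisForm_heisCenter_right c))
    convert h.map_eq using 2
    ext1 p
    simp only [Function.comp_apply, LinearMap.transvection.apply, heis_mul_def, add_assoc]

instance : (volume : Measure (Heis n)).IsMulRightInvariant where
  map_mul_right_eq_self c := by
    have h := (measurePreserving_add_right volume c).comp
      (measurePreserving_transvection volume (f := (heisForm n).flip c)
        (heisForm_heisCenter_left c))
    convert h.map_eq using 2
    ext1 p
    simp only [Function.comp_apply, LinearMap.transvection.apply, heis_mul_def,
      LinearMap.flip_apply, add_right_comm]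

lemma heis_mul_mul_inv_mul_inv (p q : Heis n) :
    p * q * p⁻¹ * q⁻¹ = (2 * heisForm n p q) • heisCenter n := by
  simp only [heis_mul_def, heis_inv_def, map_add, map_neg, map_smul,
    LinearMap.add_apply, LinearMap.neg_apply, LinearMap.smul_apply, heisForm_heisCenter_left,
    heisForm_self, heisForm_swap q p, smul_zero, add_zero]
  module

lemma heisForm_single_xI_single_yI (j : Fin n) (a b : ℝ) :
    heisForm n (EuclideanSpace.single (xI n j) a) (EuclideanSpace.single (yI n j) b) =
      -(2 * (a * b)) := by
  have hxy (i k : Fin n) : xI n i ≠ yI n k := by simp only [xI, yI, ne_eq, Fin.ext_iff]; omega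
  have hx (i : Fin n) : xI n i = xI n j ↔ i = j := by simp only [xI, Fin.ext_iff]; omega
  have hy (i : Fin n) : yI n i = yI n j ↔ i = j := by simp only [yI, Fin.ext_iff]; omega
  simp [heisForm_apply, hxy, (hxy _ _).symm, hx, hy]

variable (n) in
/-- The horizontal elements of `ℍ^n`, those with vanishing `t`-coordinate. -/
def heisHorizontal : Set (Heis n) := {w | w (tI n) = 0}

lemma neg_mem_heisHorizontal {w : Heis n} (hw : w ∈ heisHorizontal n) : -w ∈ heisHorizontal n := by
  simpa [heisHorizontal] using hw

lemma smul_heisCenter_mem_closure_heisHorizontal (hn : 1 ≤ n) (τ : ℝ) :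
    τ • heisCenter n ∈ Submonoid.closure (heisHorizontal n) := by
  have htx : tI n ≠ xI n ⟨0, hn⟩ := by
    obtain ⟨i, hi⟩ := exists_castSucc_eq_xI (⟨0, hn⟩ : Fin n)
    exact hi ▸ (Fin.castSucc_lt_last i).ne'
  have hty : tI n ≠ yI n ⟨0, hn⟩ := by
    obtain ⟨i, hi⟩ := exists_castSucc_eq_yI (⟨0, hn⟩ : Fin n)
    exact hi ▸ (Fin.castSucc_lt_last i).ne'
  have ha : EuclideanSpace.single (xI n ⟨0, hn⟩) 1 ∈ heisHorizontal n := by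
    simp [heisHorizontal, htx]
  have hb : EuclideanSpace.single (yI n ⟨0, hn⟩) (-τ / 4) ∈ heisHorizontal n := by
    simp [heisHorizontal, hty]
  have hcomm := heis_mul_mul_inv_mul_inv (n := n) (EuclideanSpace.single (xI n ⟨0, hn⟩) 1)
    (EuclideanSpace.single (yI n ⟨0, hn⟩) (-τ / 4))
  rw [heisForm_single_xI_single_yI, show 2 * -(2 * (1 * (-τ / 4))) = τ by ring] at hcomm
  rw [← hcomm]
  have hmem {w : Heis n} (hw : w ∈ heisHorizontal n) := Submonoid.subset_closure hw
  exact mul_mem (mul_mem (mul_mem (hmem ha) (hmem hb)) (hmem (neg_mem_heisHorizontal ha)))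
    (hmem (neg_mem_heisHorizontal hb))

theorem closure_heisHorizontal (hn : 1 ≤ n) : Submonoid.closure (heisHorizontal n) = ⊤ := by
  refine (Submonoid.eq_top_iff' _).2 fun g ↦ ?_
  have hg : g = (g - g (tI n) • heisCenter n) * g (tI n) • heisCenter n := by
    simp [heis_mul_def]
  rw [hg]
  exact mul_mem (Submonoid.subset_closure (by simp [heisHorizontal]))
    (smul_heisCenter_mem_closure_heisHorizontal hn _)

variable (n) in
/-- The anisotropic box of homogeneous radius `r` around the identity of `ℍ^n`. -/
def heisBox (r : ℝ) : Set (Heis n) :=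
  {b | (∀ i : Fin (2 * n), |b i.castSucc| ≤ r) ∧ |b (tI n)| ≤ r ^ 2}

lemma volume_heisBox {r : ℝ} (hr : 0 ≤ r) :
    volume (heisBox n r) = ENNReal.ofReal (2 ^ (2 * n + 1) * r ^ (2 * n + 2)) := by
  let a : Fin (2 * n + 1) → ℝ := Fin.snoc (fun _ : Fin (2 * n) ↦ r) (r ^ 2)
  have hbox : heisBox n r = WithLp.ofLp ⁻¹' Icc (-a) a := by
    ext b
    simp only [heisBox, mem_ofPred_eq, mem_preimage, mem_Icc, Pi.le_def, Fin.forall_fin_succ', a,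
      Pi.neg_apply, Fin.snoc_castSucc, Fin.snoc_last, tI, abs_le, forall_and]
    tauto
  rw [hbox, (PiLp.volume_preserving_ofLp _).measure_preimage measurableSet_Icc.nullMeasurableSet,
    Real.volume_Icc_pi, Fin.prod_univ_castSucc]
  simp only [a, Pi.neg_apply, Fin.snoc_castSucc, Fin.snoc_last, Finset.prod_const,
    Finset.card_univ, Fintype.card_fin]
  rw [← ENNReal.ofReal_pow (by linarith), ← ENNReal.ofReal_mul (pow_nonneg (by linarith) _)]
  congr 1
  ring

lemma abs_heisForm_le {p q : Heis n} {r s : ℝ} (hr : 0 ≤ r) (hs : 0 ≤ s)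
    (hp : ∀ i : Fin (2 * n), |p i.castSucc| ≤ r) (hq : ∀ i : Fin (2 * n), |q i.castSucc| ≤ s) :
    |heisForm n p q| ≤ 4 * n * (r * s) := by
  have hterm (j : Fin n) : |q (xI n j) * p (yI n j) - p (xI n j) * q (yI n j)| ≤ 2 * (r * s) := by
    obtain ⟨i, hi⟩ := exists_castSucc_eq_xI j
    obtain ⟨k, hk⟩ := exists_castSucc_eq_yI j
    rw [← hi, ← hk]
    calc |q i.castSucc * p k.castSucc - p i.castSucc * q k.castSucc|
        ≤ |q i.castSucc| * |p k.castSucc| + |p i.castSucc| * |q k.castSucc| := by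
          rw [← abs_mul, ← abs_mul]
          exact abs_sub _ _
      _ ≤ s * r + r * s := by gcongr <;> apply_assumption
      _ = 2 * (r * s) := by ring
  calc |heisForm n p q|
      ≤ 2 * ∑ j : Fin n, |q (xI n j) * p (yI n j) - p (xI n j) * q (yI n j)| := by
        rw [heisForm_apply, abs_mul, abs_two]
        gcongr
        exact Finset.abs_sum_le_sum_abs _ _
    _ ≤ 2 * ∑ _j : Fin n, 2 * (r * s) := by
        gcongr with j
        exact hterm j
    _ = 4 * n * (r * s) := by
        rw [Finset.sum_const, Finset.card_univ, Fintype.card_fin, nsmul_eq_mul]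
        ring

lemma mul_mem_heisBox {p q : Heis n} {r s : ℝ} (hr : 0 ≤ r) (hs : 0 ≤ s) (hp : p ∈ heisBox n r)
    (hq : q ∈ heisBox n s) : p * q ∈ heisBox n ((2 * n + 1) * (r + s)) := by
  refine ⟨fun i ↦ ?_, ?_⟩
  · calc |(p * q) i.castSucc| ≤ |p i.castSucc| + |q i.castSucc| := by
          rw [heis_mul_castSucc]
          exact abs_add_le _ _
      _ ≤ r + s := add_le_add (hp.1 i) (hq.1 i)
      _ ≤ (2 * n + 1) * (r + s) := le_mul_of_one_le_left (by positivity) (by simp)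
  · calc |(p * q) (tI n)| ≤ |p (tI n)| + |q (tI n)| + |heisForm n p q| := by
          rw [heis_mul_tI]
          exact abs_add_three _ _ _
      _ ≤ r ^ 2 + s ^ 2 + 4 * n * (r * s) :=
          add_le_add_three hp.2 hq.2 (abs_heisForm_le hr hs hp.1 hq.1)
      _ ≤ (2 * n + 1) * (r + s) ^ 2 := by
          have : 0 ≤ n * (r ^ 2 + s ^ 2) + r * s := by positivity
          linarith
      _ ≤ ((2 * n + 1) * (r + s)) ^ 2 := by
          rw [mul_pow]
          gcongr
          exact le_self_pow₀ (by simp) two_ne_zero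

lemma smul_mem_heisBox {w : Heis n} (hw : w ∈ heisHorizontal n) {s r : ℝ} (hs : |s| ≤ r) :
    s • w ∈ heisBox n (r * ‖w‖) := by
  refine ⟨fun i ↦ ?_, ?_⟩
  · rw [PiLp.smul_apply, smul_eq_mul, abs_mul]
    have : 0 ≤ r := (abs_nonneg s).trans hs
    gcongr
    exact PiLp.norm_apply_le w _
  · have hw' : w (tI n) = 0 := hw
    rw [PiLp.smul_apply, hw', smul_zero, abs_zero]
    positivity

lemma inv_mul_mem_heisBox_of_dK_le {p c : Heis n} {r : ℝ} (hr : 0 ≤ r) (h : dK n p c ≤ r) :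
    c⁻¹ * p ∈ heisBox n r := by
  set Z := ∑ i : Fin (2 * n), (p i.castSucc - c i.castSucc) ^ 2
  set T := p (tI n) - c (tI n) + heisForm n p c with hT
  have : 0 ≤ Z := Finset.sum_nonneg fun _ _ ↦ sq_nonneg _
  have hZT : Z ^ 2 + T ^ 2 ≤ (r ^ 2) ^ 2 := by
    have hroot : (Z ^ 2 + T ^ 2) ^ ((4 : ℝ)⁻¹) ≤ r := by
      rwa [hT, heisForm_apply, ← one_div]
    rw [Real.rpow_inv_le_iff_of_pos (by positivity) hr four_pos] at hroot
    exact_mod_cast hroot.trans_eq (by rw [← pow_mul]; norm_cast)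
  refine ⟨fun i ↦ ?_, ?_⟩
  · have hi : (p i.castSucc - c i.castSucc) ^ 2 ≤ Z :=
      Finset.single_le_sum (f := fun i : Fin (2 * n) ↦ (p i.castSucc - c i.castSucc) ^ 2)
        (fun _ _ ↦ sq_nonneg _) (Finset.mem_univ i)
    have hZr : Z ≤ r ^ 2 := le_of_sq_le_sq (by linarith [sq_nonneg T]) (sq_nonneg r)
    rw [heis_mul_castSucc, heis_inv_def, PiLp.neg_apply, neg_add_eq_sub]
    exact abs_le_of_sq_le_sq (hi.trans hZr) hr
  · have hcoord : (c⁻¹ * p) (tI n) = T := by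
      rw [heis_mul_tI, heis_inv_def, map_neg, LinearMap.neg_apply, ← heisForm_swap, PiLp.neg_apply,
        neg_add_eq_sub]
    rw [hcoord]
    exact abs_le_of_sq_le_sq (by linarith [sq_nonneg Z]) (sq_nonneg r)

open Filter in
/-- `K` has vanishing Korányi content in codimension one: `o(m^{2n+1})` Korányi balls of radius
`1/m` cover `K`, where `2n + 2` is the homogeneous dimension of `ℍ^n`. -/
def HasZeroKoranyiContent (K : Set (Heis n)) : Prop :=
  ∀ ε : ℝ, 0 < ε → ∀ᶠ m : ℕ in atTop, ∃ P : Finset (Heis n),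
    (∀ k ∈ K, ∃ c ∈ P, dK n k c ≤ (m : ℝ)⁻¹) ∧ P.card ≤ ε * (m : ℝ) ^ (2 * n + 1)

lemma HasZeroKoranyiContent.mono {K L : Set (Heis n)} (hL : HasZeroKoranyiContent L)
    (hKL : K ⊆ L) : HasZeroKoranyiContent K := fun ε hε ↦
  (hL ε hε).mono fun _ ⟨P, hP, hcard⟩ ↦ ⟨P, fun k hk ↦ hP k (hKL hk), hcard⟩

lemma exists_mul_smul_mem_frontier {A : Set (Heis n)} {p w : Heis n} (hp : p ∈ exitSet A w) :
    ∃ s ∈ Icc (0 : ℝ) 1, p * s • w ∈ frontier A := by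
  have hpath : IsPreconnected ((fun s : ℝ ↦ p * s • w) '' Icc 0 1) :=
    isPreconnected_Icc.image _ (by fun_prop)
  have hstart : p ∈ (fun s : ℝ ↦ p * s • w) '' Icc 0 1 :=
    ⟨0, by simp, by simp [← heis_one_def]⟩
  have hend : p * w ∈ (fun s : ℝ ↦ p * s • w) '' Icc 0 1 := ⟨1, by simp, by simp⟩
  obtain ⟨_, ⟨s, hs, rfl⟩, hfr⟩ :=
    isPreconnected_inter_frontier_nonempty hpath ⟨p, hstart, hp.1⟩ ⟨p * w, hend, hp.2⟩
  exact ⟨s, hs, hfr⟩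

lemma volume_exitSet_smul_le {A : Set (Heis n)} {w : Heis n} (hw : w ∈ heisHorizontal n) {r : ℝ}
    (hr : 0 ≤ r) {P : Finset (Heis n)} (hP : ∀ k ∈ frontier A, ∃ c ∈ P, dK n k c ≤ r) :
    volume (exitSet A (r • w)) ≤
      P.card * volume (heisBox n ((2 * n + 1) * (r + r * ‖w‖))) := by
  have hsub : exitSet A (r • w) ⊆
      ⋃ c ∈ P, (c⁻¹ * ·) ⁻¹' heisBox n ((2 * n + 1) * (r + r * ‖w‖)) := by
    intro p hp
    obtain ⟨s, hs, hfr⟩ := exists_mul_smul_mem_frontier hp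
    obtain ⟨c, hc, hdc⟩ := hP _ hfr
    have hback : c⁻¹ * p = c⁻¹ * (p * s • r • w) * (-(s * r)) • w := by
      rw [neg_smul, ← heis_inv_def, smul_smul, mul_assoc, mul_inv_cancel_right]
    have hstep : (-(s * r)) • w ∈ heisBox n (r * ‖w‖) := by
      refine smul_mem_heisBox hw ?_
      rw [abs_neg, abs_mul, abs_of_nonneg hs.1, abs_of_nonneg hr]
      exact mul_le_of_le_one_left hr hs.2
    refine mem_iUnion₂.2 ⟨c, hc, ?_⟩
    rw [mem_preimage, hback]
    exact mul_mem_heisBox hr (by positivity) (inv_mul_mem_heisBox_of_dK_le hr hdc) hstep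
  refine (measure_mono hsub).trans ((measure_biUnion_finset_le _ _).trans_eq ?_)
  simp only [measure_preimage_mul, Finset.sum_const, nsmul_eq_mul]

/-- Writing `w = (w / m)^m`, the `m` steps cost `m` times `o(m^{2n+1})` boxes of volume
`O(m^{-(2n+2)})`. -/
lemma HasZeroKoranyiContent.volume_exitSet_eq_zero {A : Set (Heis n)}
    (hA : HasZeroKoranyiContent (frontier A)) {w : Heis n} (hw : w ∈ heisHorizontal n) :
    volume (exitSet A w) = 0 := by
  set M : ℝ := 2 ^ (2 * n + 1) * ((2 * n + 1) * (1 + ‖w‖)) ^ (2 * n + 2) with hM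
  have hM0 : 0 < M := by positivity
  refine nonpos_iff_eq_zero.1 (ENNReal.le_of_forall_pos_le_add fun η hη _ ↦ ?_)
  rw [zero_add]
  obtain ⟨m, ⟨P, hP, hcard⟩, hm⟩ :=
    ((hA (η / M) (by positivity)).and (Filter.eventually_ge_atTop 1)).exists
  have hm0 : (0 : ℝ) < m := by exact_mod_cast hm
  have hbox : volume (heisBox n ((2 * n + 1) * ((m : ℝ)⁻¹ + (m : ℝ)⁻¹ * ‖w‖))) =
      ENNReal.ofReal (M / (m : ℝ) ^ (2 * n + 2)) := by
    rw [volume_heisBox (by positivity), hM]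
    rw [show (2 * n + 1) * ((m : ℝ)⁻¹ + (m : ℝ)⁻¹ * ‖w‖) = (2 * n + 1) * (1 + ‖w‖) / m by
      field_simp, div_pow, mul_div_assoc]
  calc volume (exitSet A w)
      = volume (exitSet A (((m : ℝ)⁻¹ • w) ^ m)) := by
        rw [heis_pow_eq_smul, smul_inv_smul₀ hm0.ne']
    _ ≤ m * (P.card * ENNReal.ofReal (M / (m : ℝ) ^ (2 * n + 2))) := by
        rw [← hbox]
        exact (measure_exitSet_pow_le _ m).trans
          (mul_le_mul_right (volume_exitSet_smul_le hw (by positivity) hP) _)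
    _ = ENNReal.ofReal (P.card * (M / (m : ℝ) ^ (2 * n + 1))) := by
        rw [← ENNReal.ofReal_natCast, ← ENNReal.ofReal_natCast,
          ← ENNReal.ofReal_mul (by positivity), ← ENNReal.ofReal_mul (by positivity)]
        congr 1
        rw [pow_succ (m : ℝ) (2 * n + 1)]
        field_simp
    _ ≤ ENNReal.ofReal (η / M * (m : ℝ) ^ (2 * n + 1) * (M / (m : ℝ) ^ (2 * n + 1))) := by gcongr
    _ = η := by
        rw [← ENNReal.ofReal_coe_nnreal]
        congr 1
        field_simp

theorem HasZeroKoranyiContent.isPreconnected_compl (hn : 1 ≤ n) {K : Set (Heis n)}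
    (hK : HasZeroKoranyiContent K) (hKc : IsClosed K) : IsPreconnected Kᶜ := by
  intro u v hu hv hcover hKu hKv
  by_contra! hdisj
  have hUo : IsOpen (Kᶜ ∩ u) := hKc.isOpen_compl.inter hu
  have hVo : IsOpen (Kᶜ ∩ v) := hKc.isOpen_compl.inter hv
  have hUV : Disjoint (Kᶜ ∩ u) (Kᶜ ∩ v) := by
    rw [disjoint_iff_inter_eq_empty, ← inter_inter_distrib_left, hdisj]
  have hfrontier : frontier (Kᶜ ∩ u) ⊆ K := by
    intro k hk
    by_contra hkK
    rw [hUo.frontier_eq] at hk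
    have hkv : k ∈ Kᶜ ∩ v := ⟨hkK, (hcover hkK).resolve_left fun hku ↦ hk.2 ⟨hkK, hku⟩⟩
    exact (hUV.closure_left hVo).notMem_of_mem_left hk.1 hkv
  obtain ⟨g, hg⟩ := exists_measure_exitSet_ne_zero volume hUo hVo hUV hKu hKv
  exact hg (measure_exitSet_eq_zero_of_closure_eq_top (closure_heisHorizontal hn)
    (fun _ hw ↦ (hK.mono hfrontier).volume_exitSet_eq_zero hw) g)

/-- At scale `1/m` the image is covered by `O(m^{d/γ})` balls, and `d/γ < 2n+1`. -/
theorem hasZeroKoranyiContent_range {X : Type*} [PseudoMetricSpace X] {d : ℕ}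
    (hX : HasFiniteMinkowskiContent X d) {γ : ℝ} (hγ : d / (2 * n + 1) < γ) {f : X → Heis n}
    {C : ℝ} (hf : ∀ x y, dK n (f x) (f y) ≤ C * dist x y ^ γ) :
    HasZeroKoranyiContent (range f) := by
  classical
  intro ε hε
  have hγ0 : 0 < γ := lt_of_le_of_lt (by positivity) hγ
  have hθ : d / γ < ((2 * n + 1 : ℕ) : ℝ) := by
    push_cast
    rwa [div_lt_comm₀ hγ0 (by positivity)]
  obtain ⟨B, hB⟩ := hX.exists_finset_mul_dist_rpow_le C hγ0
  have hlim : Filter.Tendsto (fun m : ℕ ↦ B * (m : ℝ) ^ (-((2 * n + 1 : ℕ) - d / γ)))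
      Filter.atTop (𝓝 0) := by
    simpa using ((tendsto_rpow_neg_atTop (sub_pos.2 hθ)).comp
      tendsto_natCast_atTop_atTop).const_mul B
  filter_upwards [hlim.eventually_le_const hε, Filter.eventually_ge_atTop 1] with m hm hm1
  have hm0 : (0 : ℝ) < m := by exact_mod_cast hm1
  obtain ⟨s, hs, hcard⟩ := hB (m : ℝ)⁻¹ (by positivity) (Nat.cast_inv_le_one m)
  refine ⟨s.image f, ?_, ?_⟩
  · rintro _ ⟨x, rfl⟩
    obtain ⟨c, hc, hxc⟩ := hs x
    exact ⟨f c, Finset.mem_image_of_mem f hc, (hf x c).trans hxc⟩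
  · calc ((s.image f).card : ℝ) ≤ s.card := by exact_mod_cast Finset.card_image_le
      _ ≤ B * (m : ℝ) ^ (d / γ) := by
        rwa [Real.inv_rpow hm0.le, mul_inv_le_iff₀ (by positivity)] at hcard
      _ = B * (m : ℝ) ^ (-((2 * n + 1 : ℕ) - d / γ)) * (m : ℝ) ^ (2 * n + 1) := by
        rw [mul_assoc, ← Real.rpow_natCast _ (2 * n + 1), ← Real.rpow_add hm0]
        ring_nf
      _ ≤ ε * (m : ℝ) ^ (2 * n + 1) := by gcongr

end Heisenberg

/-- For `γ > 2n/(2n+1)` there is no continuous injective map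
`f : S^{2n} → ℝ^{2n+1}` which is `γ`-Hölder continuous as a map into `ℍ^n`. -/
theorem stmt2 (n : ℕ) (hn : 1 ≤ n) (γ : ℝ) (hγ : 2*(n:ℝ)/(2*(n:ℝ)+1) < γ) :
    ¬ ∃ f : sphere (0 : EuclideanSpace ℝ (Fin (2*n+1))) 1 → EuclideanSpace ℝ (Fin (2*n+1)),
      Continuous f ∧ Function.Injective f ∧
      ∃ C : ℝ, ∀ x y : sphere (0 : EuclideanSpace ℝ (Fin (2*n+1))) 1,
        dK n (f x) (f y) ≤ C * dist x y ^ γ := by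
  rintro ⟨f, hf, hinj, C, hC⟩
  have hdim : Module.finrank ℝ (EuclideanSpace ℝ (Fin (2 * n + 1))) = 2 * n + 1 :=
    finrank_euclideanSpace_fin
  have hrank : 1 < Module.rank ℝ (EuclideanSpace ℝ (Fin (2 * n + 1))) :=
    Module.lt_rank_of_lt_finrank (by omega)
  have hsmall : HasZeroKoranyiContent (range f) :=
    hasZeroKoranyiContent_range (hasFiniteMinkowskiContent_sphere hdim) (by exact_mod_cast hγ) hC
  exact not_isPreconnected_compl_range_of_injective hrank hf hinj
    (hsmall.isPreconnected_compl hn (isCompact_range hf).isClosed)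
end
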